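/- The series identity ∑_{n≥1} (−1/27)^n · ((1)_n)^2 / ((1/3)_n (2/3)_n) · (17 − 136n + 408n² − 640n³ + 560n⁴)/(n^5 (2n−1)^4) = 180 ζ(5) − (56/3) π² ζ(3) holds, where ζ is the Riemann zeta function. -/

import Mathlib

/-- The rising factorial (Pochhammer symbol) `(a)ₙ = a(a+1)⋯(a+n-1)`. -/
noncomputable def risingFactorial (a : ℝ) (n : ℕ) : ℝ :=
  ∏ i ∈ Finset.range n, (a + i)

namespace SunSeries
open Filter Topology Asymptotics

/-- `f` agrees with `a + b x + c x² + d x³` up to `O(x⁴)` as `x → 0`, `x ≠ 0`. -/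
def HasJet (f : ℂ → ℂ) (a b c d : ℂ) : Prop :=
  (fun x => f x - (a + b * x + c * x ^ 2 + d * x ^ 3)) =O[𝓝[≠] 0] fun x => x ^ 4

theorem isBigO_mul_pow_of_continuousAt {g : ℂ → ℂ} (hg : ContinuousAt g 0) (k : ℕ) :
    (fun x => g x * x ^ k) =O[𝓝[≠] 0] fun x => x ^ k := by
  have h1 : g =O[𝓝[≠] 0] (fun _ => (1 : ℂ)) :=
    ((hg.tendsto).mono_left nhdsWithin_le_nhds).isBigO_one ℂ
  simpa using h1.mul (isBigO_refl (fun x : ℂ => x ^ k) (𝓝[≠] 0))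

theorem HasJet.of_eq {f : ℂ → ℂ} {a b c d a' b' c' d' : ℂ} (h : HasJet f a b c d)
    (ha : a = a') (hb : b = b') (hc : c = c') (hd : d = d') : HasJet f a' b' c' d' := by
  subst ha hb hc hd; exact h

theorem HasJet.congr {f g : ℂ → ℂ} {a b c d : ℂ} (h : HasJet f a b c d)
    (hfg : f =ᶠ[𝓝[≠] 0] g) : HasJet g a b c d :=
  IsBigO.congr' h (hfg.mono fun x hx => by simp only [hx]) EventuallyEq.rfl

theorem hasJet_cubic (a b c d : ℂ) :
    HasJet (fun x => a + b * x + c * x ^ 2 + d * x ^ 3) a b c d := by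
  unfold HasJet
  simp only [sub_self]
  exact isBigO_zero _ _

theorem hasJet_const (a : ℂ) : HasJet (fun _ => a) a 0 0 0 := by
  simpa using hasJet_cubic a 0 0 0

theorem HasJet.add {f g : ℂ → ℂ} {a b c d a' b' c' d' : ℂ} (hf : HasJet f a b c d)
    (hg : HasJet g a' b' c' d') :
    HasJet (fun x => f x + g x) (a + a') (b + b') (c + c') (d + d') := by
  refine IsBigO.congr_left (IsBigO.add hf hg) fun x => ?_
  ring

theorem HasJet.isBigO_one {f : ℂ → ℂ} {a b c d : ℂ} (hf : HasJet f a b c d) :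
    f =O[𝓝[≠] 0] fun _ => (1 : ℂ) := by
  have h4 : (fun x : ℂ => x ^ 4) =O[𝓝[≠] 0] fun _ => (1 : ℂ) :=
    ((continuous_pow 4).continuousAt.tendsto.mono_left nhdsWithin_le_nhds).isBigO_one ℂ
  have hp : (fun x : ℂ => a + b * x + c * x ^ 2 + d * x ^ 3) =O[𝓝[≠] 0] fun _ => (1 : ℂ) :=
    ((by fun_prop : Continuous fun x : ℂ => a + b * x + c * x ^ 2 + d * x ^ 3).continuousAt.tendsto
      |>.mono_left nhdsWithin_le_nhds).isBigO_one ℂ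
  exact ((IsBigO.trans hf h4).add hp).congr_left fun x => by ring

theorem HasJet.mul {f g : ℂ → ℂ} {a b c d a' b' c' d' : ℂ} (hf : HasJet f a b c d)
    (hg : HasJet g a' b' c' d') :
    HasJet (fun x => f x * g x) (a * a') (a * b' + b * a') (a * c' + b * b' + c * a')
      (a * d' + b * c' + c * b' + d * a') := by
  have h1 := IsBigO.mul hf hg.isBigO_one
  have h2 := IsBigO.mul (hasJet_cubic a b c d).isBigO_one hg
  have h3 := isBigO_mul_pow_of_continuousAt (g := fun x => (b * d' + c * c' + d * b') +
    (c * d' + d * c') * x + d * d' * x ^ 2) (by fun_prop) 4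
  simp only [mul_one, one_mul] at h1 h2
  refine IsBigO.congr_left ((h1.add h2).add h3) fun x => ?_
  ring

theorem HasJet.const_mul {f : ℂ → ℂ} {a b c d : ℂ} (hf : HasJet f a b c d) (k : ℂ) :
    HasJet (fun x => k * f x) (k * a) (k * b) (k * c) (k * d) :=
  ((hasJet_const k).mul hf).of_eq (by ring) (by ring) (by ring) (by ring)

theorem HasJet.sub {f g : ℂ → ℂ} {a b c d a' b' c' d' : ℂ} (hf : HasJet f a b c d)
    (hg : HasJet g a' b' c' d') :
    HasJet (fun x => f x - g x) (a - a') (b - b') (c - c') (d - d') := by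
  have h := hf.add (hg.const_mul (-1))
  refine (h.congr (Eventually.of_forall fun x => ?_)).of_eq ?_ ?_ ?_ ?_ <;> ring

theorem HasJet.sum {F : ℕ → ℂ → ℂ} {a b c d : ℕ → ℂ} (n : ℕ)
    (h : ∀ i, HasJet (F i) (a i) (b i) (c i) (d i)) :
    HasJet (fun x => ∑ i ∈ Finset.range n, F i x) (∑ i ∈ Finset.range n, a i)
      (∑ i ∈ Finset.range n, b i) (∑ i ∈ Finset.range n, c i) (∑ i ∈ Finset.range n, d i) := by
  induction n with
  | zero => simpa using hasJet_const 0
  | succ n ih => simp only [Finset.sum_range_succ]; exact ih.add (h n)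

theorem hasJet_inv_linear {q : ℂ} (hq : q ≠ 0) (s : ℂ) :
    HasJet (fun x => 1 / (q + s * x)) (1 / q) (-s / q ^ 2) (s ^ 2 / q ^ 3) (-s ^ 3 / q ^ 4) := by
  have hc : ContinuousAt (fun x : ℂ => q + s * x) 0 := by fun_prop
  have h := isBigO_mul_pow_of_continuousAt (g := fun x => s ^ 4 / q ^ 4 / (q + s * x))
    (continuousAt_const.div hc (by simpa using hq)) 4
  refine IsBigO.congr' h ?_ EventuallyEq.rfl
  have hne : ∀ᶠ x in 𝓝[≠] (0 : ℂ), q + s * x ≠ 0 :=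
    nhdsWithin_le_nhds (hc.eventually_ne (by simpa using hq))
  filter_upwards [hne] with x hx
  field_simp
  ring

/-- `f` agrees with `k · exp (l₁ x + l₂ x² + l₃ x³)` up to `O(x⁴)`. -/
def HasLogJet (f : ℂ → ℂ) (k l₁ l₂ l₃ : ℂ) : Prop :=
  HasJet f k (k * l₁) (k * (l₂ + l₁ ^ 2 / 2)) (k * (l₃ + l₁ * l₂ + l₁ ^ 3 / 6))

theorem HasLogJet.mul {f g : ℂ → ℂ} {k l₁ l₂ l₃ k' l₁' l₂' l₃' : ℂ}
    (hf : HasLogJet f k l₁ l₂ l₃) (hg : HasLogJet g k' l₁' l₂' l₃') :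
    HasLogJet (fun x => f x * g x) (k * k') (l₁ + l₁') (l₂ + l₂') (l₃ + l₃') :=
  HasJet.of_eq (HasJet.mul hf hg) rfl (by ring) (by ring) (by ring)

theorem HasLogJet.of_eq {f : ℂ → ℂ} {a b c d a' b' c' d' : ℂ} (h : HasLogJet f a b c d)
    (ha : a = a') (hb : b = b') (hc : c = c') (hd : d = d') : HasLogJet f a' b' c' d' := by
  subst ha hb hc hd; exact h

theorem HasLogJet.congr {f g : ℂ → ℂ} {a b c d : ℂ} (h : HasLogJet f a b c d)
    (hfg : ∀ x, f x = g x) : HasLogJet g a b c d :=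
  HasJet.congr h (Eventually.of_forall hfg)

theorem hasLogJet_const (k : ℂ) : HasLogJet (fun _ => k) k 0 0 0 :=
  (hasJet_const k).of_eq rfl (by ring) (by ring) (by ring)

theorem hasLogJet_linear {q : ℂ} (hq : q ≠ 0) (s : ℂ) :
    HasLogJet (fun x => q + s * x) q (s / q) (-s ^ 2 / (2 * q ^ 2)) (s ^ 3 / (3 * q ^ 3)) := by
  have h := hasJet_cubic q s 0 0
  refine (h.congr (Eventually.of_forall fun x => ?_)).of_eq rfl ?_ ?_ ?_
  · ring
  all_goals field_simp
  all_goals ring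

theorem hasLogJet_inv_linear {q : ℂ} (hq : q ≠ 0) (s : ℂ) :
    HasLogJet (fun x => 1 / (q + s * x)) (1 / q) (-(s / q)) (s ^ 2 / (2 * q ^ 2))
      (-(s ^ 3 / (3 * q ^ 3))) := by
  refine (hasJet_inv_linear hq s).of_eq rfl ?_ ?_ ?_
  all_goals field_simp
  all_goals ring

theorem HasLogJet.prod {F : ℕ → ℂ → ℂ} {a b c d : ℕ → ℂ} (n : ℕ)
    (h : ∀ i, HasLogJet (F i) (a i) (b i) (c i) (d i)) :
    HasLogJet (fun x => ∏ i ∈ Finset.range n, F i x) (∏ i ∈ Finset.range n, a i)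
      (∑ i ∈ Finset.range n, b i) (∑ i ∈ Finset.range n, c i) (∑ i ∈ Finset.range n, d i) := by
  induction n with
  | zero => simpa using hasLogJet_const 1
  | succ n ih => simp only [Finset.sum_range_succ, Finset.prod_range_succ]; exact ih.mul (h n)

theorem eq_zero_of_add_mul_isBigO {a : ℂ} {g : ℂ → ℂ} (hg : Continuous g) {k : ℕ}
    (h : (fun x => a + x * g x) =O[𝓝[≠] 0] fun x => x ^ (k + 1)) :
    a = 0 ∧ g =O[𝓝[≠] 0] fun x => x ^ k := by
  have ha : a = 0 := by
    have h1 : Tendsto (fun x => a + x * g x) (𝓝[≠] 0) (𝓝 0) := by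
      refine IsBigO.trans_tendsto h ?_
      have : Tendsto (fun x : ℂ => x ^ (k + 1)) (𝓝 0) (𝓝 (0 ^ (k + 1))) :=
        (continuous_pow (k + 1)).tendsto 0
      simpa using this.mono_left nhdsWithin_le_nhds
    have h2 : Tendsto (fun x => a + x * g x) (𝓝[≠] 0) (𝓝 (a + 0 * g 0)) :=
      ((by fun_prop : Continuous fun x => a + x * g x).tendsto 0).mono_left nhdsWithin_le_nhds
    simpa using tendsto_nhds_unique h2 h1
  refine ⟨ha, ?_⟩
  subst ha
  have h3 := h.mul (isBigO_refl (fun x : ℂ => x⁻¹) (𝓝[≠] 0))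
  refine h3.congr' ?_ ?_
  all_goals
    filter_upwards [self_mem_nhdsWithin] with x hx
    have hx' : x ≠ 0 := hx
    field_simp
    ring

theorem HasJet.unique {f : ℂ → ℂ} {a b c d a' b' c' d' : ℂ} (hf : HasJet f a b c d)
    (hg : HasJet f a' b' c' d') : a = a' ∧ b = b' ∧ c = c' ∧ d = d' := by
  have h := hf.sub hg
  have h0 : (fun x => (a - a') + x * ((b - b') + x * ((c - c') + x * (d - d'))))
      =O[𝓝[≠] 0] fun x : ℂ => x ^ (3 + 1) := by
    refine (IsBigO.neg_left h).congr_left fun x => ?_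
    ring
  obtain ⟨h1, h0⟩ := eq_zero_of_add_mul_isBigO (by fun_prop) h0
  obtain ⟨h2, h0⟩ := eq_zero_of_add_mul_isBigO (k := 2) (by fun_prop) h0
  obtain ⟨h3, h0⟩ := eq_zero_of_add_mul_isBigO (k := 1) (by fun_prop) h0
  obtain ⟨h4, h0⟩ := eq_zero_of_add_mul_isBigO (a := d - d') (g := 0) (k := 0)
    continuous_const (by simpa using h0)
  exact ⟨sub_eq_zero.1 h1, sub_eq_zero.1 h2, sub_eq_zero.1 h3, sub_eq_zero.1 h4⟩

theorem dslope_bound {f : ℂ → ℂ} {r M : ℝ} (hr : 0 < r)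
    (hd : DifferentiableOn ℂ f (Metric.ball 0 r)) (hb : ∀ x ∈ Metric.ball (0 : ℂ) r, ‖f x‖ ≤ M) :
    DifferentiableOn ℂ (dslope f 0) (Metric.ball 0 r) ∧
      (∀ x ∈ Metric.ball (0 : ℂ) r, ‖dslope f 0 x‖ ≤ 2 / r * M) ∧
      ∀ x, f x = f 0 + x * dslope f 0 x := by
  refine ⟨(Complex.differentiableOn_dslope (Metric.ball_mem_nhds 0 hr)).2 hd, fun x hx => ?_,
    fun x => ?_⟩
  · refine (Complex.norm_dslope_le_div_of_mapsTo_ball (R₂ := 2 * M) hd ?_ hx).trans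
      (le_of_eq (by ring))
    intro y hy
    rw [mem_closedBall_iff_norm]
    have h1 := hb y hy
    have h2 := hb 0 (Metric.mem_ball_self hr)
    linarith [norm_sub_le (f y) (f 0)]
  · have := sub_smul_dslope f 0 x
    simp only [sub_zero, smul_eq_mul] at this
    rw [this]; ring

theorem exists_jet_bound {f : ℂ → ℂ} {r M : ℝ} (hr : 0 < r)
    (hd : DifferentiableOn ℂ f (Metric.ball 0 r)) (hb : ∀ x ∈ Metric.ball (0 : ℂ) r, ‖f x‖ ≤ M) :
    ∃ a b c d : ℂ, ‖a‖ ≤ M ∧ ‖b‖ ≤ 2 / r * M ∧ ‖c‖ ≤ 2 / r * (2 / r * M) ∧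
      ‖d‖ ≤ 2 / r * (2 / r * (2 / r * M)) ∧ ∀ x ∈ Metric.ball (0 : ℂ) r,
      ‖f x - (a + b * x + c * x ^ 2 + d * x ^ 3)‖ ≤
        2 / r * (2 / r * (2 / r * (2 / r * M))) * ‖x ^ 4‖ := by
  obtain ⟨d1, b1, e1⟩ := dslope_bound hr hd hb
  obtain ⟨d2, b2, e2⟩ := dslope_bound hr d1 b1
  obtain ⟨d3, b3, e3⟩ := dslope_bound hr d2 b2
  obtain ⟨d4, b4, e4⟩ := dslope_bound hr d3 b3
  have h0 := Metric.mem_ball_self (x := (0 : ℂ)) hr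
  refine ⟨_, _, _, _, hb 0 h0, b1 0 h0, b2 0 h0, b3 0 h0, fun x hx => ?_⟩
  have : f x - (f 0 + dslope f 0 0 * x + dslope (dslope f 0) 0 0 * x ^ 2 +
      dslope (dslope (dslope f 0) 0) 0 0 * x ^ 3) =
      dslope (dslope (dslope (dslope f 0) 0) 0) 0 x * x ^ 4 := by
    rw [e1 x, e2 x, e3 x, e4 x]; ring
  rw [this, norm_mul]
  exact mul_le_mul_of_nonneg_right (b4 x hx) (norm_nonneg _)

theorem hasJet_of_bound {f : ℂ → ℂ} {r K : ℝ} (hr : 0 < r) {a b c d : ℂ}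
    (h : ∀ x ∈ Metric.ball (0 : ℂ) r, ‖f x - (a + b * x + c * x ^ 2 + d * x ^ 3)‖ ≤ K * ‖x ^ 4‖) :
    HasJet f a b c d := by
  refine IsBigO.of_bound K ?_
  exact nhdsWithin_le_nhds (Filter.mem_of_superset (Metric.ball_mem_nhds 0 hr) h)

theorem HasJet.tsum {F : ℕ → ℂ → ℂ} {a b c d : ℕ → ℂ} {u : ℕ → ℝ} {r : ℝ} (hr : 0 < r)
    (hu : Summable u) (hd : ∀ n, DifferentiableOn ℂ (F n) (Metric.ball 0 r))
    (hb : ∀ n, ∀ x ∈ Metric.ball (0 : ℂ) r, ‖F n x‖ ≤ u n)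
    (hj : ∀ n, HasJet (F n) (a n) (b n) (c n) (d n)) :
    ∃ A B C D : ℂ, HasSum a A ∧ HasSum b B ∧ HasSum c C ∧ HasSum d D ∧
      HasJet (fun x => ∑' n, F n x) A B C D := by
  set L := 2 / r with hL
  have key : ∀ n, ‖a n‖ ≤ u n ∧ ‖b n‖ ≤ L * u n ∧ ‖c n‖ ≤ L * (L * u n) ∧
      ‖d n‖ ≤ L * (L * (L * u n)) ∧ ∀ x ∈ Metric.ball (0 : ℂ) r,
      ‖F n x - (a n + b n * x + c n * x ^ 2 + d n * x ^ 3)‖ ≤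
        L * (L * (L * (L * u n))) * ‖x ^ 4‖ := by
    intro n
    obtain ⟨a', b', c', d', h1, h2, h3, h4, h5⟩ := exists_jet_bound hr (hd n) (hb n)
    obtain ⟨e1, e2, e3, e4⟩ := (hj n).unique (hasJet_of_bound hr h5)
    rw [e1, e2, e3, e4]
    exact ⟨h1, h2, h3, h4, h5⟩
  have u1 := hu.mul_left L
  have u2 := u1.mul_left L
  have u3 := u2.mul_left L
  have u4 := u3.mul_left L
  have sa : Summable a := Summable.of_norm_bounded hu fun n => (key n).1
  have sb : Summable b := Summable.of_norm_bounded u1 fun n => (key n).2.1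
  have sc : Summable c := Summable.of_norm_bounded u2 fun n => (key n).2.2.1
  have sd : Summable d := Summable.of_norm_bounded u3 fun n => (key n).2.2.2.1
  refine ⟨_, _, _, _, sa.hasSum, sb.hasSum, sc.hasSum, sd.hasSum, ?_⟩
  refine hasJet_of_bound (K := ∑' n, L * (L * (L * (L * u n)))) hr fun x hx => ?_
  have sF : Summable fun n => F n x := Summable.of_norm_bounded hu fun n => hb n x hx
  have hs := sF.hasSum.sub (((sa.hasSum.add (sb.hasSum.mul_right x)).add
    (sc.hasSum.mul_right (x ^ 2))).add (sd.hasSum.mul_right (x ^ 3)))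
  rw [← hs.tsum_eq]
  exact tsum_of_norm_bounded (u4.hasSum.mul_right _) fun n => (key n).2.2.2.2 x hx

/-- Ratio of consecutive factors in the hypergeometric product `dProd`. -/
noncomputable def dRatio (t y : ℂ) (i : ℕ) : ℂ :=
  -((2 * i + 1) * (2 * i + 2) / (3 * (3 * i + 2) * (3 * i + 1))) *
    ((1 + 2 * t + i) / (2 + 2 * t + 2 * i)) * ((1 - 2 * t + 2 * i) / (1 + 2 * t + 2 * i)) *
    ((y - t - 2 * i - 1) / (1 + t + y + 2 * i)) * ((y - t - 2 * i - 2) / (2 + t + y + 2 * i)) *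
    ((y - t + i + 1) / (1 + 2 * y + 2 * i))

noncomputable def dProd (t y : ℂ) (n : ℕ) : ℂ := ∏ i ∈ Finset.range n, dRatio t y i

/-- The kernel of the first WZ family. -/
noncomputable def dKer (t y : ℂ) (n : ℕ) : ℂ :=
  (y - t) / (1 + t + y + 2 * n) * (1 / ((1 + 2 * t + 2 * n) * (3 * n + 1))) * dProd t y n

noncomputable def dA (t y : ℂ) (n : ℕ) : ℂ :=
  (1 + 2 * t + n) / (2 + 2 * t + 2 * n) * ((1 + 2 * n) / (3 * n + 2)) *
    ((1 + t + 2 * n - y) / (2 + t + y + 2 * n))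

noncomputable def dB (t y : ℂ) (n : ℕ) : ℂ :=
  4 + 2 * t + 4 * n +
    2 / 3 * (5 + 2 * t + 4 * n) * ((2 + t + 2 * n - y) / (1 + 2 * y + 2 * n))

noncomputable def dOm (t y : ℂ) (n : ℕ) : ℂ := 2 * (1 + t + 2 * n) + dA t y n * dB t y n

noncomputable def dA' (t y : ℂ) (n : ℕ) : ℂ :=
  dA t y n * (1 / (2 * n + 1) + 1 / (2 + 2 * t + 2 * n))

noncomputable def dB' (t y : ℂ) (n : ℕ) : ℂ :=
  (5 + 2 * t + 4 * n) / (3 * (n + 1)) * ((2 + t + 2 * n - y) / (1 + 2 * y + 2 * n)) *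
    (1 + 4 * (n + 1) / (1 + 2 * y + 2 * n))

noncomputable def dOm' (t y : ℂ) (n : ℕ) : ℂ := dA' t y n * dB t y n + dA t y n * dB' t y n

/-- Logarithmic derivative of the kernel in the auxiliary parameter. -/
noncomputable def dLog (t y : ℂ) (n : ℕ) : ℂ :=
  ∑ i ∈ Finset.range n, (1 / (2 * i + 1) - 1 / (2 * (i + 1)) +
    1 / (2 + 2 * t + 2 * i) + 1 / (1 + 2 * t + 2 * i) + 2 / (1 + 2 * y + 2 * i)) +
  1 / (1 + 2 * t + 2 * n)

/-- The WZ certificate (evaluated at `y + 1`). -/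
noncomputable def dCert (t y : ℂ) (n : ℕ) : ℂ :=
  (3 * n + 1) * (1 + 2 * t + 4 * n) * (1 + 2 * t + 2 * n) * (2 + t + y + 2 * n) /
    ((1 - t + y + n) * (1 + 2 * y) * (1 + t + y))

noncomputable def dCert' (t y : ℂ) (n : ℕ) : ℂ :=
  dCert t y n * (-(1 / (1 + 2 * t + 2 * n)) + 1 / (1 + t + y))

noncomputable def dGap (t y : ℂ) : ℂ := 2 / (1 + 2 * y) - 1 / (1 + t + y)

noncomputable def dF (t y : ℂ) (n : ℕ) : ℂ := dKer t y n * dOm t y n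

noncomputable def dF' (t y : ℂ) (n : ℕ) : ℂ :=
  dKer t y n * (dOm t y n * dLog t y n + dOm' t y n)

noncomputable def dG (t y : ℂ) (n : ℕ) : ℂ := dKer t (y + 1) n * dCert t y n

noncomputable def dG' (t y : ℂ) (n : ℕ) : ℂ :=
  dKer t (y + 1) n * (dCert t y n * dLog t (y + 1) n + dCert' t y n)

/-- A pair of complex parameters, `t` near `0` and `y` near a natural number. -/
structure Near (t y : ℂ) : Prop where
  ht : ‖t‖ ≤ 1 / 100
  hy : ∃ j : ℕ, ‖y - j‖ ≤ 1 / 100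

theorem Near.re_t {t y : ℂ} (h : Near t y) : -(1 / 100) ≤ t.re ∧ t.re ≤ 1 / 100 := by
  have := (Complex.abs_re_le_norm t).trans h.ht
  exact abs_le.1 this

theorem Near.re_y {t y : ℂ} (h : Near t y) : -(1 / 100) ≤ y.re := by
  obtain ⟨j, hj⟩ := h.hy
  have := (Complex.abs_re_le_norm _).trans hj
  have h1 := (abs_le.1 this).1
  simp only [Complex.sub_re, Complex.natCast_re] at h1
  have : (0 : ℝ) ≤ j := j.cast_nonneg
  linarith

theorem Near.succ {t y : ℂ} (h : Near t y) : Near t (y + 1) := by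
  obtain ⟨j, hj⟩ := h.hy
  exact ⟨h.ht, j + 1, by push_cast; simpa using hj⟩

theorem ne_zero_of_re_pos {z : ℂ} (h : 0 < z.re) : z ≠ 0 := by
  rintro rfl
  simp at h

/-- Proves `z ≠ 0` for an affine expression `z` in the parameters with positive real part. -/
theorem Near.ne_zero {t y : ℂ} (h : Near t y) (n : ℕ) {z : ℂ}
    (hz : -(1 / 100) ≤ t.re → t.re ≤ 1 / 100 → -(1 / 100) ≤ y.re → (0 : ℝ) ≤ n → 0 < z.re) :
    z ≠ 0 :=
  ne_zero_of_re_pos (hz h.re_t.1 h.re_t.2 h.re_y n.cast_nonneg)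

theorem dKer_succ {t y : ℂ} (h : Near t y) (n : ℕ) :
    dKer t y (n + 1) = dKer t y n * (-((2 * n + 1) * (2 * n + 2) * (1 + 2 * t + n) *
      (1 - 2 * t + 2 * n) * (y - t - 2 * n - 1) * (y - t - 2 * n - 2) * (y - t + n + 1)) /
      (3 * (3 * n + 2) * (3 * n + 4) * (2 + 2 * t + 2 * n) * (3 + 2 * t + 2 * n) *
        (1 + 2 * y + 2 * n) * (2 + t + y + 2 * n) * (3 + t + y + 2 * n))) := by
  have a1_ne : (1 + t + y + 2 * n : ℂ) ≠ 0 := h.ne_zero n (by intros; simp; linarith)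
  have a2_ne : (2 + t + y + 2 * n : ℂ) ≠ 0 := h.ne_zero n (by intros; simp; linarith)
  have a3_ne : (3 + t + y + 2 * n : ℂ) ≠ 0 := h.ne_zero n (by intros; simp; linarith)
  have b1_ne : (1 + 2 * t + 2 * n : ℂ) ≠ 0 := h.ne_zero n (by intros; simp; linarith)
  have b2_ne : (2 + 2 * t + 2 * n : ℂ) ≠ 0 := h.ne_zero n (by intros; simp; linarith)
  have b3_ne : (3 + 2 * t + 2 * n : ℂ) ≠ 0 := h.ne_zero n (by intros; simp; linarith)
  have h1_ne : (1 + 2 * y + 2 * n : ℂ) ≠ 0 := h.ne_zero n (by intros; simp; linarith)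
  have c1_ne : (3 * n + 1 : ℂ) ≠ 0 := h.ne_zero n (by intros; simp; linarith)
  have c2_ne : (3 * n + 2 : ℂ) ≠ 0 := h.ne_zero n (by intros; simp; linarith)
  have c4_ne : (3 * n + 4 : ℂ) ≠ 0 := h.ne_zero n (by intros; simp; linarith)
  have f1 : 1 + t + y + 2 * ((n + 1 : ℕ) : ℂ) = 3 + t + y + 2 * n := by push_cast; ring
  have f2 : 1 + 2 * t + 2 * ((n + 1 : ℕ) : ℂ) = 3 + 2 * t + 2 * n := by push_cast; ring
  have f3 : 3 * ((n + 1 : ℕ) : ℂ) + 1 = 3 * n + 4 := by push_cast; ring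
  simp only [dKer, dProd, Finset.prod_range_succ, f1, f2, f3]
  generalize ∏ i ∈ Finset.range n, dRatio t y i = Q
  clear f1 f2 f3
  unfold dRatio
  generalize (n : ℂ) = m at *
  generalize a1_def : (1 + t + y + 2 * m : ℂ) = a1 at *
  generalize a2_def : (2 + t + y + 2 * m : ℂ) = a2 at *
  generalize a3_def : (3 + t + y + 2 * m : ℂ) = a3 at *
  generalize b1_def : (1 + 2 * t + 2 * m : ℂ) = b1 at *
  generalize b2_def : (2 + 2 * t + 2 * m : ℂ) = b2 at *
  generalize b3_def : (3 + 2 * t + 2 * m : ℂ) = b3 at *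
  generalize h1_def : (1 + 2 * y + 2 * m : ℂ) = h1 at *
  generalize c1_def : (3 * m + 1 : ℂ) = c1 at *
  generalize c2_def : (3 * m + 2 : ℂ) = c2 at *
  generalize c4_def : (3 * m + 4 : ℂ) = c4 at *
  field_simp

/-- The ratio `dKer t y n / dKer t (y + 1) n`. -/
noncomputable def dShift (t y : ℂ) (n : ℕ) : ℂ :=
  (y - t - 2 * n) * (2 + t + y + 2 * n) * (1 + 2 * y + 2 * n) /
    ((1 - t + y + n) * (1 + 2 * y) * (1 + t + y))

theorem dKer_shift {t y : ℂ} (h : Near t y) (n : ℕ) :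
    dKer t y n = dKer t (y + 1) n * dShift t y n := by
  unfold dShift
  induction n with
  | zero =>
    let n : ℕ := 0
    have yt_ne : (1 + t + y : ℂ) ≠ 0 := h.ne_zero n (by intros; simp; linarith)
    have yt2_ne : (2 + t + y : ℂ) ≠ 0 := h.ne_zero n (by intros; simp; linarith)
    have e1_ne : (1 + 2 * t : ℂ) ≠ 0 := h.ne_zero n (by intros; simp; linarith)
    have q0_ne : (1 - t + y : ℂ) ≠ 0 := h.ne_zero n (by intros; simp; linarith)
    have y1_ne : (1 + 2 * y : ℂ) ≠ 0 := h.ne_zero n (by intros; simp; linarith)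
    simp only [dKer, dProd, Finset.range_zero, Finset.prod_empty, Nat.cast_zero, mul_zero,
      add_zero, sub_zero, mul_one, zero_add]
    rw [show 1 + t + (y + 1) = 2 + t + y by ring]
    clear n
    generalize yt_def : (1 + t + y : ℂ) = yt at *
    generalize yt2_def : (2 + t + y : ℂ) = yt2 at *
    generalize e1_def : (1 + 2 * t : ℂ) = e1 at *
    generalize q0_def : (1 - t + y : ℂ) = q0 at *
    generalize y1_def : (1 + 2 * y : ℂ) = y1 at *
    field_simp
    subst yt_def yt2_def e1_def q0_def y1_def
    ring
  | succ n ih =>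
    have a2_ne : (2 + t + y + 2 * n : ℂ) ≠ 0 := h.ne_zero n (by intros; simp; linarith)
    have a3_ne : (3 + t + y + 2 * n : ℂ) ≠ 0 := h.ne_zero n (by intros; simp; linarith)
    have a4_ne : (4 + t + y + 2 * n : ℂ) ≠ 0 := h.ne_zero n (by intros; simp; linarith)
    have b2_ne : (2 + 2 * t + 2 * n : ℂ) ≠ 0 := h.ne_zero n (by intros; simp; linarith)
    have b3_ne : (3 + 2 * t + 2 * n : ℂ) ≠ 0 := h.ne_zero n (by intros; simp; linarith)
    have h1_ne : (1 + 2 * y + 2 * n : ℂ) ≠ 0 := h.ne_zero n (by intros; simp; linarith)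
    have h3_ne : (3 + 2 * y + 2 * n : ℂ) ≠ 0 := h.ne_zero n (by intros; simp; linarith)
    have c2_ne : (3 * n + 2 : ℂ) ≠ 0 := h.ne_zero n (by intros; simp; linarith)
    have c4_ne : (3 * n + 4 : ℂ) ≠ 0 := h.ne_zero n (by intros; simp; linarith)
    have q1_ne : (1 - t + y + n : ℂ) ≠ 0 := h.ne_zero n (by intros; simp; linarith)
    have q2_ne : (2 - t + y + n : ℂ) ≠ 0 := h.ne_zero n (by intros; simp; linarith)
    have y1_ne : (1 + 2 * y : ℂ) ≠ 0 := h.ne_zero n (by intros; simp; linarith)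
    have yt_ne : (1 + t + y : ℂ) ≠ 0 := h.ne_zero n (by intros; simp; linarith)
    rw [dKer_succ h, dKer_succ h.succ, ih,
      show 1 + 2 * (y + 1) + 2 * (n : ℂ) = 3 + 2 * y + 2 * n by ring,
      show 2 + t + (y + 1) + 2 * (n : ℂ) = 3 + t + y + 2 * n by ring,
      show 3 + t + (y + 1) + 2 * (n : ℂ) = 4 + t + y + 2 * n by ring,
      show 1 - t + y + ((n + 1 : ℕ) : ℂ) = 2 - t + y + n by push_cast; ring,
      show 2 + t + y + 2 * ((n + 1 : ℕ) : ℂ) = 4 + t + y + 2 * n by push_cast; ring,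
      show 1 + 2 * y + 2 * ((n + 1 : ℕ) : ℂ) = 3 + 2 * y + 2 * n by push_cast; ring,
      show y - t - 2 * ((n + 1 : ℕ) : ℂ) = y - t - 2 * n - 2 by push_cast; ring,
      show y - t + n + 1 = 1 - t + y + (n : ℂ) by ring,
      show y + 1 - t + n + 1 = 2 - t + y + (n : ℂ) by ring,
      show y + 1 - t - 2 * n - 1 = y - t - 2 * (n : ℂ) by ring,
      show y + 1 - t - 2 * n - 2 = y - t - 2 * (n : ℂ) - 1 by ring]
    generalize dKer t (y + 1) n = Z
    clear ih
    generalize (n : ℂ) = m at *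
    generalize 2 + t + y + 2 * m = a2 at *
    generalize 3 + t + y + 2 * m = a3 at *
    generalize 4 + t + y + 2 * m = a4 at *
    generalize 2 + 2 * t + 2 * m = b2 at *
    generalize 3 + 2 * t + 2 * m = b3 at *
    generalize 1 + 2 * y + 2 * m = h1 at *
    generalize 3 + 2 * y + 2 * m = h3 at *
    generalize 3 * m + 2 = c2 at *
    generalize 3 * m + 4 = c4 at *
    generalize 1 - t + y + m = q1 at *
    generalize 2 - t + y + m = q2 at *
    generalize 1 + 2 * y = y1 at *
    generalize 1 + t + y = yt at *
    generalize y - t - 2 * m = d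
    field_simp

theorem dLog_shift (t y : ℂ) (n : ℕ) :
    dLog t y n = dLog t (y + 1) n - 2 / (1 + 2 * y + 2 * n) + 2 / (1 + 2 * y) := by
  induction n with
  | zero => simp [dLog]
  | succ n ih =>
    have e : 1 + 2 * (y + 1) + 2 * (n : ℂ) = 1 + 2 * y + 2 * ((n + 1 : ℕ) : ℂ) := by
      push_cast; ring
    simp only [dLog, Finset.sum_range_succ] at ih ⊢
    rw [e]
    linear_combination ih

theorem dLog_succ (t y : ℂ) (n : ℕ) :
    dLog t y (n + 1) = dLog t y n + 1 / (2 * n + 1) - 1 / (2 * (n + 1)) +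
      1 / (2 + 2 * t + 2 * n) + 1 / (3 + 2 * t + 2 * n) + 2 / (1 + 2 * y + 2 * n) := by
  have e : 1 + 2 * t + 2 * ((n + 1 : ℕ) : ℂ) = 3 + 2 * t + 2 * n := by push_cast; ring
  simp only [dLog, Finset.sum_range_succ, e]
  ring

/-- The ratio `dG t y (n + 1) / dKer t (y + 1) n`. -/
noncomputable def dStep (t y : ℂ) (n : ℕ) : ℂ :=
  -(2 * (2 * n + 1) * (n + 1) * (1 + 2 * t + n) * (1 - 2 * t + 2 * n) * (y - t - 2 * n) *
    (y - t - 2 * n - 1) * (5 + 2 * t + 4 * n)) /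
    (3 * (3 * n + 2) * (2 + 2 * t + 2 * n) * (3 + 2 * y + 2 * n) * (3 + t + y + 2 * n) *
      (1 + 2 * y) * (1 + t + y))

set_option maxHeartbeats 1000000 in
theorem dKer_mul_dCert_succ {t y : ℂ} (h : Near t y) (n : ℕ) :
    dKer t (y + 1) (n + 1) * dCert t y (n + 1) = dKer t (y + 1) n * dStep t y n := by
  have a4_ne : (4 + t + y + 2 * n : ℂ) ≠ 0 := h.ne_zero n (by intros; simp; linarith)
  have b3_ne : (3 + 2 * t + 2 * n : ℂ) ≠ 0 := h.ne_zero n (by intros; simp; linarith)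
  have c4_ne : (3 * n + 4 : ℂ) ≠ 0 := h.ne_zero n (by intros; simp; linarith)
  have q2_ne : (2 - t + y + n : ℂ) ≠ 0 := h.ne_zero n (by intros; simp; linarith)
  have a3_ne : (3 + t + y + 2 * n : ℂ) ≠ 0 := h.ne_zero n (by intros; simp; linarith)
  have b2_ne : (2 + 2 * t + 2 * n : ℂ) ≠ 0 := h.ne_zero n (by intros; simp; linarith)
  have h3_ne : (3 + 2 * y + 2 * n : ℂ) ≠ 0 := h.ne_zero n (by intros; simp; linarith)
  have c2_ne : (3 * n + 2 : ℂ) ≠ 0 := h.ne_zero n (by intros; simp; linarith)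
  have y1_ne : (1 + 2 * y : ℂ) ≠ 0 := h.ne_zero n (by intros; simp; linarith)
  have yt_ne : (1 + t + y : ℂ) ≠ 0 := h.ne_zero n (by intros; simp; linarith)
  rw [dKer_succ h.succ, mul_assoc]
  congr 1
  rw [dCert, dStep]
  push_cast
  rw [show 1 + 2 * (y + 1) + 2 * (n : ℂ) = 3 + 2 * y + 2 * n by ring,
    show 2 + t + (y + 1) + 2 * (n : ℂ) = 3 + t + y + 2 * n by ring,
    show 3 + t + (y + 1) + 2 * (n : ℂ) = 4 + t + y + 2 * n by ring,
    show y + 1 - t + n + 1 = 2 - t + y + (n : ℂ) by ring,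
    show 1 - t + y + ((n : ℂ) + 1) = 2 - t + y + n by ring,
    show 1 + 2 * t + 2 * ((n : ℂ) + 1) = 3 + 2 * t + 2 * n by ring,
    show 1 + 2 * t + 4 * ((n : ℂ) + 1) = 5 + 2 * t + 4 * n by ring,
    show 2 + t + y + 2 * ((n : ℂ) + 1) = 4 + t + y + 2 * n by ring,
    show 3 * ((n : ℂ) + 1) + 1 = 3 * n + 4 by ring,
    show y + 1 - t - 2 * n - 1 = y - t - 2 * (n : ℂ) by ring,
    show y + 1 - t - 2 * n - 2 = y - t - 2 * (n : ℂ) - 1 by ring,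
    show 2 * (n : ℂ) + 2 = 2 * (n + 1) by ring]
  generalize (n : ℂ) = m at *
  generalize 4 + t + y + 2 * m = a4 at *
  generalize 3 + 2 * t + 2 * m = b3 at *
  generalize 3 * m + 4 = c4 at *
  generalize 2 - t + y + m = q2 at *
  generalize 3 + 2 * y + 2 * m = h3 at *
  generalize 3 + t + y + 2 * m = a3 at *
  generalize 2 + 2 * t + 2 * m = b2 at *
  generalize 1 + 2 * y = y1 at *
  generalize 1 + t + y = yt at *
  generalize 3 * m + 2 = c2 at *
  generalize 5 + 2 * t + 4 * m = e
  generalize y - t - 2 * m = d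
  field_simp

theorem dOm_wz {t y : ℂ} (h : Near t y) (n : ℕ) :
    dShift t y n * dOm t y n - dOm t (y + 1) n = dStep t y n - dCert t y n := by
  have a2_ne : (2 + t + y + 2 * n : ℂ) ≠ 0 := h.ne_zero n (by intros; simp; linarith)
  have a3_ne : (3 + t + y + 2 * n : ℂ) ≠ 0 := h.ne_zero n (by intros; simp; linarith)
  have b2_ne : (2 + 2 * t + 2 * n : ℂ) ≠ 0 := h.ne_zero n (by intros; simp; linarith)
  have h1_ne : (1 + 2 * y + 2 * n : ℂ) ≠ 0 := h.ne_zero n (by intros; simp; linarith)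
  have h3_ne : (3 + 2 * y + 2 * n : ℂ) ≠ 0 := h.ne_zero n (by intros; simp; linarith)
  have c2_ne : (3 * n + 2 : ℂ) ≠ 0 := h.ne_zero n (by intros; simp; linarith)
  have q1_ne : (1 - t + y + n : ℂ) ≠ 0 := h.ne_zero n (by intros; simp; linarith)
  have y1_ne : (1 + 2 * y : ℂ) ≠ 0 := h.ne_zero n (by intros; simp; linarith)
  have yt_ne : (1 + t + y : ℂ) ≠ 0 := h.ne_zero n (by intros; simp; linarith)
  simp only [dShift, dStep, dOm, dA, dB, dCert]
  rw [show 1 + 2 * (y + 1) + 2 * (n : ℂ) = 3 + 2 * y + 2 * n by ring,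
    show 2 + t + (y + 1) + 2 * (n : ℂ) = 3 + t + y + 2 * n by ring]
  generalize (n : ℂ) = m at *
  generalize a2_def : (2 + t + y + 2 * m : ℂ) = a2 at *
  generalize a3_def : (3 + t + y + 2 * m : ℂ) = a3 at *
  generalize b2_def : (2 + 2 * t + 2 * m : ℂ) = b2 at *
  generalize h1_def : (1 + 2 * y + 2 * m : ℂ) = h1 at *
  generalize h3_def : (3 + 2 * y + 2 * m : ℂ) = h3 at *
  generalize c2_def : (3 * m + 2 : ℂ) = c2 at *
  generalize q1_def : (1 - t + y + m : ℂ) = q1 at *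
  generalize y1_def : (1 + 2 * y : ℂ) = y1 at *
  generalize yt_def : (1 + t + y : ℂ) = yt at *
  field_simp
  subst a2_def a3_def b2_def h1_def h3_def c2_def q1_def y1_def yt_def
  ring

theorem one_sub_dShift {t y : ℂ} (h : Near t y) (n : ℕ) :
    (2 * (1 + t + 2 * n) * (1 - dShift t y n) - dCert t y n) *
        (1 / (2 * n + 1) + 1 / (2 + 2 * t + 2 * n)) =
      (y - t - 2 * n) * (3 + 2 * t + 4 * n) ^ 2 * (1 + 2 * t + n) /
        ((2 + 2 * t + 2 * n) * (1 - t + y + n) * (1 + 2 * y) * (1 + t + y)) := by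
  have b2_ne : (2 + 2 * t + 2 * n : ℂ) ≠ 0 := h.ne_zero n (by intros; simp; linarith)
  have q1_ne : (1 - t + y + n : ℂ) ≠ 0 := h.ne_zero n (by intros; simp; linarith)
  have y1_ne : (1 + 2 * y : ℂ) ≠ 0 := h.ne_zero n (by intros; simp; linarith)
  have yt_ne : (1 + t + y : ℂ) ≠ 0 := h.ne_zero n (by intros; simp; linarith)
  have o1_ne : (2 * n + 1 : ℂ) ≠ 0 := h.ne_zero n (by intros; simp; linarith)
  simp only [dShift, dCert]
  generalize (n : ℂ) = m at *
  generalize b2_def : (2 + 2 * t + 2 * m : ℂ) = b2 at *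
  generalize q1_def : (1 - t + y + m : ℂ) = q1 at *
  generalize y1_def : (1 + 2 * y : ℂ) = y1 at *
  generalize yt_def : (1 + t + y : ℂ) = yt at *
  generalize o1_def : (2 * m + 1 : ℂ) = o1 at *
  field_simp
  subst b2_def q1_def y1_def yt_def o1_def
  ring

theorem dB'_sub {t y : ℂ} (h : Near t y) (n : ℕ) :
    dB' t y n - 2 * dB t y n / (1 + 2 * y + 2 * n) =
      ((5 + 2 * t + 4 * n) * (2 + t + 2 * n - y) / (3 * (n + 1)) - 4 * (2 + t + 2 * n)) /
        (1 + 2 * y + 2 * n) := by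
  have h1_ne : (1 + 2 * y + 2 * n : ℂ) ≠ 0 := h.ne_zero n (by intros; simp; linarith)
  have m1_ne : (n + 1 : ℂ) ≠ 0 := h.ne_zero n (by intros; simp; linarith)
  simp only [dB, dB']
  generalize (n : ℂ) = m at *
  generalize h1_def : (1 + 2 * y + 2 * m : ℂ) = h1 at *
  generalize m1_def : (m + 1 : ℂ) = m1 at *
  field_simp
  subst h1_def m1_def
  ring

theorem dOm_wz_remainder {t y : ℂ} (h : Near t y) (n : ℕ) :
    dShift t y n * (dA t y n * (dB' t y n - 2 * dB t y n / (1 + 2 * y + 2 * n))) -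
      dA t (y + 1) n * dB' t (y + 1) n + dOm t (y + 1) n / (1 + t + y) +
      dStep t y n * (1 / (2 * (n + 1)) - 2 / (3 + 2 * y + 2 * n)) -
      dCert t y n / (1 + 2 * t + 2 * n) +
      (2 * (1 + t + 2 * n) * (1 - dShift t y n) - dCert t y n) *
        (1 / (2 * n + 1) + 1 / (2 + 2 * t + 2 * n)) =
      4 * (1 + t + 2 * n) * dShift t y n / (1 + 2 * y + 2 * n) := by
  rw [one_sub_dShift h, dB'_sub h]
  have a2_ne : (2 + t + y + 2 * n : ℂ) ≠ 0 := h.ne_zero n (by intros; simp; linarith)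
  have a3_ne : (3 + t + y + 2 * n : ℂ) ≠ 0 := h.ne_zero n (by intros; simp; linarith)
  have b2_ne : (2 + 2 * t + 2 * n : ℂ) ≠ 0 := h.ne_zero n (by intros; simp; linarith)
  have h1_ne : (1 + 2 * y + 2 * n : ℂ) ≠ 0 := h.ne_zero n (by intros; simp; linarith)
  have h3_ne : (3 + 2 * y + 2 * n : ℂ) ≠ 0 := h.ne_zero n (by intros; simp; linarith)
  have c2_ne : (3 * n + 2 : ℂ) ≠ 0 := h.ne_zero n (by intros; simp; linarith)
  have q1_ne : (1 - t + y + n : ℂ) ≠ 0 := h.ne_zero n (by intros; simp; linarith)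
  have y1_ne : (1 + 2 * y : ℂ) ≠ 0 := h.ne_zero n (by intros; simp; linarith)
  have yt_ne : (1 + t + y : ℂ) ≠ 0 := h.ne_zero n (by intros; simp; linarith)
  have m1_ne : (n + 1 : ℂ) ≠ 0 := h.ne_zero n (by intros; simp; linarith)
  have b1_ne : (1 + 2 * t + 2 * n : ℂ) ≠ 0 := h.ne_zero n (by intros; simp; linarith)
  simp only [dShift, dStep, dOm, dA, dB, dB', dCert]
  rw [show 1 + 2 * (y + 1) + 2 * (n : ℂ) = 3 + 2 * y + 2 * n by ring,
    show 2 + t + (y + 1) + 2 * (n : ℂ) = 3 + t + y + 2 * n by ring]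
  generalize (n : ℂ) = m at *
  generalize a2_def : (2 + t + y + 2 * m : ℂ) = a2 at *
  generalize a3_def : (3 + t + y + 2 * m : ℂ) = a3 at *
  generalize b2_def : (2 + 2 * t + 2 * m : ℂ) = b2 at *
  generalize h1_def : (1 + 2 * y + 2 * m : ℂ) = h1 at *
  generalize h3_def : (3 + 2 * y + 2 * m : ℂ) = h3 at *
  generalize c2_def : (3 * m + 2 : ℂ) = c2 at *
  generalize q1_def : (1 - t + y + m : ℂ) = q1 at *
  generalize y1_def : (1 + 2 * y : ℂ) = y1 at *
  generalize yt_def : (1 + t + y : ℂ) = yt at *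
  generalize m1_def : (m + 1 : ℂ) = m1 at *
  generalize b1_def : (1 + 2 * t + 2 * m : ℂ) = b1 at *
  field_simp
  subst a2_def a3_def b2_def h1_def h3_def c2_def q1_def y1_def yt_def m1_def b1_def
  ring

theorem dOm'_wz {t y : ℂ} (h : Near t y) (n : ℕ) :
    dShift t y n * (dOm t y n * (1 / (1 + t + y) - 2 / (1 + 2 * y + 2 * n)) + dOm' t y n) -
      dOm' t (y + 1) n =
      dStep t y n * (1 / (2 * n + 1) - 1 / (2 * (n + 1)) + 1 / (2 + 2 * t + 2 * n) +
        2 / (3 + 2 * y + 2 * n) + 1 / (1 + t + y)) - dCert' t y n := by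
  have key := dOm_wz h n
  have rem := dOm_wz_remainder h n
  simp only [dOm, dOm', dA', dCert'] at key rem ⊢
  linear_combination rem +
    key * (1 / (2 * n + 1) + 1 / (2 + 2 * t + 2 * n) + 1 / (1 + t + y))

theorem dF_wz {t y : ℂ} (h : Near t y) (n : ℕ) :
    dF t y n - dF t (y + 1) n = dG t y (n + 1) - dG t y n := by
  rw [dF, dF, dG, dG, dKer_mul_dCert_succ h, dKer_shift h]
  linear_combination dKer t (y + 1) n * dOm_wz h n

theorem dF'_wz {t y : ℂ} (h : Near t y) (n : ℕ) :
    dF' t y n - dGap t y * dF t y n - dF' t (y + 1) n = dG' t y (n + 1) - dG' t y n := by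
  have e₁ : 1 + 2 * (y + 1) + 2 * (n : ℂ) = 3 + 2 * y + 2 * n := by ring
  have e₂ : 1 + 2 * t + 2 * ((n + 1 : ℕ) : ℂ) = 3 + 2 * t + 2 * n := by push_cast; ring
  simp only [dF', dF, dG', dGap, dLog_succ, dLog_shift t y n, dCert', e₁, e₂]
  rw [dKer_shift h]
  have hs := dOm'_wz h n
  simp only [dCert'] at hs
  linear_combination dKer t (y + 1) n * (hs + dLog t (y + 1) n * dOm_wz h n) -
    dKer_mul_dCert_succ h n * (dLog t (y + 1) n + 1 / (2 * n + 1) - 1 / (2 * (n + 1)) +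
      1 / (2 + 2 * t + 2 * n) + 2 / (3 + 2 * y + 2 * n) + 1 / (1 + t + y))

/-- Polynomial growth in `n`, uniformly in the parameters. -/
def PolyBdd (f : ℂ → ℂ → ℕ → ℂ) : Prop :=
  ∃ C : ℝ, ∃ k : ℕ, 0 ≤ C ∧ ∀ t y n, Near t y → ‖f t y n‖ ≤ C * (n + 1) ^ k

/-- Geometric decay in `n` up to a polynomial factor, uniformly in the parameters. -/
def GeomBdd (f : ℂ → ℂ → ℕ → ℂ) : Prop :=
  ∃ C : ℝ, ∃ k : ℕ, 0 ≤ C ∧ ∀ t y n, Near t y → ‖f t y n‖ ≤ C * (n + 1) ^ k * (1 / 2) ^ n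

theorem polyBdd_const (c : ℂ) : PolyBdd fun _ _ _ => c :=
  ⟨‖c‖, 0, norm_nonneg _, fun _ _ _ _ => by simp⟩

theorem polyBdd_nat : PolyBdd fun _ _ n => (n : ℂ) :=
  ⟨1, 1, zero_le_one, fun _ _ n _ => by simp⟩

theorem polyBdd_param : PolyBdd fun t _ _ => t :=
  ⟨1, 0, zero_le_one, fun t y n h => by have := h.ht; simp; linarith⟩

theorem PolyBdd.mul {f g : ℂ → ℂ → ℕ → ℂ} (hf : PolyBdd f) (hg : PolyBdd g) :
    PolyBdd fun t y n => f t y n * g t y n := by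
  obtain ⟨C, k, hC, hf⟩ := hf
  obtain ⟨D, l, hD, hg⟩ := hg
  refine ⟨C * D, k + l, mul_nonneg hC hD, fun t y n h => ?_⟩
  rw [norm_mul]
  calc _ ≤ (C * (n + 1 : ℝ) ^ k) * (D * (n + 1 : ℝ) ^ l) :=
        mul_le_mul (hf t y n h) (hg t y n h) (norm_nonneg _) (by positivity)
    _ = _ := by ring

theorem PolyBdd.add {f g : ℂ → ℂ → ℕ → ℂ} (hf : PolyBdd f) (hg : PolyBdd g) :
    PolyBdd fun t y n => f t y n + g t y n := by
  obtain ⟨C, k, hC, hf⟩ := hf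
  obtain ⟨D, l, hD, hg⟩ := hg
  refine ⟨C + D, k + l, add_nonneg hC hD, fun t y n h => ?_⟩
  have h1 : (1 : ℝ) ≤ (n + 1 : ℝ) := by linarith [(n.cast_nonneg : (0 : ℝ) ≤ n)]
  have h2 : (n + 1 : ℝ) ^ k ≤ (n + 1 : ℝ) ^ (k + l) := pow_le_pow_right₀ h1 (by omega)
  have h3 : (n + 1 : ℝ) ^ l ≤ (n + 1 : ℝ) ^ (k + l) := pow_le_pow_right₀ h1 (by omega)
  calc _ ≤ ‖f t y n‖ + ‖g t y n‖ := norm_add_le _ _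
    _ ≤ C * (n + 1 : ℝ) ^ k + D * (n + 1 : ℝ) ^ l := add_le_add (hf t y n h) (hg t y n h)
    _ ≤ C * (n + 1 : ℝ) ^ (k + l) + D * (n + 1 : ℝ) ^ (k + l) := by gcongr
    _ = _ := by ring

theorem PolyBdd.neg {f : ℂ → ℂ → ℕ → ℂ} (hf : PolyBdd f) : PolyBdd fun t y n => -f t y n := by
  obtain ⟨C, k, hC, hf⟩ := hf
  exact ⟨C, k, hC, fun t y n h => by rw [norm_neg]; exact hf t y n h⟩

theorem PolyBdd.sub {f g : ℂ → ℂ → ℕ → ℂ} (hf : PolyBdd f) (hg : PolyBdd g) :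
    PolyBdd fun t y n => f t y n - g t y n := by
  simp only [sub_eq_add_neg]
  exact hf.add hg.neg

theorem PolyBdd.congr {f g : ℂ → ℂ → ℕ → ℂ} (hf : PolyBdd f)
    (h : ∀ t y n, Near t y → f t y n = g t y n) : PolyBdd g := by
  obtain ⟨C, k, hC, hf⟩ := hf
  exact ⟨C, k, hC, fun t y n hn => by rw [← h t y n hn]; exact hf t y n hn⟩

theorem PolyBdd.sum {f : ℂ → ℂ → ℕ → ℂ} (hf : PolyBdd f) :
    PolyBdd fun t y n => ∑ i ∈ Finset.range n, f t y i := by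
  obtain ⟨C, k, hC, hf⟩ := hf
  refine ⟨C, k + 1, hC, fun t y n h => ?_⟩
  calc _ ≤ ∑ i ∈ Finset.range n, ‖f t y i‖ := norm_sum_le _ _
    _ ≤ ∑ i ∈ Finset.range n, C * (n + 1 : ℝ) ^ k := by
        refine Finset.sum_le_sum fun i hi => (hf t y i h).trans ?_
        have : (i : ℝ) ≤ n := by exact_mod_cast (Finset.mem_range.1 hi).le
        gcongr
    _ = n * (C * (n + 1 : ℝ) ^ k) := by simp
    _ ≤ (n + 1) * (C * (n + 1 : ℝ) ^ k) := by gcongr; linarith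
    _ = _ := by ring

theorem PolyBdd.div {f g : ℂ → ℂ → ℕ → ℂ} (hf : PolyBdd f)
    (hg : ∀ (t y : ℂ) (n : ℕ), -(1 / 100) ≤ t.re → t.re ≤ 1 / 100 → -(1 / 100) ≤ y.re →
      (0 : ℝ) ≤ n → 1 / 100 ≤ (g t y n).re) :
    PolyBdd fun t y n => f t y n / g t y n := by
  have hi : PolyBdd fun t y n => (g t y n)⁻¹ := by
    refine ⟨100, 0, by norm_num, fun t y n h => ?_⟩
    have h1 := (hg t y n h.re_t.1 h.re_t.2 h.re_y n.cast_nonneg).trans (Complex.re_le_norm _)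
    rw [norm_inv]
    have := inv_anti₀ (by norm_num) h1
    norm_num at this ⊢
    exact this
  simp only [div_eq_mul_inv]
  exact hf.mul hi

theorem GeomBdd.mul {f g : ℂ → ℂ → ℕ → ℂ} (hf : GeomBdd f) (hg : PolyBdd g) :
    GeomBdd fun t y n => f t y n * g t y n := by
  obtain ⟨C, k, hC, hf⟩ := hf
  obtain ⟨D, l, hD, hg⟩ := hg
  refine ⟨C * D, k + l, mul_nonneg hC hD, fun t y n h => ?_⟩
  rw [norm_mul]
  calc _ ≤ (C * (n + 1 : ℝ) ^ k * (1 / 2) ^ n) * (D * (n + 1 : ℝ) ^ l) :=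
        mul_le_mul (hf t y n h) (hg t y n h) (norm_nonneg _) (by positivity)
    _ = _ := by ring

theorem geomBdd_prod {f : ℂ → ℂ → ℕ → ℂ} (hf : ∀ t y n, Near t y → ‖f t y n‖ ≤ 1 / 2) :
    GeomBdd fun t y n => ∏ i ∈ Finset.range n, f t y i := by
  refine ⟨1, 0, zero_le_one, fun t y n h => ?_⟩
  rw [norm_prod]
  refine (Finset.prod_le_prod (fun _ _ => norm_nonneg _) fun i _ => hf t y i h).trans ?_
  simp

theorem summable_succ_pow_mul_geometric (C : ℝ) (k : ℕ) :
    Summable fun n : ℕ => C * ((n : ℝ) + 1) ^ k * (1 / 2) ^ n := by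
  have h := (summable_nat_add_iff 1).2
    (summable_pow_mul_geometric_of_norm_lt_one k (r := (1 / 2 : ℝ)) (by norm_num))
  refine (h.mul_left (2 * C)).congr fun n => ?_
  push_cast
  ring

theorem GeomBdd.exists_bound {f : ℂ → ℂ → ℕ → ℂ} (hf : GeomBdd f) :
    ∃ u : ℕ → ℝ, Summable u ∧ ∀ t y n, Near t y → ‖f t y n‖ ≤ u n := by
  obtain ⟨C, k, _, hf⟩ := hf
  exact ⟨_, summable_succ_pow_mul_geometric C k, hf⟩

theorem GeomBdd.summable {f : ℂ → ℂ → ℕ → ℂ} (hf : GeomBdd f) {t y : ℂ} (h : Near t y) :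
    Summable fun n => f t y n := by
  obtain ⟨u, hu, hb⟩ := hf.exists_bound
  exact Summable.of_norm_bounded hu fun n => hb t y n h

theorem GeomBdd.tendsto_zero {f : ℂ → ℂ → ℕ → ℂ} (hf : GeomBdd f) {t y : ℂ} (h : Near t y) :
    Tendsto (fun n => f t y n) atTop (𝓝 0) :=
  (hf.summable h).tendsto_atTop_zero

/-- Existence of a limit at infinity. -/
def HasLim (f : ℂ → ℂ) : Prop := ∃ L, Tendsto f (Bornology.cobounded ℂ) (𝓝 L)

theorem hasLim_const (c : ℂ) : HasLim fun _ => c := ⟨c, tendsto_const_nhds⟩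

theorem HasLim.add {f g : ℂ → ℂ} : HasLim f → HasLim g → HasLim fun y => f y + g y :=
  fun ⟨_, hf⟩ ⟨_, hg⟩ => ⟨_, hf.add hg⟩

theorem HasLim.mul {f g : ℂ → ℂ} : HasLim f → HasLim g → HasLim fun y => f y * g y :=
  fun ⟨_, hf⟩ ⟨_, hg⟩ => ⟨_, hf.mul hg⟩

theorem HasLim.sum {f : ℕ → ℂ → ℂ} (h : ∀ i, HasLim (f i)) (n : ℕ) :
    HasLim fun y => ∑ i ∈ Finset.range n, f i y := by
  choose L hL using h
  exact ⟨_, tendsto_finsetSum _ fun i _ => hL i⟩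

theorem HasLim.prod {f : ℕ → ℂ → ℂ} (h : ∀ i, HasLim (f i)) (n : ℕ) :
    HasLim fun y => ∏ i ∈ Finset.range n, f i y := by
  choose L hL using h
  exact ⟨_, tendsto_finsetProd _ fun i _ => hL i⟩

theorem hasLim_mobius (a s b : ℂ) {u : ℂ} (hu : u ≠ 0) :
    HasLim fun y => (a + s * y) / (b + u * y) := by
  have h1 : Tendsto (fun y : ℂ => b + u * y) (Bornology.cobounded ℂ) (Bornology.cobounded ℂ) := by
    rw [← tendsto_norm_atTop_iff_cobounded]
    have h2 : Tendsto (fun y : ℂ => ‖u‖ * ‖y‖ - ‖b‖) (Bornology.cobounded ℂ) atTop :=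
      tendsto_atTop_add_const_right _ _
        (tendsto_norm_cobounded_atTop.const_mul_atTop (norm_pos_iff.2 hu))
    refine tendsto_atTop_mono (fun y => ?_) h2
    have := norm_sub_norm_le (u * y) (-b)
    rw [norm_mul, norm_neg, sub_neg_eq_add, add_comm (u * y)] at this
    exact this
  have h3 := (tendsto_inv₀_cobounded (α := ℂ)).comp h1
  refine ⟨s / u + (a - s * b / u) * 0, ((h3.const_mul (a - s * b / u)).const_add (s / u)).congr' ?_⟩
  filter_upwards [h1.eventually_ne_cobounded 0] with y hy
  simp only [Function.comp_apply]
  field_simp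
  ring

theorem tendsto_add_natCast_cobounded (e : ℂ) :
    Tendsto (fun j : ℕ => e + j) atTop (Bornology.cobounded ℂ) := by
  rw [← tendsto_norm_atTop_iff_cobounded]
  have h2 : Tendsto (fun j : ℕ => (j : ℝ) - ‖e‖) atTop atTop :=
    tendsto_atTop_add_const_right _ _ tendsto_natCast_atTop_atTop
  refine tendsto_atTop_mono (fun j => ?_) h2
  have := norm_sub_norm_le (j : ℂ) (-e)
  rw [norm_neg, sub_neg_eq_add, add_comm (j : ℂ), Complex.norm_natCast] at this
  exact this

theorem Near.add_natCast {t e : ℂ} (ht : ‖t‖ ≤ 1 / 100) (he : ‖e‖ ≤ 1 / 100) (j : ℕ) :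
    Near t (e + j) := ⟨ht, j, by simpa using he⟩

theorem GeomBdd.exists_tsum_limit {f : ℂ → ℂ → ℕ → ℂ} (hb : GeomBdd f)
    (hl : ∀ t n, HasLim fun y => f t y n) {t : ℂ} (ht : ‖t‖ ≤ 1 / 100) :
    ∃ L, ∀ e : ℂ, ‖e‖ ≤ 1 / 100 → Tendsto (fun j : ℕ => ∑' n, f t (e + j) n) atTop (𝓝 L) := by
  choose L hL using hl t
  obtain ⟨u, hu, hb⟩ := hb.exists_bound
  refine ⟨∑' n, L n, fun e he => ?_⟩
  refine tendsto_tsum_of_dominated_convergence hu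
    (fun n => (hL n).comp (tendsto_add_natCast_cobounded e)) ?_
  exact Eventually.of_forall fun j n => hb t _ n (Near.add_natCast ht he j)

theorem tsum_eq_of_telescoping {a g : ℕ → ℂ} (ha : Summable a) (h : ∀ n, a n = g (n + 1) - g n)
    (hg : Tendsto g atTop (𝓝 0)) : ∑' n, a n = -g 0 := by
  have h1 := ha.hasSum.tendsto_sum_nat
  simp only [h, Finset.sum_range_sub] at h1
  have h2 := hg.sub_const (g 0)
  rw [zero_sub] at h2
  exact (tsum_congr h).trans (tendsto_nhds_unique h1 h2)

/-- Comparison of two orbits `e + ℕ`, `e' + ℕ` of a function with known increments. -/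
theorem tendsto_sum_increments {S q : ℂ → ℂ} {L e e' : ℂ}
    (h : ∀ j : ℕ, S (e + j + 1) = S (e + j) + q (e + j))
    (h' : ∀ j : ℕ, S (e' + j + 1) = S (e' + j) + q (e' + j))
    (hL : Tendsto (fun j : ℕ => S (e + j)) atTop (𝓝 L))
    (hL' : Tendsto (fun j : ℕ => S (e' + j)) atTop (𝓝 L)) :
    Tendsto (fun N => ∑ j ∈ Finset.range N, (q (e + j) - q (e' + j))) atTop (𝓝 (S e' - S e)) := by
  have hs : ∀ N : ℕ, ∑ j ∈ Finset.range N, (q (e + j) - q (e' + j)) =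
      (S (e + N) - S (e' + N)) + (S e' - S e) := by
    intro N
    induction N with
    | zero => simp
    | succ N ih =>
      rw [Finset.sum_range_succ, ih]
      push_cast
      rw [← add_assoc, ← add_assoc, h, h']
      ring
  simp only [hs]
  simpa using (hL.sub hL').add_const (S e' - S e)

theorem norm_div_le_of_near {z d : ℂ} {a b e c : ℝ} (hz : ‖z - (a : ℂ)‖ ≤ e) (hd : b ≤ d.re)
    (hb : 0 < b) (hc : |a| + e ≤ c * b) : ‖z / d‖ ≤ c := by
  have h1 : ‖z‖ ≤ |a| + e := by
    have := norm_add_le (z - (a : ℂ)) (a : ℂ)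
    rw [sub_add_cancel, Complex.norm_real, Real.norm_eq_abs] at this
    linarith
  have h2 : b ≤ ‖d‖ := hd.trans (Complex.re_le_norm d)
  rw [norm_div, div_le_iff₀ (hb.trans_le h2)]
  have : 0 ≤ c := by
    by_contra hneg
    have h3 := abs_nonneg a
    have h4 := (norm_nonneg _).trans hz
    nlinarith
  nlinarith

theorem norm_dRatio_le {t y : ℂ} (h : Near t y) (i : ℕ) : ‖dRatio t y i‖ ≤ 1 / 2 := by
  obtain ⟨j, hj⟩ := h.hy
  have ht := h.ht
  obtain ⟨r1, r2⟩ := h.re_t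
  have hyr : (j : ℝ) - 1 / 100 ≤ y.re := by
    have := (abs_le.1 ((Complex.abs_re_le_norm _).trans hj)).1
    simp only [Complex.sub_re, Complex.natCast_re] at this
    linarith
  have hi : (0 : ℝ) ≤ i := i.cast_nonneg
  have hj0 : (0 : ℝ) ≤ j := j.cast_nonneg
  have n2 : ‖2 * t‖ ≤ 2 / 100 := by rw [norm_mul]; norm_num; linarith
  have nyt : ‖(y - j) - t‖ ≤ 2 / 100 := (norm_sub_le _ _).trans (by linarith)
  have b1 : ‖(1 + 2 * t + i) / (2 + 2 * t + 2 * i)‖ ≤ 6 / 10 := by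
    refine norm_div_le_of_near (a := 1 + i) (b := 2 + 2 * i - 2 / 100) (e := 2 / 100) ?_ ?_
      (by linarith) ?_
    · push_cast; convert n2 using 2; ring
    · simp; linarith
    · rw [abs_of_nonneg (by linarith)]; linarith
  have b2 : ‖(1 - 2 * t + 2 * i) / (1 + 2 * t + 2 * i)‖ ≤ 11 / 10 := by
    refine norm_div_le_of_near (a := 1 + 2 * i) (b := 1 + 2 * i - 2 / 100) (e := 2 / 100) ?_ ?_
      (by linarith) ?_
    · push_cast
      rw [show 1 - 2 * t + 2 * (i : ℂ) - (1 + 2 * i) = -(2 * t) by ring, norm_neg]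
      exact n2
    · simp; linarith
    · rw [abs_of_nonneg (by linarith)]; linarith
  have b3 : ‖(y - t - 2 * i - 1) / (1 + t + y + 2 * i)‖ ≤ 11 / 10 := by
    refine norm_div_le_of_near (a := j - 2 * i - 1) (b := 1 + j + 2 * i - 2 / 100) (e := 2 / 100)
      ?_ ?_ (by linarith) ?_
    · push_cast; convert nyt using 2; ring
    · simp; linarith
    · cases abs_cases ((j : ℝ) - 2 * i - 1) <;> linarith
  have b4 : ‖(y - t - 2 * i - 2) / (2 + t + y + 2 * i)‖ ≤ 11 / 10 := by
    refine norm_div_le_of_near (a := j - 2 * i - 2) (b := 2 + j + 2 * i - 2 / 100) (e := 2 / 100)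
      ?_ ?_ (by linarith) ?_
    · push_cast; convert nyt using 2; ring
    · simp; linarith
    · cases abs_cases ((j : ℝ) - 2 * i - 2) <;> linarith
  have b5 : ‖(y - t + i + 1) / (1 + 2 * y + 2 * i)‖ ≤ 11 / 10 := by
    refine norm_div_le_of_near (a := j + i + 1) (b := 1 + 2 * j + 2 * i - 2 / 100) (e := 2 / 100)
      ?_ ?_ (by linarith) ?_
    · push_cast; convert nyt using 2; ring
    · simp; linarith
    · rw [abs_of_nonneg (by linarith)]; linarith
  have b0 : ‖-((2 * i + 1) * (2 * i + 2) / (3 * (3 * i + 2) * (3 * i + 1)) : ℂ)‖ ≤ 1 / 3 := by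
    have : (-((2 * i + 1) * (2 * i + 2) / (3 * (3 * i + 2) * (3 * i + 1)) : ℂ)) =
      ((-((2 * i + 1) * (2 * i + 2) / (3 * (3 * i + 2) * (3 * i + 1))) : ℝ) : ℂ) := by push_cast; rfl
    rw [this, Complex.norm_real, norm_neg, Real.norm_eq_abs, abs_of_nonneg (by positivity),
      div_le_iff₀ (by positivity)]
    nlinarith
  unfold dRatio
  simp only [norm_mul]
  calc _ ≤ (1 / 3 : ℝ) * (6 / 10) * (11 / 10) * (11 / 10) * (11 / 10) * (11 / 10) := by gcongr
    _ ≤ 1 / 2 := by norm_num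

theorem geomBdd_dProd : GeomBdd dProd := geomBdd_prod fun _ _ n h => norm_dRatio_le h n

theorem polyBdd_affine (a b c : ℂ) : PolyBdd fun t _ n => a + b * t + c * n :=
  ((polyBdd_const a).add ((polyBdd_const b).mul polyBdd_param)).add
    ((polyBdd_const c).mul polyBdd_nat)

theorem polyBdd_dA : PolyBdd dA := by
  have h1 : PolyBdd fun t y n => (1 + 2 * t + 1 * n) / (2 + 2 * t + 2 * n) :=
    (polyBdd_affine 1 2 1).div (by intros; simp; linarith)
  have h2 : PolyBdd fun t y n => (1 + 0 * t + 2 * n) / (3 * n + 2) :=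
    (polyBdd_affine 1 0 2).div (by intros; simp; linarith)
  have h3 : PolyBdd fun t y n => (3 + 2 * t + 4 * n) / (2 + t + y + 2 * n) :=
    (polyBdd_affine 3 2 4).div (by intros; simp; linarith)
  refine ((h1.mul h2).mul (h3.sub (polyBdd_const 1))).congr fun t y n h => ?_
  have : 2 + t + y + 2 * n ≠ 0 := h.ne_zero n (by intros; simp; linarith)
  have e : (3 + 2 * t + 4 * n) / (2 + t + y + 2 * n) - 1 =
      (1 + t + 2 * n - y) / (2 + t + y + 2 * n) := by
    rw [div_sub_one this]; congr 1; ring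
  simp only [e, dA, zero_mul, add_zero, one_mul]

theorem polyBdd_quot : PolyBdd fun t y n => (2 + t + 2 * n - y) / (1 + 2 * y + 2 * n) := by
  have h3 : PolyBdd fun t y n => (5 / 2 + 1 * t + 3 * n) / (1 + 2 * y + 2 * n) :=
    (polyBdd_affine (5 / 2) 1 3).div (by intros; simp; linarith)
  refine (h3.sub (polyBdd_const (1 / 2))).congr fun t y n h => ?_
  have : 1 + 2 * y + 2 * n ≠ 0 := h.ne_zero n (by intros; simp; linarith)
  rw [div_sub' this]; congr 1; ring

theorem polyBdd_dB : PolyBdd dB := by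
  refine ((polyBdd_affine 4 2 4).add (((polyBdd_const (2 / 3)).mul
    (polyBdd_affine 5 2 4)).mul polyBdd_quot)).congr fun t y n h => ?_
  simp only [dB]

theorem polyBdd_dOm : PolyBdd dOm := by
  refine ((polyBdd_affine 2 2 4).add (polyBdd_dA.mul polyBdd_dB)).congr fun t y n h => ?_
  simp only [dOm]; ring

theorem polyBdd_dA' : PolyBdd dA' := by
  have h1 : PolyBdd fun t y n => 1 / (2 * n + 1) :=
    (polyBdd_const 1).div (by intros; simp; linarith)
  have h2 : PolyBdd fun t y n => 1 / (2 + 2 * t + 2 * n) :=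
    (polyBdd_const 1).div (by intros; simp; linarith)
  exact polyBdd_dA.mul (h1.add h2)

theorem polyBdd_dB' : PolyBdd dB' := by
  have h1 : PolyBdd fun t y n => (5 + 2 * t + 4 * n) / (3 * (n + 1)) :=
    (polyBdd_affine 5 2 4).div (by intros; simp; linarith)
  have h2 : PolyBdd fun t y n => (4 + 0 * t + 4 * n) / (1 + 2 * y + 2 * n) :=
    (polyBdd_affine 4 0 4).div (by intros; simp; linarith)
  refine ((h1.mul polyBdd_quot).mul ((polyBdd_const 1).add h2)).congr fun t y n h => ?_
  simp only [dB']; congr 2; ring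

theorem polyBdd_dOm' : PolyBdd dOm' :=
  (polyBdd_dA'.mul polyBdd_dB).add (polyBdd_dA.mul polyBdd_dB')

theorem polyBdd_dLog : PolyBdd dLog := by
  have h1 : PolyBdd fun t y n => 1 / (2 * n + 1) :=
    (polyBdd_const 1).div (by intros; simp; linarith)
  have h2 : PolyBdd fun t y n => 1 / (2 * (n + 1)) :=
    (polyBdd_const 1).div (by intros; simp; linarith)
  have h3 : PolyBdd fun t y n => 1 / (2 + 2 * t + 2 * n) :=
    (polyBdd_const 1).div (by intros; simp; linarith)
  have h4 : PolyBdd fun t y n => 1 / (1 + 2 * t + 2 * n) :=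
    (polyBdd_const 1).div (by intros; simp; linarith)
  have h5 : PolyBdd fun t y n => 2 / (1 + 2 * y + 2 * n) :=
    (polyBdd_const 2).div (by intros; simp; linarith)
  exact ((((h1.sub h2).add h3).add h4).add h5).sum.add h4

theorem polyBdd_kerFactor : PolyBdd fun t y n =>
    (y - t) / (1 + t + y + 2 * n) * (1 / ((1 + 2 * t + 2 * n) * (3 * n + 1))) := by
  have h1 : PolyBdd fun t y n => (1 + 2 * t + 2 * n) / (1 + t + y + 2 * n) :=
    (polyBdd_affine 1 2 2).div (by intros; simp; linarith)
  have h2 : PolyBdd fun t y n => 1 / (1 + 2 * t + 2 * n) :=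
    (polyBdd_const 1).div (by intros; simp; linarith)
  have h3 : PolyBdd fun t y n => 1 / (3 * n + 1) :=
    (polyBdd_const 1).div (by intros; simp; linarith)
  refine (((polyBdd_const 1).sub h1).mul (h2.mul h3)).congr fun t y n h => ?_
  have : 1 + t + y + 2 * n ≠ 0 := h.ne_zero n (by intros; simp; linarith)
  rw [one_sub_div this]
  congr 1
  · congr 1; ring
  · rw [div_mul_div_comm, one_mul]

theorem geomBdd_dKer : GeomBdd dKer := by
  obtain ⟨C, k, hC, h⟩ := geomBdd_dProd.mul polyBdd_kerFactor
  exact ⟨C, k, hC, fun t y n hn => by rw [dKer, mul_comm]; exact h t y n hn⟩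

theorem polyBdd_dCert : PolyBdd dCert := by
  have h1 : PolyBdd fun t y n => 1 / (1 - t + y + n) :=
    (polyBdd_const 1).div (by intros; simp; linarith)
  have h2 : PolyBdd fun t y n => 1 / (1 + t + y) :=
    (polyBdd_const 1).div (by intros; simp; linarith)
  have h3 : PolyBdd fun t y n => (3 / 2 + 1 * t + 2 * n) / (1 + 2 * y) :=
    (polyBdd_affine (3 / 2) 1 2).div (by intros; simp; linarith)
  refine ((((((polyBdd_affine 1 0 3).mul (polyBdd_affine 1 2 4)).mul (polyBdd_affine 1 2 2)).mul
    h1).mul h2).mul ((polyBdd_const (1 / 2)).add h3)).congr fun t y n h => ?_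
  have e1 : 1 - t + y + n ≠ 0 := h.ne_zero n (by intros; simp; linarith)
  have e2 : 1 + t + y ≠ 0 := h.ne_zero n (by intros; simp; linarith)
  have e3 : 1 + 2 * y ≠ 0 := h.ne_zero n (by intros; simp; linarith)
  have e : 1 / 2 + (3 / 2 + 1 * t + 2 * (n : ℂ)) / (1 + 2 * y) =
      (2 + t + y + 2 * n) / (1 + 2 * y) := by
    rw [eq_div_iff e3, add_mul, div_mul_cancel₀ _ e3]; ring
  simp only [e, dCert]
  field_simp
  ring

theorem polyBdd_dCert' : PolyBdd dCert' := by
  have h1 : PolyBdd fun t y n => 1 / (1 + 2 * t + 2 * n) :=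
    (polyBdd_const 1).div (by intros; simp; linarith)
  have h2 : PolyBdd fun t y n => 1 / (1 + t + y) :=
    (polyBdd_const 1).div (by intros; simp; linarith)
  exact polyBdd_dCert.mul (h1.neg.add h2)

theorem PolyBdd.shift {f : ℂ → ℂ → ℕ → ℂ} (hf : PolyBdd f) :
    PolyBdd fun t y n => f t (y + 1) n := by
  obtain ⟨C, k, hC, hf⟩ := hf
  exact ⟨C, k, hC, fun t y n h => hf t _ n h.succ⟩

theorem GeomBdd.shift {f : ℂ → ℂ → ℕ → ℂ} (hf : GeomBdd f) :
    GeomBdd fun t y n => f t (y + 1) n := by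
  obtain ⟨C, k, hC, hf⟩ := hf
  exact ⟨C, k, hC, fun t y n h => hf t _ n h.succ⟩

theorem geomBdd_dF : GeomBdd dF := geomBdd_dKer.mul polyBdd_dOm

theorem geomBdd_dF' : GeomBdd dF' :=
  geomBdd_dKer.mul ((polyBdd_dOm.mul polyBdd_dLog).add polyBdd_dOm')

theorem geomBdd_dG : GeomBdd dG := geomBdd_dKer.shift.mul polyBdd_dCert

theorem geomBdd_dG' : GeomBdd dG' :=
  geomBdd_dKer.shift.mul ((polyBdd_dCert.mul polyBdd_dLog.shift).add polyBdd_dCert')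

theorem HasLim.of_mobius {f : ℂ → ℂ} (a s b : ℂ) {u : ℂ} (hu : u ≠ 0)
    (h : ∀ y, f y = (a + s * y) / (b + u * y)) : HasLim f := by
  rw [funext h]; exact hasLim_mobius a s b hu

theorem hasLim_dA (t : ℂ) (n : ℕ) : HasLim fun y => dA t y n :=
  (hasLim_const _).mul (.of_mobius (1 + t + 2 * n) (-1) (2 + t + 2 * n) one_ne_zero
    fun y => by congr 1 <;> ring)

theorem hasLim_quot (t : ℂ) (n : ℕ) :
    HasLim fun y => (2 + t + 2 * n - y) / (1 + 2 * y + 2 * n) :=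
  .of_mobius (2 + t + 2 * n) (-1) (1 + 2 * n) two_ne_zero fun y => by congr 1 <;> ring

theorem hasLim_dB (t : ℂ) (n : ℕ) : HasLim fun y => dB t y n :=
  (hasLim_const _).add ((hasLim_const _).mul (hasLim_quot t n))

theorem hasLim_dOm (t : ℂ) (n : ℕ) : HasLim fun y => dOm t y n :=
  (hasLim_const _).add ((hasLim_dA t n).mul (hasLim_dB t n))

theorem hasLim_dB' (t : ℂ) (n : ℕ) : HasLim fun y => dB' t y n :=
  ((hasLim_const _).mul (hasLim_quot t n)).mul ((hasLim_const _).add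
    (.of_mobius (4 * (n + 1)) 0 (1 + 2 * n) two_ne_zero fun y => by congr 1 <;> ring))

theorem hasLim_dOm' (t : ℂ) (n : ℕ) : HasLim fun y => dOm' t y n :=
  (((hasLim_dA t n).mul (hasLim_const _)).mul (hasLim_dB t n)).add
    ((hasLim_dA t n).mul (hasLim_dB' t n))

theorem hasLim_dLog (t : ℂ) (n : ℕ) : HasLim fun y => dLog t y n :=
  (HasLim.sum (fun i => (hasLim_const _).add
    (.of_mobius 2 0 (1 + 2 * i) two_ne_zero fun y => by congr 1 <;> ring)) n).add (hasLim_const _)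

theorem hasLim_dKer (t : ℂ) (n : ℕ) : HasLim fun y => dKer t y n := by
  have hr : ∀ i, HasLim fun y => dRatio t y i := fun i =>
    (((hasLim_const _).mul
      (.of_mobius (-t - 2 * i - 1) 1 (1 + t + 2 * i) one_ne_zero fun y => by congr 1 <;> ring)).mul
      (.of_mobius (-t - 2 * i - 2) 1 (2 + t + 2 * i) one_ne_zero fun y => by congr 1 <;> ring)).mul
      (.of_mobius (-t + i + 1) 1 (1 + 2 * i) two_ne_zero fun y => by congr 1 <;> ring)
  exact ((HasLim.of_mobius (-t) 1 (1 + t + 2 * n) one_ne_zero fun y => by congr 1 <;> ring).mul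
    (hasLim_const _)).mul (HasLim.prod hr n)

theorem hasLim_dF (t : ℂ) (n : ℕ) : HasLim fun y => dF t y n :=
  (hasLim_dKer t n).mul (hasLim_dOm t n)

theorem hasLim_dF' (t : ℂ) (n : ℕ) : HasLim fun y => dF' t y n :=
  (hasLim_dKer t n).mul (((hasLim_dOm t n).mul (hasLim_dLog t n)).add (hasLim_dOm' t n))

noncomputable def dSum (t y : ℂ) : ℂ := ∑' n, dF t y n

noncomputable def dSum' (t y : ℂ) : ℂ := ∑' n, dF' t y n

theorem dG_zero {t y : ℂ} (h : Near t y) : dG t y 0 = dGap t y := by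
  have e1 : 1 - t + y ≠ 0 := h.ne_zero 0 (by intros; simp; linarith)
  have e1' : y + 1 - t ≠ 0 := h.ne_zero 0 (by intros; simp; linarith)
  have e2 : 1 + t + y ≠ 0 := h.ne_zero 0 (by intros; simp; linarith)
  have e3 : 1 + 2 * y ≠ 0 := h.ne_zero 0 (by intros; simp; linarith)
  have e4 : 2 + t + y ≠ 0 := h.ne_zero 0 (by intros; simp; linarith)
  have e5 : 1 + 2 * t ≠ 0 := h.ne_zero 0 (by intros; simp; linarith)
  simp only [dG, dKer, dCert, dGap, dProd, Finset.range_zero, Finset.prod_empty, Nat.cast_zero,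
    mul_zero, add_zero, zero_add, mul_one]
  rw [show 1 + t + (y + 1) = 2 + t + y by ring, show y + 1 - t = 1 - t + y by ring,
    div_sub_div _ _ e3 e2]
  generalize hd : 1 + 2 * y = d at *
  field_simp
  rw [← hd]
  ring

theorem dG'_zero {t y : ℂ} (h : Near t y) : dG' t y 0 = dGap t y / (1 + t + y) := by
  rw [← dG_zero h]
  simp only [dG', dG, dCert', dLog, Finset.range_zero, Finset.sum_empty, Nat.cast_zero, mul_zero,
    add_zero, zero_add]
  ring

theorem dSum_succ {t y : ℂ} (h : Near t y) : dSum t (y + 1) = dSum t y + dGap t y := by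
  have h1 := geomBdd_dF.summable h
  have h2 := geomBdd_dF.summable h.succ
  have h3 := tsum_eq_of_telescoping (h1.sub h2) (dF_wz h) (geomBdd_dG.tendsto_zero h)
  rw [(h1.hasSum.sub h2.hasSum).tsum_eq, dG_zero h] at h3
  simp only [dSum]
  linear_combination -h3

theorem dSum'_succ {t y : ℂ} (h : Near t y) :
    dSum' t (y + 1) = dSum' t y - dGap t y * dSum t y + dGap t y / (1 + t + y) := by
  have h0 := (geomBdd_dF.summable h).mul_left (dGap t y)
  have h1 := geomBdd_dF'.summable h
  have h2 := geomBdd_dF'.summable h.succ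
  have h3 := tsum_eq_of_telescoping ((h1.sub h0).sub h2) (dF'_wz h) (geomBdd_dG'.tendsto_zero h)
  rw [((h1.hasSum.sub h0.hasSum).sub h2.hasSum).tsum_eq, dG'_zero h, tsum_mul_left] at h3
  simp only [dSum', dSum]
  linear_combination -h3

theorem dF_self (t : ℂ) (n : ℕ) : dF t t n = 0 := by simp [dF, dKer]

theorem dF'_self (t : ℂ) (n : ℕ) : dF' t t n = 0 := by simp [dF', dKer]

theorem tendsto_dGap_sums {t e : ℂ} (ht : ‖t‖ ≤ 1 / 100) (he : ‖e‖ ≤ 1 / 100) :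
    Tendsto (fun N => ∑ j ∈ Finset.range N, (dGap t (e + j) - dGap t (t + j))) atTop
      (𝓝 (-dSum t e)) := by
  obtain ⟨L, hL⟩ := geomBdd_dF.exists_tsum_limit hasLim_dF ht
  have h0 : dSum t t = 0 := by simp [dSum, dF_self]
  have h := tendsto_sum_increments (S := dSum t) (q := dGap t) (e := e) (e' := t)
    (fun j => dSum_succ (Near.add_natCast ht he j)) (fun j => dSum_succ (Near.add_natCast ht ht j))
    (hL e he) (hL t ht)
  rwa [h0, zero_sub] at h

theorem tendsto_dGap_sq_sums {t e : ℂ} (ht : ‖t‖ ≤ 1 / 100) (he : ‖e‖ ≤ 1 / 100) :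
    Tendsto (fun N => ∑ j ∈ Finset.range N,
      ((4 / (1 + 2 * (e + j)) ^ 2 - 1 / (1 + t + (e + j)) ^ 2) / 2 -
        (4 / (1 + 2 * (t + j)) ^ 2 - 1 / (1 + t + (t + j)) ^ 2) / 2)) atTop
      (𝓝 (-(dSum' t e + dSum t e ^ 2 / 2))) := by
  obtain ⟨L, hL⟩ := geomBdd_dF.exists_tsum_limit hasLim_dF ht
  obtain ⟨L', hL'⟩ := geomBdd_dF'.exists_tsum_limit hasLim_dF' ht
  have h0 : dSum t t = 0 := by simp [dSum, dF_self]
  have h0' : dSum' t t = 0 := by simp [dSum', dF'_self]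
  have hinc : ∀ y, Near t y → dSum' t (y + 1) + dSum t (y + 1) ^ 2 / 2 =
      dSum' t y + dSum t y ^ 2 / 2 + (4 / (1 + 2 * y) ^ 2 - 1 / (1 + t + y) ^ 2) / 2 := by
    intro y h
    have e2 : 1 + t + y ≠ 0 := h.ne_zero 0 (by intros; simp; linarith)
    have e3 : 1 + 2 * y ≠ 0 := h.ne_zero 0 (by intros; simp; linarith)
    have hk : dGap t y / (1 + t + y) + dGap t y ^ 2 / 2 =
        (4 / (1 + 2 * y) ^ 2 - 1 / (1 + t + y) ^ 2) / 2 := by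
      unfold dGap
      field_simp
      ring
    rw [dSum_succ h, dSum'_succ h, ← hk]
    ring
  have h := tendsto_sum_increments (S := fun y => dSum' t y + dSum t y ^ 2 / 2)
    (q := fun y => (4 / (1 + 2 * y) ^ 2 - 1 / (1 + t + y) ^ 2) / 2) (e := e) (e' := t)
    (fun j => hinc _ (Near.add_natCast ht he j)) (fun j => hinc _ (Near.add_natCast ht ht j))
    ((hL' e he).add (((hL e he).pow 2).div_const 2))
    ((hL' t ht).add (((hL t ht).pow 2).div_const 2))
  simpa [h0, h0'] using h

/-- Ratio of consecutive factors in the hypergeometric product of the second family. -/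
noncomputable def wRatio (v z : ℂ) (i : ℕ) : ℂ :=
  -((i + 1) * (i + 1 + 2 * v) / (3 * (3 * i + 2) * (3 * i + 1))) *
    ((1 - v + i) / (1 + 2 * v + 2 * i)) *
    ((1 + 2 * z + i) / (1 + z + i)) * ((1 - 2 * z + 2 * i) / (1 + v + z + i))

/-- The kernel of the second WZ family. -/
noncomputable def wKer (v z : ℂ) (n : ℕ) : ℂ :=
  (1 + 2 * z + n) / (1 + v + z + n) * (1 / (2 * (3 * n + 1))) *
    ∏ i ∈ Finset.range n, wRatio v z i

noncomputable def wOm (v z : ℂ) (n : ℕ) : ℂ :=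
  -(((4 + z + 5 * n) / (1 + z + n) * (7 + 2 * v + 10 * n) -
    3 * (3 * n + 2) * (4 * n + 3) / (1 + z + n)) *
    (1 / (3 * (3 * n + 2) * (1 + 2 * v + 2 * n))))

noncomputable def wCert (_v z : ℂ) (n : ℕ) : ℂ :=
  (3 * n + 1) / (2 * (1 + z + n) * (1 + 2 * z - 2 * n))

noncomputable def wF (v z : ℂ) (n : ℕ) : ℂ := wKer v z n * wOm v z n

noncomputable def wG (v z : ℂ) (n : ℕ) : ℂ := wKer v z n * wCert v z n

theorem Near.odd_lower {v z : ℂ} (h : Near v z) (n : ℕ) : 9 / 10 ≤ ‖1 + 2 * z - 2 * n‖ := by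
  obtain ⟨j, hj⟩ := h.hy
  have h1 : (1 : ℝ) ≤ |1 + 2 * (j : ℝ) - 2 * n| := by
    have : (1 : ℤ) ≤ |1 + 2 * (j : ℤ) - 2 * n| := Int.one_le_abs (by omega)
    exact_mod_cast this
  have h2 : (((1 + 2 * (j : ℝ) - 2 * n : ℝ)) : ℂ) = (1 + 2 * z - 2 * n) - 2 * (z - j) := by
    push_cast; ring
  have h3 := norm_sub_le (1 + 2 * z - 2 * (n : ℂ)) (2 * (z - j))
  rw [← h2, Complex.norm_real, Real.norm_eq_abs, norm_mul, Complex.norm_ofNat] at h3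
  linarith

theorem Near.odd_ne_zero {v z : ℂ} (h : Near v z) (n : ℕ) : 1 + 2 * z - 2 * n ≠ 0 := by
  rw [← norm_pos_iff]
  linarith [h.odd_lower n]

theorem wKer_succ {t y : ℂ} (h : Near t y) (n : ℕ) :
    wKer t y (n + 1) = wKer t y n * (-((n + 1) * (n + 1 + 2 * t) * (1 - t + n) *
      (2 + 2 * y + n) * (1 - 2 * y + 2 * n)) /
      (3 * (3 * n + 2) * (3 * n + 4) * (1 + 2 * t + 2 * n) * (1 + y + n) * (2 + t + y + n))) := by
  have a1_ne : 1 + t + y + n ≠ 0 := h.ne_zero n (by intros; simp; linarith)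
  have a2_ne : 2 + t + y + n ≠ 0 := h.ne_zero n (by intros; simp; linarith)
  have b1_ne : 1 + 2 * t + 2 * n ≠ 0 := h.ne_zero n (by intros; simp; linarith)
  have y1_ne : 1 + y + n ≠ 0 := h.ne_zero n (by intros; simp; linarith)
  have c1_ne : (3 * n + 1 : ℂ) ≠ 0 := h.ne_zero n (by intros; simp; linarith)
  have c2_ne : (3 * n + 2 : ℂ) ≠ 0 := h.ne_zero n (by intros; simp; linarith)
  have c4_ne : (3 * n + 4 : ℂ) ≠ 0 := h.ne_zero n (by intros; simp; linarith)
  have f1 : 1 + t + y + ((n + 1 : ℕ) : ℂ) = 2 + t + y + n := by push_cast; ring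
  have f2 : 1 + 2 * y + ((n + 1 : ℕ) : ℂ) = 2 + 2 * y + n := by push_cast; ring
  have f3 : 3 * ((n + 1 : ℕ) : ℂ) + 1 = 3 * n + 4 := by push_cast; ring
  simp only [wKer, Finset.prod_range_succ, f1, f2, f3]
  generalize ∏ i ∈ Finset.range n, wRatio t y i = Q
  clear f1 f2 f3
  unfold wRatio
  generalize (n : ℂ) = m at *
  generalize a1_def : (1 + t + y + m : ℂ) = a1 at *
  generalize a2_def : (2 + t + y + m : ℂ) = a2 at *
  generalize b1_def : (1 + 2 * t + 2 * m : ℂ) = b1 at *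
  generalize y1_def : (1 + y + m : ℂ) = y1 at *
  generalize c1_def : (3 * m + 1 : ℂ) = c1 at *
  generalize c2_def : (3 * m + 2 : ℂ) = c2 at *
  generalize c4_def : (3 * m + 4 : ℂ) = c4 at *
  field_simp

theorem wKer_shift {t y : ℂ} (h : Near t y) (n : ℕ) :
    wKer t (y + 1) n = wKer t y n * ((2 + 2 * y + n) * (3 + 2 * y + n) * (1 + t + y)) /
      ((2 + t + y + n) * (2 * (1 + y + n)) * (1 + 2 * y - 2 * n)) := by
  have k1_ne : 1 + t + y ≠ 0 := h.ne_zero 0 (by intros; simp; linarith)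
  induction n with
  | zero =>
    have k2_ne : 2 + t + y ≠ 0 := h.ne_zero 0 (by intros; simp; linarith)
    have k3_ne : 1 + y ≠ 0 := h.ne_zero 0 (by intros; simp; linarith)
    have k4_ne : 1 + 2 * y ≠ 0 := h.ne_zero 0 (by intros; simp; linarith)
    simp only [wKer, Finset.range_zero, Finset.prod_empty, Nat.cast_zero, mul_zero,
      add_zero, sub_zero, mul_one, zero_add]
    rw [show 1 + t + (y + 1) = 2 + t + y by ring]
    generalize k1_def : 1 + t + y = k1 at *
    generalize k2_def : 2 + t + y = k2 at *
    generalize k3_def : 1 + y = k3 at *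
    generalize k4_def : 1 + 2 * y = k4 at *
    field_simp
    subst k1_def k2_def k3_def k4_def
    ring
  | succ n ih =>
    have a2_ne : 2 + t + y + n ≠ 0 := h.ne_zero n (by intros; simp; linarith)
    have a3_ne : 3 + t + y + n ≠ 0 := h.ne_zero n (by intros; simp; linarith)
    have b1_ne : 1 + 2 * t + 2 * n ≠ 0 := h.ne_zero n (by intros; simp; linarith)
    have y1_ne : 1 + y + n ≠ 0 := h.ne_zero n (by intros; simp; linarith)
    have y2_ne : 2 + y + n ≠ 0 := h.ne_zero n (by intros; simp; linarith)
    have c2_ne : (3 * n + 2 : ℂ) ≠ 0 := h.ne_zero n (by intros; simp; linarith)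
    have c4_ne : (3 * n + 4 : ℂ) ≠ 0 := h.ne_zero n (by intros; simp; linarith)
    have o1_ne := h.odd_ne_zero n
    have o2_ne : 2 * y - 1 - 2 * n ≠ 0 := by
      have := h.odd_ne_zero (n + 1)
      push_cast at this
      contrapose! this
      linear_combination this
    rw [wKer_succ h, wKer_succ h.succ, ih]
    push_cast
    rw [show 1 + (y + 1) + (n : ℂ) = 2 + y + n by ring,
      show 2 + t + (y + 1) + (n : ℂ) = 3 + t + y + n by ring,
      show 2 + t + y + ((n : ℂ) + 1) = 3 + t + y + n by ring,
      show 1 + y + ((n : ℂ) + 1) = 2 + y + n by ring,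
      show 1 + 2 * y - 2 * ((n : ℂ) + 1) = 2 * y - 1 - 2 * n by ring]
    generalize wKer t y n = Z
    clear ih
    generalize (n : ℂ) = m at *
    generalize a2_def : (2 + t + y + m : ℂ) = a2 at *
    generalize a3_def : (3 + t + y + m : ℂ) = a3 at *
    generalize b1_def : (1 + 2 * t + 2 * m : ℂ) = b1 at *
    generalize y1_def : (1 + y + m : ℂ) = y1 at *
    generalize y2_def : (2 + y + m : ℂ) = y2 at *
    generalize c2_def : (3 * m + 2 : ℂ) = c2 at *
    generalize c4_def : (3 * m + 4 : ℂ) = c4 at *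
    generalize o1_def : (1 + 2 * y - 2 * m : ℂ) = o1 at *
    generalize o2_def : (2 * y - 1 - 2 * m : ℂ) = o2 at *
    field_simp
    subst a2_def a3_def b1_def y1_def y2_def c2_def c4_def o1_def o2_def
    ring

set_option maxHeartbeats 1000000 in
theorem wF_wz {t y : ℂ} (h : Near t y) (n : ℕ) :
    wF t (y + 1) n - wF t y n = wG t y (n + 1) - wG t y n := by
  have a2_ne : 2 + t + y + n ≠ 0 := h.ne_zero n (by intros; simp; linarith)
  have b1_ne : 1 + 2 * t + 2 * n ≠ 0 := h.ne_zero n (by intros; simp; linarith)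
  have y1_ne : 1 + y + n ≠ 0 := h.ne_zero n (by intros; simp; linarith)
  have y2_ne : 2 + y + n ≠ 0 := h.ne_zero n (by intros; simp; linarith)
  have c2_ne : (3 * n + 2 : ℂ) ≠ 0 := h.ne_zero n (by intros; simp; linarith)
  have c4_ne : (3 * n + 4 : ℂ) ≠ 0 := h.ne_zero n (by intros; simp; linarith)
  have o1_ne := h.odd_ne_zero n
  have o2_ne : 2 * y - 1 - 2 * n ≠ 0 := by
    have := h.odd_ne_zero (n + 1)
    push_cast at this
    contrapose! this
    linear_combination this
  simp only [wF, wG, wKer_succ h, wKer_shift h n, wOm, wCert]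
  generalize wKer t y n = Z
  push_cast
  rw [show 1 + (y + 1) + (n : ℂ) = 2 + y + n by ring,
    show 1 + y + ((n : ℂ) + 1) = 2 + y + n by ring,
    show 1 + 2 * y - 2 * ((n : ℂ) + 1) = 2 * y - 1 - 2 * n by ring,
    show 3 * ((n : ℂ) + 1) + 1 = 3 * n + 4 by ring]
  generalize (n : ℂ) = m at *
  generalize a2_def : (2 + t + y + m : ℂ) = a2 at *
  generalize b1_def : (1 + 2 * t + 2 * m : ℂ) = b1 at *
  generalize y1_def : (1 + y + m : ℂ) = y1 at *
  generalize y2_def : (2 + y + m : ℂ) = y2 at *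
  generalize c2_def : (3 * m + 2 : ℂ) = c2 at *
  generalize c4_def : (3 * m + 4 : ℂ) = c4 at *
  generalize o1_def : (1 + 2 * y - 2 * m : ℂ) = o1 at *
  generalize o2_def : (2 * y - 1 - 2 * m : ℂ) = o2 at *
  field_simp
  subst a2_def b1_def y1_def y2_def c2_def c4_def o1_def o2_def
  ring

theorem norm_wRatio_le {t y : ℂ} (h : Near t y) (i : ℕ) :
    ‖wRatio t y i‖ ≤ 1 / 2 * ((3 * i + 4) / (3 * i + 1)) := by
  obtain ⟨j, hj⟩ := h.hy
  have ht := h.ht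
  obtain ⟨r1, r2⟩ := h.re_t
  have hyr : (j : ℝ) - 1 / 100 ≤ y.re := by
    have := (abs_le.1 ((Complex.abs_re_le_norm _).trans hj)).1
    simp only [Complex.sub_re, Complex.natCast_re] at this
    linarith
  have hi : (0 : ℝ) ≤ i := i.cast_nonneg
  have hj0 : (0 : ℝ) ≤ j := j.cast_nonneg
  have n2 : ‖2 * t‖ ≤ 2 / 100 := by rw [norm_mul]; norm_num; linarith
  have n2y : ‖2 * (y - j)‖ ≤ 2 / 100 := by rw [norm_mul]; norm_num; linarith
  have b1 : ‖(1 - t + i) / (1 + 2 * t + 2 * i)‖ ≤ 11 / 10 := by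
    refine norm_div_le_of_near (a := 1 + i) (b := 1 + 2 * i - 2 / 100) (e := 1 / 100) ?_ ?_
      (by linarith) ?_
    · push_cast
      rw [show 1 - t + (i : ℂ) - (1 + i) = -t by ring, norm_neg]
      exact ht
    · simp; linarith
    · rw [abs_of_nonneg (by linarith)]; linarith
  have b2 : ‖(1 + 2 * y + i) / (1 + y + i)‖ ≤ 21 / 10 := by
    refine norm_div_le_of_near (a := 1 + 2 * j + i) (b := 1 + j + i - 1 / 100) (e := 2 / 100) ?_ ?_
      (by linarith) ?_
    · push_cast; convert n2y using 2; ring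
    · simp; linarith
    · rw [abs_of_nonneg (by linarith)]; linarith
  have b3 : ‖(1 - 2 * y + 2 * i) / (1 + t + y + i)‖ ≤ 21 / 10 := by
    refine norm_div_le_of_near (a := 1 - 2 * j + 2 * i) (b := 1 + j + i - 2 / 100) (e := 2 / 100)
      ?_ ?_ (by linarith) ?_
    · push_cast
      rw [show 1 - 2 * y + 2 * (i : ℂ) - (1 - 2 * j + 2 * i) = -(2 * (y - j)) by ring, norm_neg]
      exact n2y
    · simp; linarith
    · cases abs_cases (1 - 2 * (j : ℝ) + 2 * i) <;> linarith
  have b0 : ‖-((i + 1) * (i + 1 + 2 * t) / (3 * (3 * i + 2) * (3 * i + 1)) : ℂ)‖ ≤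
      1 / 20 * ((3 * i + 4) / (3 * i + 1)) := by
    have e1 : (3 * (3 * i + 2) * (3 * i + 1) : ℂ) =
      ((3 * (3 * i + 2) * (3 * i + 1) : ℝ) : ℂ) := by push_cast; rfl
    have e2 : ((i : ℂ) + 1) = ((i + 1 : ℝ) : ℂ) := by push_cast; rfl
    have e3 : ‖((i : ℂ) + 1) + 2 * t‖ ≤ (i + 1) * (51 / 50) := by
      have := norm_add_le ((i : ℂ) + 1) (2 * t)
      rw [e2, Complex.norm_real, Real.norm_eq_abs, abs_of_nonneg (by linarith)] at this
      rw [e2]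
      linarith
    rw [norm_neg, norm_div, norm_mul, e1, Complex.norm_real, Real.norm_eq_abs,
      abs_of_nonneg (by positivity : (0 : ℝ) ≤ 3 * (3 * i + 2) * (3 * i + 1))]
    have e4 : ‖(i : ℂ) + 1‖ = i + 1 := by
      rw [e2, Complex.norm_real, Real.norm_eq_abs, abs_of_nonneg (by linarith)]
    rw [e4, div_le_iff₀ (by positivity)]
    calc ((i : ℝ) + 1) * ‖(i : ℂ) + 1 + 2 * t‖ ≤ (i + 1) * ((i + 1) * (51 / 50)) := by gcongr
      _ ≤ 1 / 20 * (3 * i + 4) * (3 * (3 * i + 2)) := by nlinarith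
      _ = _ := by field_simp
  unfold wRatio
  simp only [norm_mul]
  calc _ ≤ (1 / 20 * ((3 * i + 4) / (3 * i + 1)) : ℝ) * (11 / 10) * (21 / 10) * (21 / 10) := by
        gcongr
    _ = (1 / 20 * (11 / 10) * (21 / 10) * (21 / 10)) * ((3 * i + 4) / (3 * i + 1)) := by ring
    _ ≤ 1 / 2 * ((3 * i + 4) / (3 * i + 1)) := by gcongr; norm_num

theorem geomBdd_wProd : GeomBdd fun t y n => ∏ i ∈ Finset.range n, wRatio t y i := by
  refine ⟨3, 1, by norm_num, fun t y n h => ?_⟩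
  rw [norm_prod]
  refine (Finset.prod_le_prod (fun _ _ => norm_nonneg _) fun i _ => norm_wRatio_le h i).trans ?_
  have : ∏ i ∈ Finset.range n, (1 / 2 * ((3 * (i : ℝ) + 4) / (3 * i + 1))) =
      (3 * n + 1) * (1 / 2) ^ n := by
    induction n with
    | zero => simp
    | succ n ih =>
      rw [Finset.prod_range_succ, ih]
      push_cast
      field_simp
      ring
  rw [this]
  gcongr
  linarith

theorem polyBdd_wKerFactor : PolyBdd fun t y n =>
    (1 + 2 * y + n) / (1 + t + y + n) * (1 / (2 * (3 * n + 1))) := by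
  have h1 : PolyBdd fun t y n => (1 + 2 * t + 1 * n) / (1 + t + y + n) :=
    (polyBdd_affine 1 2 1).div (by intros; simp; linarith)
  have h3 : PolyBdd fun t y n => 1 / (2 * (3 * n + 1)) :=
    (polyBdd_const 1).div (by intros; simp; linarith)
  refine (((polyBdd_const 2).sub h1).mul h3).congr fun t y n h => ?_
  have : 1 + t + y + n ≠ 0 := h.ne_zero n (by intros; simp; linarith)
  rw [sub_div' this]
  congr 2
  ring

theorem geomBdd_wKer : GeomBdd wKer := by
  obtain ⟨C, k, hC, h⟩ := geomBdd_wProd.mul polyBdd_wKerFactor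
  exact ⟨C, k, hC, fun t y n hn => by rw [wKer, mul_comm]; exact h t y n hn⟩

theorem polyBdd_wOm : PolyBdd wOm := by
  have h1 : PolyBdd fun t y n => (3 + 0 * t + 4 * n) / (1 + y + n) :=
    (polyBdd_affine 3 0 4).div (by intros; simp; linarith)
  have h2 : PolyBdd fun t y n => ((6 + 0 * t + 9 * n) * (3 + 0 * t + 4 * n)) / (1 + y + n) :=
    ((polyBdd_affine 6 0 9).mul (polyBdd_affine 3 0 4)).div (by intros; simp; linarith)
  have h3 : PolyBdd fun t y n => 1 / (3 * (3 * n + 2)) :=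
    (polyBdd_const 1).div (by intros; simp; linarith)
  have h4 : PolyBdd fun t y n => 1 / (1 + 2 * t + 2 * n) :=
    (polyBdd_const 1).div (by intros; simp; linarith)
  refine ((((((polyBdd_const 1).add h1).mul (polyBdd_affine 7 2 10)).sub h2).mul
    (h3.mul h4)).neg).congr fun t y n h => ?_
  have : 1 + y + n ≠ 0 := h.ne_zero n (by intros; simp; linarith)
  unfold wOm
  rw [one_add_div this, div_mul_div_comm, one_mul]
  congr 3
  · congr 2; ring
  · congr 1; ring

theorem polyBdd_wCert : PolyBdd wCert := by
  have h1 : PolyBdd fun t y n => (1 + 0 * t + 3 * n) / (2 * (1 + y + n)) :=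
    (polyBdd_affine 1 0 3).div (by intros; simp; linarith)
  have h2 : PolyBdd fun t y n => (1 + 2 * y - 2 * n)⁻¹ := by
    refine ⟨2, 0, by norm_num, fun t y n h => ?_⟩
    rw [norm_inv]
    have := inv_anti₀ (by norm_num) (h.odd_lower n)
    norm_num at this ⊢
    linarith
  refine (h1.mul h2).congr fun t y n h => ?_
  unfold wCert
  rw [← div_eq_mul_inv, div_div]
  congr 1
  ring

theorem geomBdd_wF : GeomBdd wF := geomBdd_wKer.mul polyBdd_wOm

theorem geomBdd_wG : GeomBdd wG := geomBdd_wKer.mul polyBdd_wCert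

theorem hasLim_wF (t : ℂ) (n : ℕ) : HasLim fun y => wF t y n := by
  have hr : ∀ i, HasLim fun y => wRatio t y i := fun i =>
    ((hasLim_const _).mul
      (.of_mobius (1 + i) 2 (1 + i) one_ne_zero fun y => by congr 1 <;> ring)).mul
      (.of_mobius (1 + 2 * i) (-2) (1 + t + i) one_ne_zero fun y => by congr 1 <;> ring)
  have hk : HasLim fun y => wKer t y n :=
    ((HasLim.of_mobius (1 + n) 2 (1 + t + n) one_ne_zero fun y => by congr 1 <;> ring).mul
      (hasLim_const _)).mul (HasLim.prod hr n)
  have h1 : HasLim fun y => (4 + y + 5 * n) / (1 + y + n) :=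
    .of_mobius (4 + 5 * n) 1 (1 + n) one_ne_zero fun y => by congr 1 <;> ring
  have h2 : HasLim fun y => -(3 * (3 * n + 2) * (4 * n + 3)) / (1 + y + n) :=
    .of_mobius (-(3 * (3 * n + 2) * (4 * n + 3))) 0 (1 + n) one_ne_zero fun y => by congr 1 <;> ring
  have h3 := (((h1.mul (hasLim_const (7 + 2 * t + 10 * n))).add h2).mul
    (hasLim_const (-(1 / (3 * (3 * n + 2) * (1 + 2 * t + 2 * n))))))
  refine hk.mul ?_
  convert h3 using 2 with y
  unfold wOm
  ring

noncomputable def wSum (v z : ℂ) : ℂ := ∑' n, wF v z n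

theorem wG_zero {t y : ℂ} (h : Near t y) : wG t y 0 = 1 / (4 * ((1 + y) * (1 + t + y))) := by
  have e1 : 1 + y ≠ 0 := h.ne_zero 0 (by intros; simp; linarith)
  have e2 : 1 + t + y ≠ 0 := h.ne_zero 0 (by intros; simp; linarith)
  have e3 : 1 + 2 * y ≠ 0 := h.ne_zero 0 (by intros; simp; linarith)
  simp only [wG, wKer, wCert, Finset.range_zero, Finset.prod_empty, Nat.cast_zero,
    mul_zero, add_zero, zero_add, mul_one, sub_zero]
  generalize hd : 1 + 2 * y = d at *
  field_simp
  ring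

theorem wSum_succ {t y : ℂ} (h : Near t y) :
    wSum t (y + 1) = wSum t y + -(1 / (4 * ((1 + y) * (1 + t + y)))) := by
  have h1 := geomBdd_wF.summable h
  have h2 := geomBdd_wF.summable h.succ
  have h3 := tsum_eq_of_telescoping (h2.sub h1) (wF_wz h) (geomBdd_wG.tendsto_zero h)
  rw [(h2.hasSum.sub h1.hasSum).tsum_eq, wG_zero h] at h3
  simp only [wSum]
  linear_combination h3

theorem tendsto_wSum_sums {t e e' : ℂ} (ht : ‖t‖ ≤ 1 / 100) (he : ‖e‖ ≤ 1 / 100)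
    (he' : ‖e'‖ ≤ 1 / 100) :
    Tendsto (fun N => ∑ j ∈ Finset.range N, (-(1 / (4 * ((1 + (e + j)) * (1 + t + (e + j))))) -
      -(1 / (4 * ((1 + (e' + j)) * (1 + t + (e' + j))))))) atTop (𝓝 (wSum t e' - wSum t e)) := by
  obtain ⟨L, hL⟩ := geomBdd_wF.exists_tsum_limit hasLim_wF ht
  exact tendsto_sum_increments (S := wSum t) (q := fun y => -(1 / (4 * ((1 + y) * (1 + t + y)))))
    (fun j => wSum_succ (Near.add_natCast ht he j))
    (fun j => wSum_succ (Near.add_natCast ht he' j)) (hL e he) (hL e' he')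

theorem hasJet_div_linear {N D : ℂ → ℂ} {p r q s : ℂ} (hq : q ≠ 0) (hN : ∀ x, N x = p + r * x)
    (hD : ∀ x, D x = q + s * x) :
    HasJet (fun x => N x / D x) (p / q) (r / q - p * s / q ^ 2)
      (-s / q * (r / q - p * s / q ^ 2)) (s ^ 2 / q ^ 2 * (r / q - p * s / q ^ 2)) := by
  have h := (hasJet_cubic p r 0 0).mul (hasJet_inv_linear hq s)
  refine (h.congr (Eventually.of_forall fun x => ?_)).of_eq ?_ ?_ ?_ ?_
  · simp only [hN, hD]; ring
  all_goals field_simp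
  all_goals ring

theorem hasJet_linear {N : ℂ → ℂ} {p r : ℂ} (hN : ∀ x, N x = p + r * x) : HasJet N p r 0 0 :=
  (hasJet_cubic p r 0 0).congr (Eventually.of_forall fun x => by simp [hN])

theorem hasLogJet_div_linear {N D : ℂ → ℂ} {p r q s : ℂ} (hp : p ≠ 0) (hq : q ≠ 0)
    (hN : ∀ x, N x = p + r * x) (hD : ∀ x, D x = q + s * x) :
    HasLogJet (fun x => N x / D x) (p / q) (r / p - s / q)
      (s ^ 2 / (2 * q ^ 2) - r ^ 2 / (2 * p ^ 2)) (r ^ 3 / (3 * p ^ 3) - s ^ 3 / (3 * q ^ 3)) :=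
  (((hasLogJet_linear hp r).mul (hasLogJet_inv_linear hq s)).congr fun x => by
    rw [hN, hD]; ring).of_eq (by ring) (by ring) (by ring) (by ring)

theorem add_one_ne (n : ℕ) : (n + 1 : ℂ) ≠ 0 := by exact_mod_cast n.succ_ne_zero
theorem two_mul_add_one_ne (n : ℕ) : (2 * n + 1 : ℂ) ≠ 0 := by exact_mod_cast (2 * n).succ_ne_zero
theorem three_mul_add_one_ne (n : ℕ) : (3 * n + 1 : ℂ) ≠ 0 := by
  exact_mod_cast (3 * n).succ_ne_zero
theorem three_mul_add_two_ne (n : ℕ) : (3 * n + 2 : ℂ) ≠ 0 := by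
  exact_mod_cast (3 * n + 1).succ_ne_zero

/-- The common value at `0` of the hypergeometric products. -/
noncomputable def tProd (n : ℕ) : ℂ :=
  ∏ i ∈ Finset.range n, -((i + 1) ^ 2 / (3 * (3 * i + 2) * (3 * i + 1)) : ℂ)

/-- The harmonic sum `∑ 1 / (i + 1) ^ k`. -/
noncomputable def pSum (k n : ℕ) : ℂ := ∑ i ∈ Finset.range n, 1 / (i + 1 : ℂ) ^ k

/-- The odd harmonic sum `∑ 1 / (2 i + 1) ^ k`. -/
noncomputable def oSum (k n : ℕ) : ℂ := ∑ i ∈ Finset.range n, 1 / (2 * i + 1 : ℂ) ^ k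

theorem hasLogJet_dRatio (α β : ℂ) (i : ℕ) :
    HasLogJet (fun x => dRatio (α * x) (-(β * x)) i)
      (-((i + 1) ^ 2 / (3 * (3 * i + 2) * (3 * i + 1))))
      (4 * (β - α) * (1 / (2 * i + 1) ^ 1))
      (-(4 * α ^ 2 + 3 * α * β + β ^ 2) / 2 * (1 / (i + 1) ^ 2) +
        (4 * β ^ 2 - 4 * α * β) / 2 * (1 / (2 * i + 1) ^ 2))
      ((7 * α ^ 3 - 7 / 8 * (α + β) ^ 3 - (α - β) ^ 3 / 8) / 3 * (1 / (i + 1) ^ 3) +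
        ((α + β) ^ 3 - (α - β) ^ 3 - 16 * α ^ 3 + 8 * β ^ 3) / 3 * (1 / (2 * i + 1) ^ 3)) := by
  have a := add_one_ne i
  have b := two_mul_add_one_ne i
  have c := three_mul_add_one_ne i
  have d := three_mul_add_two_ne i
  have e : (2 * (i + 1) : ℂ) ≠ 0 := mul_ne_zero two_ne_zero a
  have h1 := hasLogJet_div_linear (N := fun x => 1 + 2 * (α * x) + i)
    (D := fun x => 2 + 2 * (α * x) + 2 * i) (p := i + 1) (q := 2 * (i + 1)) (r := 2 * α)
    (s := 2 * α) a e (by intro; ring) (by intro; ring)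
  have h2 := hasLogJet_div_linear (N := fun x => 1 - 2 * (α * x) + 2 * i)
    (D := fun x => 1 + 2 * (α * x) + 2 * i) (p := 2 * i + 1) (q := 2 * i + 1) (r := -2 * α)
    (s := 2 * α) b b (by intro; ring) (by intro; ring)
  have h3 := hasLogJet_div_linear (N := fun x => -(β * x) - α * x - 2 * i - 1)
    (D := fun x => 1 + α * x + -(β * x) + 2 * i) (p := -(2 * i + 1)) (q := 2 * i + 1)
    (r := -(α + β)) (s := α - β) (neg_ne_zero.2 b) b (by intro; ring) (by intro; ring)
  have h4 := hasLogJet_div_linear (N := fun x => -(β * x) - α * x - 2 * i - 2)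
    (D := fun x => 2 + α * x + -(β * x) + 2 * i) (p := -(2 * (i + 1))) (q := 2 * (i + 1))
    (r := -(α + β)) (s := α - β) (neg_ne_zero.2 e) e (by intro; ring) (by intro; ring)
  have h5 := hasLogJet_div_linear (N := fun x => -(β * x) - α * x + i + 1)
    (D := fun x => 1 + 2 * -(β * x) + 2 * i) (p := i + 1) (q := 2 * i + 1)
    (r := -(α + β)) (s := -2 * β) a b (by intro; ring) (by intro; ring)
  refine ((((((hasLogJet_const (-((2 * i + 1) * (2 * i + 2) /
    (3 * (3 * i + 2) * (3 * i + 1))))).mul h1).mul h2).mul h3).mul h4).mul h5).of_eq ?_ ?_ ?_ ?_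
  all_goals
    field_simp
    try ring

theorem hasLogJet_wRatio (α γ : ℂ) (i : ℕ) :
    HasLogJet (fun x => wRatio (α * x) (γ * x) i)
      (-((i + 1) ^ 2 / (3 * (3 * i + 2) * (3 * i + 1))))
      (-2 * (α + γ) * (1 / (2 * i + 1) ^ 1))
      (-(5 * α ^ 2 + 3 * γ ^ 2 - (α + γ) ^ 2) / 2 * (1 / (i + 1) ^ 2) +
        (4 * α ^ 2 - 4 * γ ^ 2) / 2 * (1 / (2 * i + 1) ^ 2))
      ((7 * α ^ 3 + 7 * γ ^ 3 - (α + γ) ^ 3) / 3 * (1 / (i + 1) ^ 3) +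
        (-8 * γ ^ 3 - 8 * α ^ 3) / 3 * (1 / (2 * i + 1) ^ 3)) := by
  have a := add_one_ne i
  have b := two_mul_add_one_ne i
  have c := three_mul_add_one_ne i
  have d := three_mul_add_two_ne i
  have e : (3 * (3 * i + 2) * (3 * i + 1) : ℂ) ≠ 0 :=
    mul_ne_zero (mul_ne_zero three_ne_zero d) c
  have h1 := hasLogJet_div_linear (N := fun x => (i + 1) * (i + 1 + 2 * (α * x)))
    (D := fun _ => 3 * (3 * i + 2) * (3 * i + 1)) (p := (i + 1) ^ 2)
    (q := 3 * (3 * i + 2) * (3 * i + 1)) (r := 2 * α * (i + 1)) (s := 0) (pow_ne_zero 2 a) e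
    (by intro; ring) (by intro; ring)
  have h2 := hasLogJet_div_linear (N := fun x => 1 - α * x + i)
    (D := fun x => 1 + 2 * (α * x) + 2 * i) (p := i + 1) (q := 2 * i + 1) (r := -α)
    (s := 2 * α) a b (by intro; ring) (by intro; ring)
  have h3 := hasLogJet_div_linear (N := fun x => 1 + 2 * (γ * x) + i)
    (D := fun x => 1 + γ * x + i) (p := i + 1) (q := i + 1)
    (r := 2 * γ) (s := γ) a a (by intro; ring) (by intro; ring)
  have h4 := hasLogJet_div_linear (N := fun x => 1 - 2 * (γ * x) + 2 * i)
    (D := fun x => 1 + α * x + γ * x + i) (p := 2 * i + 1) (q := i + 1)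
    (r := -2 * γ) (s := α + γ) b a (by intro; ring) (by intro; ring)
  refine ((((((hasLogJet_const (-1)).mul h1).mul h2).mul h3).mul h4).congr
    (fun x => ?_)).of_eq ?_ ?_ ?_ ?_
  · simp only [wRatio]; ring
  · clear h1 h2 h3 h4 e
    generalize (i + 1 : ℂ) = u, (2 * i + 1 : ℂ) = v, (3 * i + 1 : ℂ) = w,
      (3 * i + 2 : ℂ) = z at *
    field_simp
  all_goals
    clear h1 h2 h3 h4 e
    field_simp
    try ring

/-- The product jets in terms of harmonic sums. -/
theorem HasLogJet.harmonic {F : ℕ → ℂ → ℂ} {l a₂ b₂ a₃ b₃ : ℂ} (n : ℕ)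
    (h : ∀ i, HasLogJet (F i) (-((i + 1) ^ 2 / (3 * (3 * i + 2) * (3 * i + 1)) : ℂ))
      (l * (1 / (2 * i + 1) ^ 1)) (a₂ * (1 / (i + 1) ^ 2) + b₂ * (1 / (2 * i + 1) ^ 2))
      (a₃ * (1 / (i + 1) ^ 3) + b₃ * (1 / (2 * i + 1) ^ 3))) :
    HasLogJet (fun x => ∏ i ∈ Finset.range n, F i x) (tProd n) (l * oSum 1 n)
      (a₂ * pSum 2 n + b₂ * oSum 2 n) (a₃ * pSum 3 n + b₃ * oSum 3 n) := by
  refine (HasLogJet.prod n h).of_eq rfl ?_ ?_ ?_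
  all_goals simp only [pSum, oSum, Finset.mul_sum, Finset.sum_add_distrib]

theorem hasJet_dLog (α β : ℂ) (n : ℕ) : ∃ d,
    HasJet (fun x => dLog (α * x) (-(β * x)) n) (4 * oSum 1 n + 1 / (2 * n + 1))
      (-α / 2 * pSum 2 n + (4 * β - 2 * α) * oSum 2 n - 2 * α / (2 * n + 1) ^ 2)
      (α ^ 2 / 2 * pSum 3 n + (4 * α ^ 2 + 8 * β ^ 2) * oSum 3 n + 4 * α ^ 2 / (2 * n + 1) ^ 3)
      d := by
  have key (i : ℕ) : HasJet (fun x => 1 / (2 * i + 1) - 1 / (2 * (i + 1)) +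
      1 / (2 + 2 * (α * x) + 2 * i) + 1 / (1 + 2 * (α * x) + 2 * i) +
      2 / (1 + 2 * -(β * x) + 2 * i)) (4 * (1 / (2 * i + 1) ^ 1))
      (-α / 2 * (1 / (i + 1) ^ 2) + (4 * β - 2 * α) * (1 / (2 * i + 1) ^ 2))
      (α ^ 2 / 2 * (1 / (i + 1) ^ 3) + (4 * α ^ 2 + 8 * β ^ 2) * (1 / (2 * i + 1) ^ 3))
      (-α ^ 3 / 2 * (1 / (i + 1) ^ 4) + (16 * β ^ 3 - 8 * α ^ 3) * (1 / (2 * i + 1) ^ 4)) := by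
    have a := add_one_ne i
    have b := two_mul_add_one_ne i
    have e : (2 * (i + 1) : ℂ) ≠ 0 := mul_ne_zero two_ne_zero a
    refine ((((hasJet_const (1 / (2 * i + 1) - 1 / (2 * (i + 1)))).add
      (hasJet_div_linear (N := fun _ => 1) (D := fun x => 2 + 2 * (α * x) + 2 * i) (p := 1)
        (q := 2 * (i + 1)) (r := 0) (s := 2 * α) e (by intro; ring) (by intro; ring))).add
      (hasJet_div_linear (N := fun _ => 1) (D := fun x => 1 + 2 * (α * x) + 2 * i) (p := 1)
        (q := 2 * i + 1) (r := 0) (s := 2 * α) b (by intro; ring) (by intro; ring))).add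
      (hasJet_div_linear (N := fun _ => 2) (D := fun x => 1 + 2 * -(β * x) + 2 * i) (p := 2)
        (q := 2 * i + 1) (r := 0) (s := -2 * β) b (by intro; ring) (by intro; ring))).of_eq
      ?_ ?_ ?_ ?_
    all_goals
      field_simp
      try ring
  have h := (HasJet.sum n key).add
    (hasJet_div_linear (N := fun _ => 1) (D := fun x => 1 + 2 * (α * x) + 2 * n) (p := 1)
      (q := 2 * n + 1) (r := 0) (s := 2 * α) (two_mul_add_one_ne n) (by intro; ring)
      (by intro; ring))
  refine ⟨_, h.of_eq ?_ ?_ ?_ rfl⟩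
  · simp only [oSum, Finset.mul_sum]
  all_goals
    have b := two_mul_add_one_ne n
    simp only [pSum, oSum, Finset.mul_sum, Finset.sum_add_distrib]
    field_simp
    try ring

noncomputable def dPre (t y : ℂ) (n : ℕ) : ℂ :=
  1 / (1 + t + y + 2 * n) * (1 / ((1 + 2 * t + 2 * n) * (3 * n + 1)))

/-- `dF` with its factor `y - t` removed. -/
noncomputable def dRow (t y : ℂ) (n : ℕ) : ℂ := dProd t y n * (dPre t y n * dOm t y n)

noncomputable def dRow' (t y : ℂ) (n : ℕ) : ℂ :=
  dProd t y n * (dPre t y n * dOm t y n * dLog t y n + dPre t y n * dOm' t y n)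

theorem hasJet_dPre (α β : ℂ) (n : ℕ) :
    HasJet (fun x => dPre (α * x) (-(β * x)) n) (1 / ((2 * n + 1) ^ 2 * (3 * n + 1)))
      (-(3 * α - β) / ((2 * n + 1) ^ 3 * (3 * n + 1)))
      ((7 * α ^ 2 - 4 * α * β + β ^ 2) / ((2 * n + 1) ^ 4 * (3 * n + 1)))
      (-(15 * α ^ 3 - 11 * α ^ 2 * β + 5 * α * β ^ 2 - β ^ 3) /
        ((2 * n + 1) ^ 5 * (3 * n + 1))) := by
  have b := two_mul_add_one_ne n
  have c := three_mul_add_one_ne n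
  refine ((hasJet_div_linear (N := fun _ => 1) (D := fun x => 1 + α * x + -(β * x) + 2 * n) (p := 1)
        (q := 2 * n + 1) (r := 0) (s := α - β) b (by intro; ring) (by intro; ring)).mul
      (hasJet_div_linear (N := fun _ => 1) (D := fun x => (1 + 2 * (α * x) + 2 * n) * (3 * n + 1))
        (p := 1) (q := (2 * n + 1) * (3 * n + 1)) (r := 0) (s := 2 * α * (3 * n + 1))
        (mul_ne_zero b c) (by intro; ring) (by intro; ring))).of_eq ?_ ?_ ?_ ?_
  all_goals
    generalize (2 * n + 1 : ℂ) = v, (3 * n + 1 : ℂ) = w at *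
    field_simp
    try ring

theorem hasJet_dA (α β : ℂ) (n : ℕ) : HasJet (fun x => dA (α * x) (-(β * x)) n)
      ((2 * n + 1) ^ 2 / (4 * (n + 1) * (3 * n + 2)))
      ((2 * n + 1) / (3 * n + 2) * ((1/2 * α + 1/2 * β) / (n + 1) +
        (-1/8 * α - 1/8 * β) / (n + 1) ^ 2))
      ((2 * n + 1) / (3 * n + 2) * ((-1/2 * α ^ 2 + 1/4 * α * β + 1/4 * β ^ 2) / (n + 1) ^ 2 +
        (5/16 * α ^ 2 - 1/16 * β ^ 2) / (n + 1) ^ 3))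
      ((2 * n + 1) / (3 * n + 2) * ((1/2 * α ^ 3 - 5/8 * α ^ 2 * β + 1/8 * β ^ 3) / (n + 1) ^ 3 +
        (-13/32 * α ^ 3 + 5/32 * α ^ 2 * β + 1/32 * α * β ^ 2 - 1/32 * β ^ 3) / (n + 1) ^ 4)) := by
  have a := add_one_ne n
  have d := three_mul_add_two_ne n
  have e : (2 * (n + 1) : ℂ) ≠ 0 := mul_ne_zero two_ne_zero a
  refine (((hasJet_div_linear (N := fun x => 1 + 2 * (α * x) + n)
        (D := fun x => 2 + 2 * (α * x) + 2 * n) (p := n + 1) (q := 2 * (n + 1)) (r := 2 * α)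
        (s := 2 * α) e (by intro; ring) (by intro; ring)).mul
      (hasJet_const ((1 + 2 * n) / (3 * n + 2)))).mul
      (hasJet_div_linear (N := fun x => 1 + α * x + 2 * n - -(β * x))
        (D := fun x => 2 + α * x + -(β * x) + 2 * n) (p := 2 * n + 1) (q := 2 * (n + 1))
        (r := α + β) (s := α - β) e (by intro; ring) (by intro; ring))).of_eq ?_ ?_ ?_ ?_
  all_goals
    generalize (n : ℂ) = m at *
    generalize u_def : m + 1 = u at *
    generalize z_def : 3 * m + 2 = z at *
    field_simp
    subst u_def z_def
    try ring

theorem hasJet_dQuot (β α : ℂ) (n : ℕ) :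
    HasJet (fun x => (2 + α * x + 2 * n - -(β * x)) / (1 + 2 * -(β * x) + 2 * n))
      (2 * (n + 1) / (2 * n + 1)) (((α + β) + (4 * β * (n + 1)) / (2 * n + 1)) / (2 * n + 1))
      (2 * β * ((α + β) + (4 * β * (n + 1)) / (2 * n + 1)) / (2 * n + 1) ^ 2)
      (4 * β ^ 2 * ((α + β) + (4 * β * (n + 1)) / (2 * n + 1)) / (2 * n + 1) ^ 3) := by
  have b := two_mul_add_one_ne n
  refine (hasJet_div_linear (p := 2 * (n + 1)) (q := 2 * n + 1) (r := α + β) (s := -2 * β) b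
    (by intro; ring) (by intro; ring)).of_eq rfl ?_ ?_ ?_
  all_goals
    generalize (n : ℂ) = m at *
    generalize v_def : 2 * m + 1 = v at *
    field_simp
    subst v_def
    try ring

theorem hasJet_dB (α β : ℂ) (n : ℕ) :
    HasJet (fun x => dB (α * x) (-(β * x)) n) ((26/3) +
        (20/3) * n +
        (2) / (2 * n + 1))
      (((14/3 * α + 4 * β) +
        (10/3 * α + 26/3 * β) / (2 * n + 1) +
        (4 * β) / (2 * n + 1) ^ 2)) (((4/3 * α ^ 2 + 20/3 * α * β + 8 * β ^ 2) / (2 * n + 1) +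
        (20/3 * α * β + 52/3 * β ^ 2) / (2 * n + 1) ^ 2 +
        (8 * β ^ 2) / (2 * n + 1) ^ 3)) (((8/3 * α ^ 2 * β + 40/3 * α * β ^ 2 + 16 * β ^ 3) / (2 * n + 1) ^ 2 +
        (40/3 * α * β ^ 2 + 104/3 * β ^ 3) / (2 * n + 1) ^ 3 +
        (16 * β ^ 3) / (2 * n + 1) ^ 4)) := by
  have b := two_mul_add_one_ne n
  refine ((hasJet_linear (p := 4 + 4 * n) (r := 2 * α) (by intro; ring)).add
    ((hasJet_linear (p := 2 / 3 * (5 + 4 * n)) (r := 4 / 3 * α) (by intro; ring)).mul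
      (hasJet_dQuot β α n))).of_eq ?_ ?_ ?_ ?_
  all_goals
    generalize (n : ℂ) = m at *
    generalize v_def : 2 * m + 1 = v at *
    field_simp
    subst v_def
    try ring

theorem hasJet_dPre_mul_dOm (α β : ℂ) (n : ℕ) :
    HasJet (fun x => dPre (α * x) (-(β * x)) n * dOm (α * x) (-(β * x)) n)
      (((14/3) +
        (2) / (2 * n + 1)) /
        ((3 * n + 1) * (3 * n + 2)))
      (((2/3 * α + 1/6 * β) / (n + 1) +
        (-20/3 * α + 29/3 * β) / (2 * n + 1) +
        (-4 * α + 5 * β) / (2 * n + 1) ^ 2) /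
        ((3 * n + 1) * (3 * n + 2)))
      (((8/3 * α ^ 2 - 2 * α * β - 2/3 * β ^ 2) / (n + 1) +
        (-2/3 * α ^ 2 + 1/12 * α * β + 1/12 * β ^ 2) / (n + 1) ^ 2 +
        (-16/3 * α ^ 2 + 4 * α * β + 4/3 * β ^ 2) / (2 * n + 1) +
        (40/3 * α ^ 2 - 15 * α * β + 59/3 * β ^ 2) / (2 * n + 1) ^ 2 +
        (8 * α ^ 2 - 13 * α * β + 11 * β ^ 2) / (2 * n + 1) ^ 3) /
        ((3 * n + 1) * (3 * n + 2)))
      (((-14/3 * α ^ 2 * β + 11/3 * α * β ^ 2 + β ^ 3) / (n + 1) +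
        (-8/3 * α ^ 3 + 3 * α ^ 2 * β - 1/3 * β ^ 3) / (n + 1) ^ 2 +
        (2/3 * α ^ 3 - 5/24 * α ^ 2 * β + 1/24 * β ^ 3) / (n + 1) ^ 3 +
        (28/3 * α ^ 2 * β - 22/3 * α * β ^ 2 - 2 * β ^ 3) / (2 * n + 1) +
        (32/3 * α ^ 3 - 64/3 * α ^ 2 * β + 22/3 * α * β ^ 2 + 10/3 * β ^ 3) / (2 * n + 1) ^ 2 +
        (-80/3 * α ^ 3 + 31 * α ^ 2 * β - 32 * α * β ^ 2 + 119/3 * β ^ 3) / (2 * n + 1) ^ 3 +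
        (-16 * α ^ 3 + 29 * α ^ 2 * β - 32 * α * β ^ 2 + 23 * β ^ 3) / (2 * n + 1) ^ 4) /
        ((3 * n + 1) * (3 * n + 2))) := by
  have a := add_one_ne n
  have b := two_mul_add_one_ne n
  have c := three_mul_add_one_ne n
  have d := three_mul_add_two_ne n
  refine ((hasJet_dPre α β n).mul ((hasJet_linear (p := 2 * (2 * n + 1)) (r := 2 * α)
    (by intro; ring)).add ((hasJet_dA α β n).mul (hasJet_dB α β n)))).of_eq ?_ ?_ ?_ ?_
  all_goals
    generalize (n : ℂ) = m at *
    generalize u_def : m + 1 = u at *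
    generalize v_def : 2 * m + 1 = v at *
    generalize w_def : 3 * m + 1 = w at *
    generalize z_def : 3 * m + 2 = z at *
    field_simp
    subst u_def v_def w_def z_def
    try ring

theorem hasJet_dPre_mul_dOm' (α β : ℂ) (n : ℕ) : ∃ d,
    HasJet (fun x => dPre (α * x) (-(β * x)) n * dOm' (α * x) (-(β * x)) n)
      (((1/6) / (n + 1) +
        (5) / (2 * n + 1) +
        (3) / (2 * n + 1) ^ 2) /
        ((3 * n + 1) * (3 * n + 2)))
      (((-4/3 * α - 7/6 * β) / (n + 1) +
        (-1/6 * α - 1/12 * β) / (n + 1) ^ 2 +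
        (8/3 * α + 7/3 * β) / (2 * n + 1) +
        (-2 * α + 80/3 * β) / (2 * n + 1) ^ 2 +
        (-6 * α + 16 * β) / (2 * n + 1) ^ 3) /
        ((3 * n + 1) * (3 * n + 2)))
      (((-4 * α ^ 2 + 35/6 * α * β + 9/2 * β ^ 2) / (n + 1) +
        (4/3 * α ^ 2 + 1/12 * α * β + 1/12 * β ^ 2) / (n + 1) ^ 2 +
        (-1/6 * α ^ 2 - 1/8 * α * β - 1/24 * β ^ 2) / (n + 1) ^ 3 +
        (8 * α ^ 2 - 35/3 * α * β - 9 * β ^ 2) / (2 * n + 1) +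
        (-40/3 * α ^ 2 + 34/3 * α * β + 26/3 * β ^ 2) / (2 * n + 1) ^ 2 +
        (4 * α ^ 2 - 62/3 * α * β + 90 * β ^ 2) / (2 * n + 1) ^ 3 +
        (12 * α ^ 2 - 38 * α * β + 54 * β ^ 2) / (2 * n + 1) ^ 4) /
        ((3 * n + 1) * (3 * n + 2)))
      d := by
  have a := add_one_ne n
  have b := two_mul_add_one_ne n
  have c := three_mul_add_one_ne n
  have d := three_mul_add_two_ne n
  have e : (2 * (n + 1) : ℂ) ≠ 0 := mul_ne_zero two_ne_zero a
  have hA := (hasJet_dA α β n).mul ((hasJet_const (1 / (2 * n + 1))).add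
    (hasJet_div_linear (N := fun _ => 1) (D := fun x => 2 + 2 * (α * x) + 2 * n) (p := 1)
      (q := 2 * (n + 1)) (r := 0) (s := 2 * α) e (by intro; ring) (by intro; ring)))
  have hB := ((hasJet_linear (N := fun x => (5 + 2 * (α * x) + 4 * n) / (3 * (n + 1)))
    (p := (5 + 4 * n) / (3 * (n + 1))) (r := 2 * α / (3 * (n + 1)))
    (by intro; field_simp; ring)).mul (hasJet_dQuot β α n)).mul
    ((hasJet_const 1).add (hasJet_div_linear (N := fun _ => 4 * (n + 1))
      (D := fun x => 1 + 2 * -(β * x) + 2 * n) (p := 4 * (n + 1)) (q := 2 * n + 1) (r := 0)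
      (s := -2 * β) b (by intro; ring) (by intro; ring)))
  refine ⟨_, ((hasJet_dPre α β n).mul ((hA.mul (hasJet_dB α β n)).add
    ((hasJet_dA α β n).mul hB))).of_eq ?_ ?_ ?_ rfl⟩
  all_goals
    clear hA hB
    generalize (n : ℂ) = m at *
    generalize u_def : m + 1 = u at *
    generalize v_def : 2 * m + 1 = v at *
    generalize w_def : 3 * m + 1 = w at *
    generalize z_def : 3 * m + 2 = z at *
    field_simp
    subst u_def v_def w_def z_def
    try ring

noncomputable def wPre (v z : ℂ) (n : ℕ) : ℂ :=
  (1 + 2 * z + n) / (1 + v + z + n) * (1 / (2 * (3 * n + 1))) * wOm v z n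

theorem hasJet_wPre (α γ : ℂ) (n : ℕ) :
    HasJet (fun x => wPre (α * x) (γ * x) n)
      (((-7/6) +
        (-1/2) / (2 * n + 1)) /
        ((3 * n + 1) * (3 * n + 2)))
      (((1/3 * α - 1/2 * γ) / (n + 1) +
        (7/3 * α - 2/3 * γ) / (2 * n + 1) +
        (α) / (2 * n + 1) ^ 2) /
        ((3 * n + 1) * (3 * n + 2)))
      (((2/3 * α ^ 2 - 1/3 * α * γ - γ ^ 2) / (n + 1) +
        (-1/3 * α ^ 2 - 1/6 * α * γ + 2/3 * γ ^ 2) / (n + 1) ^ 2 +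
        (-4/3 * α ^ 2 + 2/3 * α * γ + 2 * γ ^ 2) / (2 * n + 1) +
        (-14/3 * α ^ 2 + 4/3 * α * γ) / (2 * n + 1) ^ 2 +
        (-2 * α ^ 2) / (2 * n + 1) ^ 3) /
        ((3 * n + 1) * (3 * n + 2)))
      (((-8/3 * α ^ 2 * γ + 8/3 * γ ^ 3) / (n + 1) +
        (-2/3 * α ^ 3 - α ^ 2 * γ + α * γ ^ 2 + 4/3 * γ ^ 3) / (n + 1) ^ 2 +
        (1/3 * α ^ 3 + 1/2 * α ^ 2 * γ - 1/6 * α * γ ^ 2 - 5/6 * γ ^ 3) / (n + 1) ^ 3 +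
        (16/3 * α ^ 2 * γ - 16/3 * γ ^ 3) / (2 * n + 1) +
        (8/3 * α ^ 3 - 4/3 * α ^ 2 * γ - 4 * α * γ ^ 2) / (2 * n + 1) ^ 2 +
        (28/3 * α ^ 3 - 8/3 * α ^ 2 * γ) / (2 * n + 1) ^ 3 +
        (4 * α ^ 3) / (2 * n + 1) ^ 4) /
        ((3 * n + 1) * (3 * n + 2))) := by
  have a := add_one_ne n
  have b := two_mul_add_one_ne n
  have c := three_mul_add_one_ne n
  have d := three_mul_add_two_ne n
  have e : (3 * (3 * n + 2) * (2 * n + 1) : ℂ) ≠ 0 := mul_ne_zero (mul_ne_zero three_ne_zero d) b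
  have h := ((hasJet_div_linear (N := fun x => 1 + 2 * (γ * x) + n)
      (D := fun x => 1 + α * x + γ * x + n) (p := n + 1) (q := n + 1) (r := 2 * γ)
      (s := α + γ) a (by intro; ring) (by intro; ring)).mul
    (hasJet_const (1 / (2 * (3 * n + 1))))).mul
    ((((hasJet_div_linear (N := fun x => 4 + γ * x + 5 * n) (D := fun x => 1 + γ * x + n)
      (p := 5 * n + 4) (q := n + 1) (r := γ) (s := γ) a (by intro; ring) (by intro; ring)).mul
    (hasJet_linear (N := fun x => 7 + 2 * (α * x) + 10 * n) (p := 10 * n + 7) (r := 2 * α)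
      (by intro; ring))).sub
    (hasJet_div_linear (N := fun _ => 3 * (3 * n + 2) * (4 * n + 3)) (D := fun x => 1 + γ * x + n)
      (p := 3 * (3 * n + 2) * (4 * n + 3)) (q := n + 1) (r := 0) (s := γ) a
      (by intro; ring) (by intro; ring))).mul
    (hasJet_div_linear (N := fun _ => -1) (D := fun x => 3 * (3 * n + 2) * (1 + 2 * (α * x) + 2 * n))
      (p := -1) (q := 3 * (3 * n + 2) * (2 * n + 1)) (r := 0) (s := 3 * (3 * n + 2) * (2 * α)) e
      (by intro; ring) (by intro; ring)))
  refine (h.congr (Eventually.of_forall fun x => ?_)).of_eq ?_ ?_ ?_ ?_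
  · simp only [wPre, wOm]; ring
  all_goals
    clear h e
    generalize (n : ℂ) = m at *
    generalize u_def : m + 1 = u at *
    generalize v_def : 2 * m + 1 = v at *
    generalize w_def : 3 * m + 1 = w at *
    generalize z_def : 3 * m + 2 = z at *
    field_simp
    subst u_def v_def w_def z_def
    ring

theorem hasJet_dRow_zero_one (n : ℕ) : ∃ a b c,
    HasJet (fun x => dRow (0 * x) (-(1 * x)) n) a b c
      (tProd n / ((3 * n + 1) * (3 * n + 2)) * ((-28/3 - 4 / (2 * n + 1)) * pSum 2 n * oSum 1 n +
        (-1/12 / (n + 1) - 29/6 / (2 * n + 1) - 5/2 / (2 * n + 1) ^ 2) * pSum 2 n +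
        (-7/6 - 1/2 / (2 * n + 1)) * pSum 3 n +
        (448/9 + 64/3 / (2 * n + 1)) * oSum 1 n ^ 3 +
        (4/3 / (n + 1) + 232/3 / (2 * n + 1) + 40 / (2 * n + 1) ^ 2) * oSum 1 n ^ 2 +
        (112/3 + 16 / (2 * n + 1)) * oSum 1 n * oSum 2 n +
        (-8/3 / (n + 1) + 1/3 / (n + 1) ^ 2 + 16/3 / (2 * n + 1) + 236/3 / (2 * n + 1) ^ 2 + 44 / (2 * n + 1) ^ 3) * oSum 1 n +
        (1/3 / (n + 1) + 58/3 / (2 * n + 1) + 10 / (2 * n + 1) ^ 2) * oSum 2 n +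
        (140/9 + 20/3 / (2 * n + 1)) * oSum 3 n +
        (1 / (n + 1) - 1/3 / (n + 1) ^ 2 + 1/24 / (n + 1) ^ 3 - 2 / (2 * n + 1) + 10/3 / (2 * n + 1) ^ 2 + 119/3 / (2 * n + 1) ^ 3 + 23 / (2 * n + 1) ^ 4))) := by
  have h : HasJet _ _ _ _ _ := HasLogJet.harmonic n (hasLogJet_dRatio 0 1)
  refine ⟨_, _, _, (h.mul (hasJet_dPre_mul_dOm 0 1 n)).of_eq rfl rfl rfl ?_⟩
  ring

theorem hasJet_dRow_one_zero (n : ℕ) : ∃ a b c,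
    HasJet (fun x => dRow (1 * x) (-(0 * x)) n) a b c
      (tProd n / ((3 * n + 1) * (3 * n + 2)) * ((112/3 + 16 / (2 * n + 1)) * pSum 2 n * oSum 1 n +
        (-4/3 / (n + 1) + 40/3 / (2 * n + 1) + 8 / (2 * n + 1) ^ 2) * pSum 2 n +
        (28/3 + 4 / (2 * n + 1)) * pSum 3 n +
        (-448/9 - 64/3 / (2 * n + 1)) * oSum 1 n ^ 3 +
        (16/3 / (n + 1) - 160/3 / (2 * n + 1) - 32 / (2 * n + 1) ^ 2) * oSum 1 n ^ 2 +
        (-32/3 / (n + 1) + 8/3 / (n + 1) ^ 2 + 64/3 / (2 * n + 1) - 160/3 / (2 * n + 1) ^ 2 - 32 / (2 * n + 1) ^ 3) * oSum 1 n +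
        (-224/9 - 32/3 / (2 * n + 1)) * oSum 3 n +
        (-8/3 / (n + 1) ^ 2 + 2/3 / (n + 1) ^ 3 + 32/3 / (2 * n + 1) ^ 2 - 80/3 / (2 * n + 1) ^ 3 - 16 / (2 * n + 1) ^ 4))) := by
  have h : HasJet _ _ _ _ _ := HasLogJet.harmonic n (hasLogJet_dRatio 1 0)
  refine ⟨_, _, _, (h.mul (hasJet_dPre_mul_dOm 1 0 n)).of_eq rfl rfl rfl ?_⟩
  ring

theorem hasJet_dRow_one_one (n : ℕ) : ∃ a b c,
    HasJet (fun x => dRow (1 * x) (-(1 * x)) n) a b c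
      (tProd n / ((3 * n + 1) * (3 * n + 2)) * ((-10/3 / (n + 1) - 12 / (2 * n + 1) - 4 / (2 * n + 1) ^ 2) * pSum 2 n +
        (1/2 / (n + 1) ^ 3 + 12 / (2 * n + 1) ^ 3 + 4 / (2 * n + 1) ^ 4))) := by
  have h : HasJet _ _ _ _ _ := HasLogJet.harmonic n (hasLogJet_dRatio 1 1)
  refine ⟨_, _, _, (h.mul (hasJet_dPre_mul_dOm 1 1 n)).of_eq rfl rfl rfl ?_⟩
  ring

theorem hasJet_dRow'_zero_one (n : ℕ) : ∃ a b d,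
    HasJet (fun x => dRow' (0 * x) (-(1 * x)) n) a b
      (tProd n / ((3 * n + 1) * (3 * n + 2)) * ((-28/3 - 4 / (2 * n + 1)) * pSum 2 n * oSum 1 n +
        (-1/12 / (n + 1) - 29/6 / (2 * n + 1) - 5/2 / (2 * n + 1) ^ 2) * pSum 2 n +
        (448/3 + 64 / (2 * n + 1)) * oSum 1 n ^ 3 +
        (4 / (n + 1) + 232 / (2 * n + 1) + 120 / (2 * n + 1) ^ 2) * oSum 1 n ^ 2 +
        (112 + 48 / (2 * n + 1)) * oSum 1 n * oSum 2 n +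
        (-8 / (n + 1) + 16 / (2 * n + 1) + 224 / (2 * n + 1) ^ 2 + 128 / (2 * n + 1) ^ 3) * oSum 1 n +
        (1 / (n + 1) + 58 / (2 * n + 1) + 30 / (2 * n + 1) ^ 2) * oSum 2 n +
        (112/3 + 16 / (2 * n + 1)) * oSum 3 n +
        (5 / (n + 1) - 1/24 / (n + 1) ^ 3 - 10 / (2 * n + 1) + 10 / (2 * n + 1) ^ 2 + 329/3 / (2 * n + 1) ^ 3 + 65 / (2 * n + 1) ^ 4))) d := by
  have h : HasJet _ _ _ _ _ := HasLogJet.harmonic n (hasLogJet_dRatio 0 1)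
  obtain ⟨d, hd⟩ := hasJet_dPre_mul_dOm' 0 1 n
  obtain ⟨d', hd'⟩ := hasJet_dLog 0 1 n
  refine ⟨_, _, _, (h.mul (((hasJet_dPre_mul_dOm 0 1 n).mul hd').add hd)).of_eq
    rfl rfl ?_ rfl⟩
  clear h hd hd'
  have a := add_one_ne n
  have b := two_mul_add_one_ne n
  have c := three_mul_add_one_ne n
  have d := three_mul_add_two_ne n
  generalize tProd n = T, pSum 2 n = P, pSum 3 n = P', oSum 1 n = O, oSum 2 n = O', oSum 3 n = O''
  generalize (n : ℂ) = m at *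
  generalize u_def : m + 1 = u at *
  generalize v_def : 2 * m + 1 = v at *
  generalize w_def : 3 * m + 1 = w at *
  generalize z_def : 3 * m + 2 = z at *
  field_simp
  subst u_def v_def w_def z_def
  ring

theorem hasJet_dRow'_one_zero (n : ℕ) : ∃ a b d,
    HasJet (fun x => dRow' (1 * x) (-(0 * x)) n) a b
      (tProd n / ((3 * n + 1) * (3 * n + 2)) * ((-28 - 12 / (2 * n + 1)) * pSum 2 n * oSum 1 n +
        (-2/3 / (n + 1) - 16 / (2 * n + 1) - 8 / (2 * n + 1) ^ 2) * pSum 2 n +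
        (7/3 + 1 / (2 * n + 1)) * pSum 3 n +
        (448/3 + 64 / (2 * n + 1)) * oSum 1 n ^ 3 +
        (-28/3 / (n + 1) + 184 / (2 * n + 1) + 104 / (2 * n + 1) ^ 2) * oSum 1 n ^ 2 +
        (112/3 + 16 / (2 * n + 1)) * oSum 1 n * oSum 2 n +
        (56/3 / (n + 1) - 2 / (n + 1) ^ 2 - 112/3 / (2 * n + 1) + 376/3 / (2 * n + 1) ^ 2 + 88 / (2 * n + 1) ^ 3) * oSum 1 n +
        (-4/3 / (n + 1) + 40/3 / (2 * n + 1) + 8 / (2 * n + 1) ^ 2) * oSum 2 n +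
        (56/3 + 8 / (2 * n + 1)) * oSum 3 n +
        (-20/3 / (n + 1) + 2 / (n + 1) ^ 2 - 1/6 / (n + 1) ^ 3 + 40/3 / (2 * n + 1) - 64/3 / (2 * n + 1) ^ 2 + 148/3 / (2 * n + 1) ^ 3 + 36 / (2 * n + 1) ^ 4))) d := by
  have h : HasJet _ _ _ _ _ := HasLogJet.harmonic n (hasLogJet_dRatio 1 0)
  obtain ⟨d, hd⟩ := hasJet_dPre_mul_dOm' 1 0 n
  obtain ⟨d', hd'⟩ := hasJet_dLog 1 0 n
  refine ⟨_, _, _, (h.mul (((hasJet_dPre_mul_dOm 1 0 n).mul hd').add hd)).of_eq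
    rfl rfl ?_ rfl⟩
  clear h hd hd'
  have a := add_one_ne n
  have b := two_mul_add_one_ne n
  have c := three_mul_add_one_ne n
  have d := three_mul_add_two_ne n
  generalize tProd n = T, pSum 2 n = P, pSum 3 n = P', oSum 1 n = O, oSum 2 n = O', oSum 3 n = O''
  generalize (n : ℂ) = m at *
  generalize u_def : m + 1 = u at *
  generalize v_def : 2 * m + 1 = v at *
  generalize w_def : 3 * m + 1 = w at *
  generalize z_def : 3 * m + 2 = z at *
  field_simp
  subst u_def v_def w_def z_def
  ring

theorem hasJet_dRow'_one_one (n : ℕ) : ∃ a b d,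
    HasJet (fun x => dRow' (1 * x) (-(1 * x)) n) a b
      (tProd n / ((3 * n + 1) * (3 * n + 2)) * ((-224/3 - 32 / (2 * n + 1)) * pSum 2 n * oSum 1 n +
        (-13/12 / (n + 1) - 241/6 / (2 * n + 1) - 41/2 / (2 * n + 1) ^ 2) * pSum 2 n +
        (7/3 + 1 / (2 * n + 1)) * pSum 3 n +
        (-2 / (n + 1) ^ 2 + 72 / (2 * n + 1) ^ 2 + 24 / (2 * n + 1) ^ 3) * oSum 1 n +
        (5/3 / (n + 1) + 6 / (2 * n + 1) + 2 / (2 * n + 1) ^ 2) * oSum 2 n +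
        (56 + 24 / (2 * n + 1)) * oSum 3 n +
        (17/3 / (n + 1) + 2 / (n + 1) ^ 2 - 1/3 / (n + 1) ^ 3 - 34/3 / (2 * n + 1) + 10/3 / (2 * n + 1) ^ 2 + 104 / (2 * n + 1) ^ 3 + 40 / (2 * n + 1) ^ 4))) d := by
  have h : HasJet _ _ _ _ _ := HasLogJet.harmonic n (hasLogJet_dRatio 1 1)
  obtain ⟨d, hd⟩ := hasJet_dPre_mul_dOm' 1 1 n
  obtain ⟨d', hd'⟩ := hasJet_dLog 1 1 n
  refine ⟨_, _, _, (h.mul (((hasJet_dPre_mul_dOm 1 1 n).mul hd').add hd)).of_eq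
    rfl rfl ?_ rfl⟩
  clear h hd hd'
  have a := add_one_ne n
  have b := two_mul_add_one_ne n
  have c := three_mul_add_one_ne n
  have d := three_mul_add_two_ne n
  generalize tProd n = T, pSum 2 n = P, pSum 3 n = P', oSum 1 n = O, oSum 2 n = O', oSum 3 n = O''
  generalize (n : ℂ) = m at *
  generalize u_def : m + 1 = u at *
  generalize v_def : 2 * m + 1 = v at *
  generalize w_def : 3 * m + 1 = w at *
  generalize z_def : 3 * m + 2 = z at *
  field_simp
  subst u_def v_def w_def z_def
  ring

theorem hasJet_wF_two_three (n : ℕ) : ∃ a b c,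
    HasJet (fun x => wF (2 * x) (3 * x) n) a b c
      (tProd n / ((3 * n + 1) * (3 * n + 2)) * ((-385/3 - 55 / (2 * n + 1)) * pSum 2 n * oSum 1 n +
        (55/6 / (n + 1) - 88/3 / (2 * n + 1) - 22 / (2 * n + 1) ^ 2) * pSum 2 n +
        (-140/3 - 20 / (2 * n + 1)) * pSum 3 n +
        (1750/9 + 250/3 / (2 * n + 1)) * oSum 1 n ^ 3 +
        (-125/3 / (n + 1) + 400/3 / (2 * n + 1) + 100 / (2 * n + 1) ^ 2) * oSum 1 n ^ 2 +
        (-350/3 - 50 / (2 * n + 1)) * oSum 1 n * oSum 2 n +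
        (250/3 / (n + 1) - 110/3 / (n + 1) ^ 2 - 500/3 / (2 * n + 1) + 320/3 / (2 * n + 1) ^ 2 + 80 / (2 * n + 1) ^ 3) * oSum 1 n +
        (25/3 / (n + 1) - 80/3 / (2 * n + 1) - 20 / (2 * n + 1) ^ 2) * oSum 2 n +
        (980/9 + 140/3 / (2 * n + 1)) * oSum 3 n +
        (40 / (n + 1) + 110/3 / (n + 1) ^ 2 - 101/6 / (n + 1) ^ 3 - 80 / (2 * n + 1) - 200/3 / (2 * n + 1) ^ 2 + 128/3 / (2 * n + 1) ^ 3 + 32 / (2 * n + 1) ^ 4))) := by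
  have h : HasJet _ _ _ _ _ := HasLogJet.harmonic n (hasLogJet_wRatio 2 3)
  refine ⟨_, _, _, ((h.mul (hasJet_wPre 2 3 n)).congr
    (Eventually.of_forall fun x => ?_)).of_eq rfl rfl rfl ?_⟩
  · simp only [wF, wKer, wPre]
    ring
  · ring

theorem hasJet_wF_two_neg_one (n : ℕ) : ∃ a b c,
    HasJet (fun x => wF (2 * x) (-1 * x) n) a b c
      (tProd n / ((3 * n + 1) * (3 * n + 2)) * ((-77/3 - 11 / (2 * n + 1)) * pSum 2 n * oSum 1 n +
        (-77/6 / (n + 1) - 176/3 / (2 * n + 1) - 22 / (2 * n + 1) ^ 2) * pSum 2 n +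
        (-56/3 - 8 / (2 * n + 1)) * pSum 3 n +
        (14/9 + 2/3 / (2 * n + 1)) * oSum 1 n ^ 3 +
        (7/3 / (n + 1) + 32/3 / (2 * n + 1) + 4 / (2 * n + 1) ^ 2) * oSum 1 n ^ 2 +
        (14 + 6 / (2 * n + 1)) * oSum 1 n * oSum 2 n +
        (-14/3 / (n + 1) + 2/3 / (n + 1) ^ 2 + 28/3 / (2 * n + 1) + 128/3 / (2 * n + 1) ^ 2 + 16 / (2 * n + 1) ^ 3) * oSum 1 n +
        (7 / (n + 1) + 32 / (2 * n + 1) + 12 / (2 * n + 1) ^ 2) * oSum 2 n +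
        (196/9 + 28/3 / (2 * n + 1)) * oSum 3 n +
        (8 / (n + 1) - 2/3 / (n + 1) ^ 2 + 7/6 / (n + 1) ^ 3 - 16 / (2 * n + 1) + 56/3 / (2 * n + 1) ^ 2 + 256/3 / (2 * n + 1) ^ 3 + 32 / (2 * n + 1) ^ 4))) := by
  have h : HasJet _ _ _ _ _ := HasLogJet.harmonic n (hasLogJet_wRatio 2 (-1))
  refine ⟨_, _, _, ((h.mul (hasJet_wPre 2 (-1) n)).congr
    (Eventually.of_forall fun x => ?_)).of_eq rfl rfl rfl ?_⟩
  · simp only [wF, wKer, wPre]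
    ring
  · ring

theorem polyBdd_dPre : PolyBdd dPre := by
  have h1 : PolyBdd fun t y n => 1 / (1 + t + y + 2 * n) :=
    (polyBdd_const 1).div (by intros; simp; linarith)
  have h2 : PolyBdd fun t y n => 1 / (1 + 2 * t + 2 * n) :=
    (polyBdd_const 1).div (by intros; simp; linarith)
  have h3 : PolyBdd fun t y n => 1 / (3 * n + 1) :=
    (polyBdd_const 1).div (by intros; simp; linarith)
  refine (h1.mul (h2.mul h3)).congr fun t y n h => ?_
  rw [dPre, div_mul_div_comm 1 (1 + 2 * t + 2 * (n : ℂ)), one_mul]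

theorem geomBdd_dRow : GeomBdd dRow := geomBdd_dProd.mul (polyBdd_dPre.mul polyBdd_dOm)

theorem geomBdd_dRow' : GeomBdd dRow' :=
  geomBdd_dProd.mul (((polyBdd_dPre.mul polyBdd_dOm).mul polyBdd_dLog).add
    (polyBdd_dPre.mul polyBdd_dOm'))

theorem differentiableAt_dProd {f g : ℂ → ℂ} {x : ℂ} (hf : DifferentiableAt ℂ f x)
    (hg : DifferentiableAt ℂ g x) (h : Near (f x) (g x)) (n : ℕ) :
    DifferentiableAt ℂ (fun x => dProd (f x) (g x) n) x := by
  unfold dProd dRatio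
  fun_prop (disch := exact h.ne_zero ‹ℕ› (by intros; simp; linarith))

theorem differentiableAt_dPre {f g : ℂ → ℂ} {x : ℂ} (hf : DifferentiableAt ℂ f x)
    (hg : DifferentiableAt ℂ g x) (h : Near (f x) (g x)) (n : ℕ) :
    DifferentiableAt ℂ (fun x => dPre (f x) (g x) n) x := by
  unfold dPre
  fun_prop (disch := first
    | exact h.ne_zero ‹ℕ› (by intros; simp; linarith)
    | exact mul_ne_zero (h.ne_zero n (by intros; simp; linarith)) (three_mul_add_one_ne n))

theorem differentiableAt_dOm {f g : ℂ → ℂ} {x : ℂ} (hf : DifferentiableAt ℂ f x)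
    (hg : DifferentiableAt ℂ g x) (h : Near (f x) (g x)) (n : ℕ) :
    DifferentiableAt ℂ (fun x => dOm (f x) (g x) n) x := by
  unfold dOm dA dB
  fun_prop (disch := exact h.ne_zero ‹ℕ› (by intros; simp; linarith))

theorem differentiableAt_dOm' {f g : ℂ → ℂ} {x : ℂ} (hf : DifferentiableAt ℂ f x)
    (hg : DifferentiableAt ℂ g x) (h : Near (f x) (g x)) (n : ℕ) :
    DifferentiableAt ℂ (fun x => dOm' (f x) (g x) n) x := by
  unfold dOm' dA' dB' dA dB
  fun_prop (disch := exact h.ne_zero ‹ℕ› (by intros; simp; linarith))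

theorem differentiableAt_dLog {f g : ℂ → ℂ} {x : ℂ} (hf : DifferentiableAt ℂ f x)
    (hg : DifferentiableAt ℂ g x) (h : Near (f x) (g x)) (n : ℕ) :
    DifferentiableAt ℂ (fun x => dLog (f x) (g x) n) x := by
  unfold dLog
  fun_prop (disch := exact h.ne_zero ‹ℕ› (by intros; simp; linarith))

theorem differentiableAt_dRow {f g : ℂ → ℂ} {x : ℂ} (hf : DifferentiableAt ℂ f x)
    (hg : DifferentiableAt ℂ g x) (h : Near (f x) (g x)) (n : ℕ) :
    DifferentiableAt ℂ (fun x => dRow (f x) (g x) n) x :=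
  (differentiableAt_dProd hf hg h n).mul ((differentiableAt_dPre hf hg h n).mul (differentiableAt_dOm hf hg h n))

theorem differentiableAt_dRow' {f g : ℂ → ℂ} {x : ℂ} (hf : DifferentiableAt ℂ f x)
    (hg : DifferentiableAt ℂ g x) (h : Near (f x) (g x)) (n : ℕ) :
    DifferentiableAt ℂ (fun x => dRow' (f x) (g x) n) x :=
  (differentiableAt_dProd hf hg h n).mul ((((differentiableAt_dPre hf hg h n).mul
    (differentiableAt_dOm hf hg h n)).mul (differentiableAt_dLog hf hg h n)).add
    ((differentiableAt_dPre hf hg h n).mul (differentiableAt_dOm' hf hg h n)))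

theorem differentiableAt_wF {f g : ℂ → ℂ} {x : ℂ} (hf : DifferentiableAt ℂ f x)
    (hg : DifferentiableAt ℂ g x) (h : Near (f x) (g x)) (n : ℕ) :
    DifferentiableAt ℂ (fun x => wF (f x) (g x) n) x := by
  unfold wF wKer wOm wRatio
  fun_prop (disch := first
    | exact h.ne_zero ‹ℕ› (by intros; simp; linarith)
    | exact mul_ne_zero (mul_ne_zero three_ne_zero (three_mul_add_two_ne n))
        (h.ne_zero n (by intros; simp; linarith)))

/-- The combination of rows whose cubic coefficient is the summand of the series. -/
noncomputable def comb (n : ℕ) (x : ℂ) : ℂ :=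
  7 * dRow (0 * x) (-(1 * x)) n + 67 / 48 * dRow (1 * x) (-(0 * x)) n +
    11 / 24 * dRow (1 * x) (-(1 * x)) n - 13 / 6 * (x * dRow' (0 * x) (-(1 * x)) n) -
    1 / 6 * (x * dRow' (1 * x) (-(1 * x)) n) + 1 / 12 * (x * dRow' (1 * x) (-(0 * x)) n) +
    1 / 6 * (wF (2 * x) (3 * x) n - wF (2 * x) (-1 * x) n)

noncomputable def sunTerm (n : ℕ) : ℂ :=
  tProd (n + 1) * (136 / (2 * (n + 1)) ^ 5 + 96 / ((2 * (n + 1)) ^ 2 * (2 * n + 1) ^ 3) +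
    48 / (2 * (n + 1) * (2 * n + 1) ^ 4))

theorem sunTerm_eq (n : ℕ) : sunTerm n = tProd n / ((3 * n + 1) * (3 * n + 2)) *
    (-17 / 12 / (n + 1) ^ 3 - 12 / (2 * n + 1) ^ 3 - 4 / (2 * n + 1) ^ 4) := by
  rw [sunTerm, tProd, Finset.prod_range_succ, ← tProd]
  have a := add_one_ne n
  have b := two_mul_add_one_ne n
  have c := three_mul_add_one_ne n
  have d := three_mul_add_two_ne n
  generalize tProd n = T
  generalize (n : ℂ) = m at *
  generalize u_def : m + 1 = u at *
  generalize v_def : 2 * m + 1 = v at *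
  generalize w_def : 3 * m + 1 = w at *
  generalize z_def : 3 * m + 2 = z at *
  field_simp
  subst u_def v_def w_def z_def
  ring

theorem HasJet.id_mul {f : ℂ → ℂ} {a b c d : ℂ} (h : HasJet f a b c d) :
    HasJet (fun x => x * f x) 0 a b c :=
  ((hasJet_linear (N := fun x => x) (p := 0) (r := 1) (by intro; ring)).mul h).of_eq
    (by ring) (by ring) (by ring) (by ring)

theorem hasJet_comb (n : ℕ) : ∃ a b c, HasJet (comb n) a b c (sunTerm n) := by
  obtain ⟨_, _, _, h₁⟩ := hasJet_dRow_zero_one n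
  obtain ⟨_, _, _, h₂⟩ := hasJet_dRow_one_zero n
  obtain ⟨_, _, _, h₃⟩ := hasJet_dRow_one_one n
  obtain ⟨_, _, _, h₄⟩ := hasJet_dRow'_zero_one n
  obtain ⟨_, _, _, h₅⟩ := hasJet_dRow'_one_one n
  obtain ⟨_, _, _, h₆⟩ := hasJet_dRow'_one_zero n
  obtain ⟨_, _, _, h₇⟩ := hasJet_wF_two_three n
  obtain ⟨_, _, _, h₈⟩ := hasJet_wF_two_neg_one n
  refine ⟨_, _, _, (((((((h₁.const_mul 7).add (h₂.const_mul (67 / 48))).add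
    (h₃.const_mul (11 / 24))).sub (h₄.id_mul.const_mul (13 / 6))).sub
    (h₅.id_mul.const_mul (1 / 6))).add (h₆.id_mul.const_mul (1 / 12))).add
    ((h₇.sub h₈).const_mul (1 / 6))).of_eq rfl rfl rfl ?_⟩
  rw [sunTerm_eq]
  ring

theorem near_of_norm_lt {α β x : ℂ} (hα : ‖α‖ ≤ 3) (hβ : ‖β‖ ≤ 3)
    (hx : x ∈ Metric.ball (0 : ℂ) (1 / 400)) : Near (α * x) (β * x) := by
  have hx : ‖x‖ < 1 / 400 := by simpa using hx
  have key (γ : ℂ) (h : ‖γ‖ ≤ 3) : ‖γ * x‖ ≤ 1 / 100 := by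
    rw [norm_mul]
    nlinarith [norm_nonneg x, norm_nonneg γ]
  exact ⟨key α hα, 0, by simpa using key β hβ⟩

theorem near_neg_of_norm_lt {α β x : ℂ} (hα : ‖α‖ ≤ 3) (hβ : ‖β‖ ≤ 3)
    (hx : x ∈ Metric.ball (0 : ℂ) (1 / 400)) : Near (α * x) (-(β * x)) := by
  rw [← neg_mul]
  exact near_of_norm_lt hα (by rwa [norm_neg]) hx

/-- The sum over `n` of `comb n`, evaluated row by row. -/
noncomputable def combSum (x : ℂ) : ℂ :=
  7 * ∑' n, dRow (0 * x) (-(1 * x)) n + 67 / 48 * ∑' n, dRow (1 * x) (-(0 * x)) n +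
    11 / 24 * ∑' n, dRow (1 * x) (-(1 * x)) n - 13 / 6 * (x * ∑' n, dRow' (0 * x) (-(1 * x)) n) -
    1 / 6 * (x * ∑' n, dRow' (1 * x) (-(1 * x)) n) +
    1 / 12 * (x * ∑' n, dRow' (1 * x) (-(0 * x)) n) +
    1 / 6 * (wSum (2 * x) (3 * x) - wSum (2 * x) (-1 * x))

theorem hasSum_comb {x : ℂ} (hx : x ∈ Metric.ball (0 : ℂ) (1 / 400)) :
    HasSum (fun n => comb n x) (combSum x) := by
  have n₁ : Near (0 * x) (-(1 * x)) := near_neg_of_norm_lt (by simp) (by simp) hx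
  have n₂ : Near (1 * x) (-(0 * x)) := near_neg_of_norm_lt (by simp) (by simp) hx
  have n₃ : Near (1 * x) (-(1 * x)) := near_neg_of_norm_lt (by simp) (by simp) hx
  have n₄ : Near (2 * x) (3 * x) := near_of_norm_lt (by norm_num) (by norm_num) hx
  have n₅ : Near (2 * x) (-1 * x) := near_of_norm_lt (by norm_num) (by norm_num) hx
  have r {t y : ℂ} (h : Near t y) := (geomBdd_dRow.summable h).hasSum
  have r' {t y : ℂ} (h : Near t y) := (geomBdd_dRow'.summable h).hasSum
  have w {t y : ℂ} (h : Near t y) := (geomBdd_wF.summable h).hasSum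
  exact ((((((((r n₁).mul_left 7).add ((r n₂).mul_left (67 / 48))).add
    ((r n₃).mul_left (11 / 24))).sub (((r' n₁).mul_left x).mul_left (13 / 6))).sub
    (((r' n₃).mul_left x).mul_left (1 / 6))).add (((r' n₂).mul_left x).mul_left (1 / 12))).add
    (((w n₄).sub (w n₅)).mul_left (1 / 6)))

theorem exists_bound_comb : ∃ u : ℕ → ℝ, Summable u ∧
    ∀ n, ∀ x ∈ Metric.ball (0 : ℂ) (1 / 400), ‖comb n x‖ ≤ u n := by
  obtain ⟨u, hu, hu'⟩ := geomBdd_dRow.exists_bound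
  obtain ⟨v, hv, hv'⟩ := geomBdd_dRow'.exists_bound
  obtain ⟨w, hw, hw'⟩ := geomBdd_wF.exists_bound
  refine ⟨fun n => 9 * u n + 3 * v n + w n,
    ((hu.mul_left 9).add (hv.mul_left 3)).add hw, fun n x hx => ?_⟩
  have n₁ : Near (0 * x) (-(1 * x)) := near_neg_of_norm_lt (by simp) (by simp) hx
  have n₂ : Near (1 * x) (-(0 * x)) := near_neg_of_norm_lt (by simp) (by simp) hx
  have n₃ : Near (1 * x) (-(1 * x)) := near_neg_of_norm_lt (by simp) (by simp) hx
  have n₄ : Near (2 * x) (3 * x) := near_of_norm_lt (by norm_num) (by norm_num) hx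
  have n₅ : Near (2 * x) (-1 * x) := near_of_norm_lt (by norm_num) (by norm_num) hx
  have hx' : ‖x‖ ≤ 1 := by
    have : ‖x‖ < 1 / 400 := by simpa using hx
    linarith
  have k {t y : ℂ} (h : Near t y) : ‖x * dRow' t y n‖ ≤ v n := by
    rw [norm_mul]
    nlinarith [hv' t y n h, norm_nonneg x, norm_nonneg (dRow' t y n)]
  have u₁ := hu' _ _ n n₁
  have u₂ := hu' _ _ n n₂
  have u₃ := hu' _ _ n n₃
  have v₁ := k n₁
  have v₂ := k n₂
  have v₃ := k n₃
  have w₁ := hw' _ _ n n₄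
  have w₂ := hw' _ _ n n₅
  rw [comb]
  generalize dRow (0 * x) (-(1 * x)) n = a₁, dRow (1 * x) (-(0 * x)) n = a₂,
    dRow (1 * x) (-(1 * x)) n = a₃, x * dRow' (0 * x) (-(1 * x)) n = b₁,
    x * dRow' (1 * x) (-(0 * x)) n = b₂, x * dRow' (1 * x) (-(1 * x)) n = b₃,
    wF (2 * x) (3 * x) n = c₁, wF (2 * x) (-1 * x) n = c₂ at *
  have e₁ := norm_add_le (7 * a₁ + 67 / 48 * a₂ + 11 / 24 * a₃ - 13 / 6 * b₁ - 1 / 6 * b₃ +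
    1 / 12 * b₂) (1 / 6 * (c₁ - c₂))
  have e₂ := norm_add_le (7 * a₁ + 67 / 48 * a₂ + 11 / 24 * a₃ - 13 / 6 * b₁ - 1 / 6 * b₃)
    (1 / 12 * b₂)
  have e₃ := norm_sub_le (7 * a₁ + 67 / 48 * a₂ + 11 / 24 * a₃ - 13 / 6 * b₁) (1 / 6 * b₃)
  have e₄ := norm_sub_le (7 * a₁ + 67 / 48 * a₂ + 11 / 24 * a₃) (13 / 6 * b₁)
  have e₅ := norm_add_le (7 * a₁ + 67 / 48 * a₂) (11 / 24 * a₃)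
  have e₆ := norm_add_le (7 * a₁) (67 / 48 * a₂)
  have e₇ := norm_sub_le c₁ c₂
  norm_num at e₁ e₂ e₃ e₄ e₅ e₆
  have := norm_nonneg c₁
  have := norm_nonneg b₁
  have := norm_nonneg a₁
  norm_num
  linarith

theorem differentiableOn_comb (n : ℕ) :
    DifferentiableOn ℂ (comb n) (Metric.ball 0 (1 / 400)) := by
  intro x hx
  have n₁ : Near (0 * x) (-(1 * x)) := near_neg_of_norm_lt (by simp) (by simp) hx
  have n₂ : Near (1 * x) (-(0 * x)) := near_neg_of_norm_lt (by simp) (by simp) hx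
  have n₃ : Near (1 * x) (-(1 * x)) := near_neg_of_norm_lt (by simp) (by simp) hx
  have n₄ : Near (2 * x) (3 * x) := near_of_norm_lt (by norm_num) (by norm_num) hx
  have n₅ : Near (2 * x) (-1 * x) := near_of_norm_lt (by norm_num) (by norm_num) hx
  have l (α : ℂ) : DifferentiableAt ℂ (fun x => α * x) x := by fun_prop
  have l' (α : ℂ) : DifferentiableAt ℂ (fun x => -(α * x)) x := by fun_prop
  have h₁ := differentiableAt_dRow (l 0) (l' 1) n₁ n
  have h₂ := differentiableAt_dRow (l 1) (l' 0) n₂ n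
  have h₃ := differentiableAt_dRow (l 1) (l' 1) n₃ n
  have h₄ := differentiableAt_dRow' (l 0) (l' 1) n₁ n
  have h₅ := differentiableAt_dRow' (l 1) (l' 0) n₂ n
  have h₆ := differentiableAt_dRow' (l 1) (l' 1) n₃ n
  have h₇ := differentiableAt_wF (l 2) (l 3) n₄ n
  have h₈ := differentiableAt_wF (l 2) (l (-1)) n₅ n
  refine DifferentiableAt.differentiableWithinAt ?_
  unfold comb
  fun_prop

/-- The series of `sunTerm` is the cubic Taylor coefficient of `combSum` at `0`. -/
theorem hasSum_sunTerm {a b c d : ℂ} (h : HasJet combSum a b c d) : HasSum sunTerm d := by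
  obtain ⟨u, hu, hb⟩ := exists_bound_comb
  choose α β γ hj using hasJet_comb
  obtain ⟨A, B, C, D, -, -, -, hD, hJ⟩ :=
    HasJet.tsum (by norm_num) hu differentiableOn_comb hb hj
  have hJ' : HasJet combSum A B C D := hJ.congr (by
    filter_upwards [nhdsWithin_le_nhds (Metric.ball_mem_nhds (0 : ℂ) (by norm_num : (0:ℝ) < 1 / 400))]
      with x hx using (hasSum_comb hx).tsum_eq)
  rwa [(h.unique hJ').2.2.2]

theorem hasSum_one_div_pow {k : ℕ} (hk : 1 < k) :
    HasSum (fun n : ℕ => 1 / (n : ℂ) ^ k) (riemannZeta k) := by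
  rw [zeta_nat_eq_tsum_of_gt_one hk]
  refine (Summable.of_norm ?_).hasSum
  simpa using Real.summable_one_div_nat_pow.2 hk

theorem hasSum_one_div_succ_pow {k : ℕ} (hk : 1 < k) :
    HasSum (fun n : ℕ => 1 / (n + 1 : ℂ) ^ k) (riemannZeta k) := by
  have h := (hasSum_nat_add_iff' 1).2 (hasSum_one_div_pow hk)
  simpa [show k ≠ 0 by lia] using h

theorem hasSum_one_div_odd_pow {k : ℕ} (hk : 1 < k) :
    HasSum (fun n : ℕ => 1 / (2 * n + 1 : ℂ) ^ k) ((1 - 1 / 2 ^ k) * riemannZeta k) := by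
  have h := hasSum_one_div_pow hk
  have he : HasSum (fun n : ℕ => 1 / ((2 * n : ℕ) : ℂ) ^ k) (1 / 2 ^ k * riemannZeta k) := by
    have e : (fun n : ℕ => 1 / ((2 * n : ℕ) : ℂ) ^ k) =
        fun n : ℕ => 1 / 2 ^ k * (1 / (n : ℂ) ^ k) := by
      funext n
      rw [Nat.cast_mul, mul_pow, one_div_mul_one_div, Nat.cast_ofNat]
    rw [e]
    exact h.mul_left (1 / 2 ^ k)
  have ho : Summable fun n : ℕ => 1 / ((2 * n + 1 : ℕ) : ℂ) ^ k :=
    h.summable.comp_injective (i := fun n => 2 * n + 1) fun a b hab => by simpa using hab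
  have hs := h.unique (HasSum.even_add_odd (f := fun n : ℕ => 1 / (n : ℂ) ^ k) he ho.hasSum)
  have e : (1 - 1 / 2 ^ k) * riemannZeta k = ∑' n : ℕ, 1 / ((2 * n + 1 : ℕ) : ℂ) ^ k := by
    linear_combination hs
  rw [e]
  simpa only [Nat.cast_add, Nat.cast_mul, Nat.cast_ofNat, Nat.cast_one] using ho.hasSum

theorem HasJet.tsum_of_sq_bound {F : ℕ → ℂ → ℂ} {a b c d : ℕ → ℂ} {A B C D : ℂ} {K r : ℝ}
    (hr : 0 < r) (hF : ∀ n, DifferentiableOn ℂ (F n) (Metric.ball 0 r))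
    (hK : ∀ n, ∀ x ∈ Metric.ball (0 : ℂ) r, ‖F n x‖ ≤ K * (1 / (n + 1 : ℝ) ^ 2))
    (hj : ∀ n, HasJet (F n) (a n) (b n) (c n) (d n)) (hA : HasSum a A) (hB : HasSum b B)
    (hC : HasSum c C) (hD : HasSum d D) : HasJet (fun x => ∑' n, F n x) A B C D := by
  have hu : Summable fun n : ℕ => K * (1 / (n + 1 : ℝ) ^ 2) := by
    refine Summable.mul_left K ?_
    simpa using (summable_nat_add_iff 1).2 (Real.summable_one_div_nat_pow.2 one_lt_two)
  obtain ⟨A', B', C', D', hA', hB', hC', hD', h⟩ := HasJet.tsum hr hu hF hK hj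
  exact h.of_eq (hA'.unique hA) (hB'.unique hB) (hC'.unique hC) (hD'.unique hD)

noncomputable def pairGap (t y : ℂ) (j : ℕ) : ℂ :=
  4 * (1 / (1 + 2 * y + 2 * j) * (1 / (1 + 2 * t + 2 * j))) -
    1 / (1 + t + y + j) * (1 / (1 + 2 * t + j))

noncomputable def pairGap' (t y : ℂ) (j : ℕ) : ℂ :=
  8 * (1 / (1 + 2 * y + 2 * j) * (1 / (1 + 2 * t + 2 * j)) *
      (1 / (1 + 2 * y + 2 * j) + 1 / (1 + 2 * t + 2 * j))) -
    1 / (1 + t + y + j) * (1 / (1 + 2 * t + j)) * (1 / (1 + t + y + j) + 1 / (1 + 2 * t + j))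

noncomputable def pairW (t y : ℂ) (j : ℕ) : ℂ :=
  1 / 4 * (1 / (1 + y + j) * (1 / (1 + t + y + j)))

theorem norm_one_div_le_of_re {z : ℂ} {j : ℕ} (h : (j + 1 : ℝ) / 2 ≤ z.re) :
    ‖1 / z‖ ≤ 2 * (1 / (j + 1)) := by
  have hj : (0 : ℝ) < j + 1 := by positivity
  have hz : (j + 1 : ℝ) / 2 ≤ ‖z‖ := h.trans (Complex.re_le_norm z)
  rw [norm_div, norm_one, div_le_iff₀ (by linarith)]
  calc (1 : ℝ) = 2 * (1 / (j + 1)) * ((j + 1) / 2) := by field_simp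
    _ ≤ 2 * (1 / (j + 1)) * ‖z‖ := by gcongr

theorem Near.one_div_le {t y : ℂ} (h : Near t y) (j : ℕ) {z : ℂ}
    (hz : -(1 / 100) ≤ t.re → t.re ≤ 1 / 100 → -(1 / 100) ≤ y.re → (0 : ℝ) ≤ j →
      (j + 1 : ℝ) / 2 ≤ z.re) : ‖1 / z‖ ≤ 2 * (1 / (j + 1)) :=
  norm_one_div_le_of_re (hz h.re_t.1 h.re_t.2 h.re_y j.cast_nonneg)

theorem norm_mul_le_sq {a b : ℂ} {e : ℝ} (ha : ‖a‖ ≤ 2 * e) (hb : ‖b‖ ≤ 2 * e) :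
    ‖a * b‖ ≤ 4 * e ^ 2 := by
  rw [norm_mul]
  nlinarith [norm_nonneg a, norm_nonneg b]

theorem norm_mul_mul_add_le {a b : ℂ} {e : ℝ} (he : e ≤ 1) (ha : ‖a‖ ≤ 2 * e)
    (hb : ‖b‖ ≤ 2 * e) : ‖a * b * (a + b)‖ ≤ 16 * e ^ 2 := by
  rw [norm_mul]
  have h := norm_mul_le_sq ha hb
  have h' := (norm_add_le a b).trans (add_le_add ha hb)
  nlinarith [norm_nonneg (a * b), norm_nonneg (a + b)]

theorem norm_pairGap_le {t y : ℂ} (h : Near t y) (j : ℕ) :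
    ‖pairGap t y j‖ ≤ 20 * (1 / (j + 1 : ℝ) ^ 2) := by
  have h1 := norm_mul_le_sq
    (h.one_div_le (z := 1 + 2 * y + 2 * j) j (by intros; simp; linarith))
    (h.one_div_le (z := 1 + 2 * t + 2 * j) j (by intros; simp; linarith))
  have h2 := norm_mul_le_sq
    (h.one_div_le (z := 1 + t + y + j) j (by intros; simp; linarith))
    (h.one_div_le (z := 1 + 2 * t + j) j (by intros; simp; linarith))
  refine (norm_sub_le _ _).trans ?_
  rw [norm_mul, ← one_div_pow]
  norm_num only [RCLike.norm_ofNat] at h1 h2 ⊢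
  linarith

theorem norm_pairGap'_le {t y : ℂ} (h : Near t y) (j : ℕ) :
    ‖pairGap' t y j‖ ≤ 144 * (1 / (j + 1 : ℝ) ^ 2) := by
  have he : 1 / (j + 1 : ℝ) ≤ 1 := by
    rw [div_le_one (by positivity)]
    linarith [j.cast_nonneg (α := ℝ)]
  have h1 := norm_mul_mul_add_le he
    (h.one_div_le (z := 1 + 2 * y + 2 * j) j (by intros; simp; linarith))
    (h.one_div_le (z := 1 + 2 * t + 2 * j) j (by intros; simp; linarith))
  have h2 := norm_mul_mul_add_le he
    (h.one_div_le (z := 1 + t + y + j) j (by intros; simp; linarith))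
    (h.one_div_le (z := 1 + 2 * t + j) j (by intros; simp; linarith))
  refine (norm_sub_le _ _).trans ?_
  rw [norm_mul, ← one_div_pow]
  norm_num only [RCLike.norm_ofNat] at h1 h2 ⊢
  linarith

theorem norm_pairW_le {t y : ℂ} (h : Near t y) (j : ℕ) :
    ‖pairW t y j‖ ≤ 1 * (1 / (j + 1 : ℝ) ^ 2) := by
  have h1 := norm_mul_le_sq
    (h.one_div_le (z := 1 + y + j) j (by intros; simp; linarith))
    (h.one_div_le (z := 1 + t + y + j) j (by intros; simp; linarith))
  rw [pairW, norm_mul, ← one_div_pow]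
  have : ‖(1 / 4 : ℂ)‖ = 1 / 4 := by norm_num
  rw [this]
  linarith

theorem summable_of_sq_bound {f : ℕ → ℂ} {K : ℝ}
    (h : ∀ n : ℕ, ‖f n‖ ≤ K * (1 / (n + 1 : ℝ) ^ 2)) : Summable f := by
  refine Summable.of_norm_bounded (Summable.mul_left K ?_) h
  simpa using (summable_nat_add_iff 1).2 (Real.summable_one_div_nat_pow.2 one_lt_two)

theorem differentiableAt_pairGap {f g : ℂ → ℂ} {x : ℂ} (hf : DifferentiableAt ℂ f x)
    (hg : DifferentiableAt ℂ g x) (h : Near (f x) (g x)) (n : ℕ) :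
    DifferentiableAt ℂ (fun x => pairGap (f x) (g x) n) x := by
  unfold pairGap
  fun_prop (disch := exact h.ne_zero ‹ℕ› (by intros; simp; linarith))

theorem differentiableAt_pairGap' {f g : ℂ → ℂ} {x : ℂ} (hf : DifferentiableAt ℂ f x)
    (hg : DifferentiableAt ℂ g x) (h : Near (f x) (g x)) (n : ℕ) :
    DifferentiableAt ℂ (fun x => pairGap' (f x) (g x) n) x := by
  unfold pairGap'
  fun_prop (disch := exact h.ne_zero ‹ℕ› (by intros; simp; linarith))

theorem differentiableAt_pairW {f g : ℂ → ℂ} {x : ℂ} (hf : DifferentiableAt ℂ f x)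
    (hg : DifferentiableAt ℂ g x) (h : Near (f x) (g x)) (n : ℕ) :
    DifferentiableAt ℂ (fun x => pairW (f x) (g x) n) x := by
  unfold pairW
  fun_prop (disch := exact h.ne_zero ‹ℕ› (by intros; simp; linarith))

/-- The jet of `1 / ((q + r x) (q + s x))`. -/
theorem hasJet_pair {q r s : ℂ} {f g : ℂ → ℂ} (hq : q ≠ 0) (hf : ∀ x, f x = q + r * x)
    (hg : ∀ x, g x = q + s * x) :
    HasJet (fun x => 1 / f x * (1 / g x)) (1 / q ^ 2) (-(r + s) * (1 / q ^ 3))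
      ((r ^ 2 + r * s + s ^ 2) * (1 / q ^ 4))
      (-(r ^ 3 + r ^ 2 * s + r * s ^ 2 + s ^ 3) * (1 / q ^ 5)) := by
  simp only [hf, hg]
  refine ((hasJet_inv_linear hq r).mul (hasJet_inv_linear hq s)).of_eq ?_ ?_ ?_ ?_ <;>
    · field_simp
      try ring

/-- The jet of `1 / ((q + r x) (q + s x)) * (1 / (q + r x) + 1 / (q + s x))`. -/
theorem hasJet_pair_mul_add {q r s : ℂ} {f g : ℂ → ℂ} (hq : q ≠ 0) (hf : ∀ x, f x = q + r * x)
    (hg : ∀ x, g x = q + s * x) :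
    HasJet (fun x => 1 / f x * (1 / g x) * (1 / f x + 1 / g x)) (2 * (1 / q ^ 3))
      (-3 * (r + s) * (1 / q ^ 4)) (4 * (r ^ 2 + r * s + s ^ 2) * (1 / q ^ 5))
      (-5 * (r ^ 3 + r ^ 2 * s + r * s ^ 2 + s ^ 3) * (1 / q ^ 6)) := by
  have h := hasJet_pair hq hf hg
  simp only [hf, hg] at h ⊢
  refine (h.mul ((hasJet_inv_linear hq r).add (hasJet_inv_linear hq s))).of_eq ?_ ?_ ?_ ?_ <;>
    · field_simp
      try ring

theorem hasJet_pairGap (α β : ℂ) (j : ℕ) :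
    HasJet (fun x => pairGap (α * x) (-(β * x)) j)
      (4 * (1 / (2 * j + 1) ^ 2) - 1 / (j + 1) ^ 2)
      (8 * (β - α) * (1 / (2 * j + 1) ^ 3) - (β - 3 * α) * (1 / (j + 1) ^ 3))
      (16 * (β ^ 2 - α * β + α ^ 2) * (1 / (2 * j + 1) ^ 4) -
        (7 * α ^ 2 - 4 * α * β + β ^ 2) * (1 / (j + 1) ^ 4))
      (32 * (β ^ 3 - α * β ^ 2 + α ^ 2 * β - α ^ 3) * (1 / (2 * j + 1) ^ 5) -
        (β ^ 3 - 5 * α * β ^ 2 + 11 * α ^ 2 * β - 15 * α ^ 3) * (1 / (j + 1) ^ 5)) := by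
  refine (((hasJet_pair (f := fun x => 1 + 2 * -(β * x) + 2 * j)
      (g := fun x => 1 + 2 * (α * x) + 2 * j) (q := 2 * j + 1) (r := -2 * β) (s := 2 * α)
      (two_mul_add_one_ne j) (by intro; ring) (by intro; ring)).const_mul 4).sub
    (hasJet_pair (f := fun x => 1 + α * x + -(β * x) + j) (g := fun x => 1 + 2 * (α * x) + j)
      (q := j + 1) (r := α - β) (s := 2 * α)
      (add_one_ne j) (by intro; ring) (by intro; ring))).of_eq ?_ ?_ ?_ ?_ <;> ring

theorem hasJet_pairGap' (α β : ℂ) (j : ℕ) :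
    HasJet (fun x => pairGap' (α * x) (-(β * x)) j)
      (16 * (1 / (2 * j + 1) ^ 3) - 2 * (1 / (j + 1) ^ 3))
      (48 * (β - α) * (1 / (2 * j + 1) ^ 4) - 3 * (β - 3 * α) * (1 / (j + 1) ^ 4))
      (128 * (β ^ 2 - α * β + α ^ 2) * (1 / (2 * j + 1) ^ 5) -
        4 * (7 * α ^ 2 - 4 * α * β + β ^ 2) * (1 / (j + 1) ^ 5))
      (320 * (β ^ 3 - α * β ^ 2 + α ^ 2 * β - α ^ 3) * (1 / (2 * j + 1) ^ 6) -
        5 * (β ^ 3 - 5 * α * β ^ 2 + 11 * α ^ 2 * β - 15 * α ^ 3) * (1 / (j + 1) ^ 6)) := by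
  refine (((hasJet_pair_mul_add (f := fun x => 1 + 2 * -(β * x) + 2 * j)
      (g := fun x => 1 + 2 * (α * x) + 2 * j) (q := 2 * j + 1) (r := -2 * β) (s := 2 * α)
      (two_mul_add_one_ne j) (by intro; ring) (by intro; ring)).const_mul 8).sub
    (hasJet_pair_mul_add (f := fun x => 1 + α * x + -(β * x) + j)
      (g := fun x => 1 + 2 * (α * x) + j) (q := j + 1) (r := α - β) (s := 2 * α)
      (add_one_ne j) (by intro; ring) (by intro; ring))).of_eq ?_ ?_ ?_ ?_ <;> ring

theorem hasJet_pairW (α γ : ℂ) (j : ℕ) :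
    HasJet (fun x => pairW (α * x) (γ * x) j) (1 / 4 * (1 / (j + 1) ^ 2))
      (-(α + 2 * γ) / 4 * (1 / (j + 1) ^ 3))
      ((α ^ 2 + 3 * α * γ + 3 * γ ^ 2) / 4 * (1 / (j + 1) ^ 4))
      (-(α ^ 3 + 4 * α ^ 2 * γ + 6 * α * γ ^ 2 + 4 * γ ^ 3) / 4 * (1 / (j + 1) ^ 5)) := by
  refine ((hasJet_pair (f := fun x => 1 + γ * x + j) (g := fun x => 1 + α * x + γ * x + j)
      (q := j + 1) (r := γ) (s := α + γ) (add_one_ne j) (by intro; ring)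
      (by intro; ring)).const_mul (1 / 4)).of_eq ?_ ?_ ?_ ?_ <;> ring

theorem tsum_eq_of_tendsto {f g : ℕ → ℂ} {k L : ℂ} (hf : Summable f)
    (hg : ∀ j, g j = k * f j)
    (h : Tendsto (fun N => ∑ j ∈ Finset.range N, g j) atTop (𝓝 L)) : k * ∑' j, f j = L := by
  refine tendsto_nhds_unique (hf.hasSum.mul_left k).tendsto_sum_nat ?_
  simpa only [hg] using h

theorem dSum_eq {t y : ℂ} (h : Near t y) (hy : ‖y‖ ≤ 1 / 100) :
    dSum t y = (y - t) * ∑' j, pairGap t y j := by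
  have key := tsum_eq_of_tendsto (k := t - y)
    (summable_of_sq_bound (norm_pairGap_le h)) (fun j => ?_) (tendsto_dGap_sums h.ht hy)
  · linear_combination key
  have h1 : 1 + 2 * y + 2 * j ≠ 0 := h.ne_zero j (by intros; simp; linarith)
  have h2 : 1 + 2 * t + 2 * j ≠ 0 := h.ne_zero j (by intros; simp; linarith)
  have h3 : 1 + t + y + j ≠ 0 := h.ne_zero j (by intros; simp; linarith)
  have h4 : 1 + 2 * t + j ≠ 0 := h.ne_zero j (by intros; simp; linarith)
  rw [dGap, dGap, pairGap, show 1 + 2 * (y + j) = 1 + 2 * y + 2 * (j : ℂ) by ring,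
    show 1 + 2 * (t + j) = 1 + 2 * t + 2 * (j : ℂ) by ring,
    show 1 + t + (y + j) = 1 + t + y + (j : ℂ) by ring,
    show 1 + t + (t + j) = 1 + 2 * t + (j : ℂ) by ring]
  generalize a_def : 1 + 2 * y + 2 * (j : ℂ) = a at *
  generalize b_def : 1 + 2 * t + 2 * (j : ℂ) = b at *
  generalize c_def : 1 + t + y + (j : ℂ) = c at *
  generalize d_def : 1 + 2 * t + (j : ℂ) = d at *
  field_simp
  subst a_def b_def c_def d_def
  ring

theorem dSum'_eq {t y : ℂ} (h : Near t y) (hy : ‖y‖ ≤ 1 / 100) :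
    dSum' t y + dSum t y ^ 2 / 2 = (y - t) / 2 * ∑' j, pairGap' t y j := by
  have key := tsum_eq_of_tendsto (k := (t - y) / 2)
    (summable_of_sq_bound (norm_pairGap'_le h)) (fun j => ?_) (tendsto_dGap_sq_sums h.ht hy)
  · linear_combination key
  have h1 : 1 + 2 * y + 2 * j ≠ 0 := h.ne_zero j (by intros; simp; linarith)
  have h2 : 1 + 2 * t + 2 * j ≠ 0 := h.ne_zero j (by intros; simp; linarith)
  have h3 : 1 + t + y + j ≠ 0 := h.ne_zero j (by intros; simp; linarith)
  have h4 : 1 + 2 * t + j ≠ 0 := h.ne_zero j (by intros; simp; linarith)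
  rw [pairGap', show 1 + 2 * (y + j) = 1 + 2 * y + 2 * (j : ℂ) by ring,
    show 1 + 2 * (t + j) = 1 + 2 * t + 2 * (j : ℂ) by ring,
    show 1 + t + (y + j) = 1 + t + y + (j : ℂ) by ring,
    show 1 + t + (t + j) = 1 + 2 * t + (j : ℂ) by ring]
  generalize a_def : 1 + 2 * y + 2 * (j : ℂ) = a at *
  generalize b_def : 1 + 2 * t + 2 * (j : ℂ) = b at *
  generalize c_def : 1 + t + y + (j : ℂ) = c at *
  generalize d_def : 1 + 2 * t + (j : ℂ) = d at *
  field_simp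
  subst a_def b_def c_def d_def
  ring

theorem tsum_dRow_eq {t y : ℂ} (h : Near t y) (hy : ‖y‖ ≤ 1 / 100) (hty : y - t ≠ 0) :
    ∑' n, dRow t y n = ∑' j, pairGap t y j := by
  refine mul_left_cancel₀ hty ?_
  rw [← dSum_eq h hy, dSum, ← tsum_mul_left]
  refine tsum_congr fun n => ?_
  simp only [dRow, dF, dKer, dPre]
  ring

theorem tsum_dRow'_eq {t y : ℂ} (h : Near t y) (hy : ‖y‖ ≤ 1 / 100) (hty : y - t ≠ 0) :
    ∑' n, dRow' t y n =
      1 / 2 * ∑' j, pairGap' t y j + (t - y) / 2 * (∑' j, pairGap t y j) ^ 2 := by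
  have e : dSum' t y = (y - t) * ∑' n, dRow' t y n := by
    rw [dSum', ← tsum_mul_left]
    refine tsum_congr fun n => ?_
    simp only [dRow', dF', dKer, dPre]
    ring
  have h1 := dSum'_eq h hy
  rw [e, dSum_eq h hy] at h1
  refine mul_left_cancel₀ hty ?_
  linear_combination h1

theorem wSum_sub_eq {t y y' : ℂ} (ht : ‖t‖ ≤ 1 / 100) (hy : ‖y‖ ≤ 1 / 100)
    (hy' : ‖y'‖ ≤ 1 / 100) :
    wSum t y' - wSum t y = ∑' j, pairW t y' j - ∑' j, pairW t y j := by
  have s (z : ℂ) (hz : ‖z‖ ≤ 1 / 100) : Summable (pairW t z) :=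
    summable_of_sq_bound (norm_pairW_le ⟨ht, 0, by simpa using hz⟩)
  rw [← (s y' hy').tsum_sub (s y hy)]
  refine ((tsum_eq_of_tendsto (k := 1) ((s y' hy').sub (s y hy)) (fun j => ?_)
    (tendsto_wSum_sums ht hy hy')).symm.trans (one_mul _))
  simp only [pairW, one_div, mul_inv, add_assoc]
  ring

theorem hasJet_tsum_pairGap {α β : ℂ} (hα : ‖α‖ ≤ 3) (hβ : ‖β‖ ≤ 3) :
    HasJet (fun x => ∑' j, pairGap (α * x) (-(β * x)) j) (2 * riemannZeta 2)
      ((6 * β - 4 * α) * riemannZeta 3)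
      ((15 * (β ^ 2 - α * β + α ^ 2) - (7 * α ^ 2 - 4 * α * β + β ^ 2)) * riemannZeta 4)
      ((30 * β ^ 3 - 26 * α * β ^ 2 + 20 * α ^ 2 * β - 16 * α ^ 3) * riemannZeta 5) := by
  have z2 := hasSum_one_div_succ_pow (k := 2) (by norm_num)
  have z3 := hasSum_one_div_succ_pow (k := 3) (by norm_num)
  have z4 := hasSum_one_div_succ_pow (k := 4) (by norm_num)
  have z5 := hasSum_one_div_succ_pow (k := 5) (by norm_num)
  have o2 := hasSum_one_div_odd_pow (k := 2) (by norm_num)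
  have o3 := hasSum_one_div_odd_pow (k := 3) (by norm_num)
  have o4 := hasSum_one_div_odd_pow (k := 4) (by norm_num)
  have o5 := hasSum_one_div_odd_pow (k := 5) (by norm_num)
  refine (HasJet.tsum_of_sq_bound (r := 1 / 400) (by norm_num)
    (fun n x hx => (differentiableAt_pairGap (f := fun x => α * x) (g := fun x => -(β * x))
      (by fun_prop) (by fun_prop) (near_neg_of_norm_lt hα hβ hx) n).differentiableWithinAt)
    (fun n x hx => norm_pairGap_le (near_neg_of_norm_lt hα hβ hx) n) (hasJet_pairGap α β)
    ((o2.mul_left _).sub z2) ((o3.mul_left _).sub (z3.mul_left _))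
    ((o4.mul_left _).sub (z4.mul_left _)) ((o5.mul_left _).sub (z5.mul_left _))).of_eq
    ?_ ?_ ?_ ?_ <;>
  · push_cast
    ring

theorem exists_hasJet_tsum_pairGap' {α β : ℂ} (hα : ‖α‖ ≤ 3) (hβ : ‖β‖ ≤ 3) : ∃ a b d,
    HasJet (fun x => ∑' j, pairGap' (α * x) (-(β * x)) j) a b
      ((120 * β ^ 2 - 108 * α * β + 96 * α ^ 2) * riemannZeta 5) d := by
  have z3 := hasSum_one_div_succ_pow (k := 3) (by norm_num)
  have z4 := hasSum_one_div_succ_pow (k := 4) (by norm_num)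
  have z5 := hasSum_one_div_succ_pow (k := 5) (by norm_num)
  have z6 := hasSum_one_div_succ_pow (k := 6) (by norm_num)
  have o3 := hasSum_one_div_odd_pow (k := 3) (by norm_num)
  have o4 := hasSum_one_div_odd_pow (k := 4) (by norm_num)
  have o5 := hasSum_one_div_odd_pow (k := 5) (by norm_num)
  have o6 := hasSum_one_div_odd_pow (k := 6) (by norm_num)
  refine ⟨_, _, _, (HasJet.tsum_of_sq_bound (r := 1 / 400) (by norm_num)
    (fun n x hx => (differentiableAt_pairGap' (f := fun x => α * x) (g := fun x => -(β * x))
      (by fun_prop) (by fun_prop) (near_neg_of_norm_lt hα hβ hx) n).differentiableWithinAt)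
    (fun n x hx => norm_pairGap'_le (near_neg_of_norm_lt hα hβ hx) n) (hasJet_pairGap' α β)
    ((o3.mul_left _).sub (z3.mul_left _)) ((o4.mul_left _).sub (z4.mul_left _))
    ((o5.mul_left _).sub (z5.mul_left _)) ((o6.mul_left _).sub (z6.mul_left _))).of_eq
    rfl rfl ?_ rfl⟩
  push_cast
  ring

theorem exists_hasJet_tsum_pairW {α γ : ℂ} (hα : ‖α‖ ≤ 3) (hγ : ‖γ‖ ≤ 3) : ∃ a b c,
    HasJet (fun x => ∑' j, pairW (α * x) (γ * x) j) a b c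
      (-(α ^ 3 + 4 * α ^ 2 * γ + 6 * α * γ ^ 2 + 4 * γ ^ 3) / 4 * riemannZeta 5) := by
  have z2 := hasSum_one_div_succ_pow (k := 2) (by norm_num)
  have z3 := hasSum_one_div_succ_pow (k := 3) (by norm_num)
  have z4 := hasSum_one_div_succ_pow (k := 4) (by norm_num)
  have z5 := hasSum_one_div_succ_pow (k := 5) (by norm_num)
  exact ⟨_, _, _, HasJet.tsum_of_sq_bound (r := 1 / 400) (by norm_num)
    (fun n x hx => (differentiableAt_pairW (f := fun x => α * x) (g := fun x => γ * x)
      (by fun_prop) (by fun_prop) (near_of_norm_lt hα hγ hx) n).differentiableWithinAt)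
    (fun n x hx => norm_pairW_le (near_of_norm_lt hα hγ hx) n) (hasJet_pairW α γ)
    (z2.mul_left _) (z3.mul_left _) (z4.mul_left _) (z5.mul_left _)⟩

theorem eventually_near_zero : ∀ᶠ x : ℂ in 𝓝[≠] 0, x ≠ 0 ∧ x ∈ Metric.ball (0 : ℂ) (1 / 400) := by
  filter_upwards [self_mem_nhdsWithin,
    nhdsWithin_le_nhds (Metric.ball_mem_nhds (0 : ℂ) (by norm_num : (0 : ℝ) < 1 / 400))]
    with x hx hx' using ⟨hx, hx'⟩

theorem norm_neg_mul_le {β x : ℂ} (hβ : ‖β‖ ≤ 3) (hx : x ∈ Metric.ball (0 : ℂ) (1 / 400)) :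
    ‖-(β * x)‖ ≤ 1 / 100 := by
  rw [norm_neg]
  exact (near_of_norm_lt hβ hβ hx).ht

theorem hasJet_tsum_dRow {α β : ℂ} (hα : ‖α‖ ≤ 3) (hβ : ‖β‖ ≤ 3) (hαβ : α + β ≠ 0) :
    ∃ a b c, HasJet (fun x => ∑' n, dRow (α * x) (-(β * x)) n) a b c
      ((30 * β ^ 3 - 26 * α * β ^ 2 + 20 * α ^ 2 * β - 16 * α ^ 3) * riemannZeta 5) := by
  refine ⟨_, _, _, (hasJet_tsum_pairGap hα hβ).congr ?_⟩
  filter_upwards [eventually_near_zero] with x ⟨hx, hx'⟩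
  refine (tsum_dRow_eq (near_neg_of_norm_lt hα hβ hx') (norm_neg_mul_le hβ hx') ?_).symm
  rw [show -(β * x) - α * x = -((α + β) * x) by ring]
  exact neg_ne_zero.2 (mul_ne_zero hαβ hx)

theorem hasJet_tsum_dRow' {α β : ℂ} (hα : ‖α‖ ≤ 3) (hβ : ‖β‖ ≤ 3) (hαβ : α + β ≠ 0) :
    ∃ a b d, HasJet (fun x => ∑' n, dRow' (α * x) (-(β * x)) n) a b
      ((60 * β ^ 2 - 54 * α * β + 48 * α ^ 2) * riemannZeta 5 +
        2 * (α + β) * (6 * β - 4 * α) * (riemannZeta 2 * riemannZeta 3)) d := by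
  obtain ⟨_, _, _, h'⟩ := exists_hasJet_tsum_pairGap' hα hβ
  have h := hasJet_tsum_pairGap hα hβ
  refine ⟨_, _, _, (((h'.const_mul (1 / 2)).add
    ((h.mul h).id_mul.const_mul ((α + β) / 2))).congr ?_).of_eq rfl rfl ?_ rfl⟩
  · filter_upwards [eventually_near_zero] with x ⟨hx, hx'⟩
    rw [tsum_dRow'_eq (near_neg_of_norm_lt hα hβ hx') (norm_neg_mul_le hβ hx')]
    · ring
    · rw [show -(β * x) - α * x = -((α + β) * x) by ring]
      exact neg_ne_zero.2 (mul_ne_zero hαβ hx)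
  · ring

theorem hasJet_combSum : ∃ a b c,
    HasJet combSum a b c (45 * riemannZeta 5 - 28 * (riemannZeta 2 * riemannZeta 3)) := by
  obtain ⟨_, _, _, h₁⟩ := hasJet_tsum_dRow (α := 0) (β := 1) (by simp) (by simp) (by simp)
  obtain ⟨_, _, _, h₂⟩ := hasJet_tsum_dRow (α := 1) (β := 0) (by simp) (by simp) (by simp)
  obtain ⟨_, _, _, h₃⟩ := hasJet_tsum_dRow (α := 1) (β := 1) (by simp) (by simp) (by norm_num)
  obtain ⟨_, _, _, h₄⟩ := hasJet_tsum_dRow' (α := 0) (β := 1) (by simp) (by simp) (by simp)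
  obtain ⟨_, _, _, h₅⟩ := hasJet_tsum_dRow' (α := 1) (β := 1) (by simp) (by simp) (by norm_num)
  obtain ⟨_, _, _, h₆⟩ := hasJet_tsum_dRow' (α := 1) (β := 0) (by simp) (by simp) (by simp)
  obtain ⟨_, _, _, h₇⟩ := exists_hasJet_tsum_pairW (α := 2) (γ := 3) (by norm_num) (by norm_num)
  obtain ⟨_, _, _, h₈⟩ := exists_hasJet_tsum_pairW (α := 2) (γ := -1) (by norm_num) (by norm_num)
  have hw : (fun x => ∑' j, pairW (2 * x) (3 * x) j - ∑' j, pairW (2 * x) (-1 * x) j)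
      =ᶠ[𝓝[≠] 0] fun x => wSum (2 * x) (3 * x) - wSum (2 * x) (-1 * x) := by
    filter_upwards [eventually_near_zero] with x ⟨_, hx⟩
    have key (γ : ℂ) (h : ‖γ‖ ≤ 3) : ‖γ * x‖ ≤ 1 / 100 := (near_of_norm_lt h h hx).ht
    exact (wSum_sub_eq (key 2 (by norm_num)) (key (-1) (by norm_num)) (key 3 (by norm_num))).symm
  refine ⟨_, _, _, (((((((h₁.const_mul 7).add (h₂.const_mul (67 / 48))).add
    (h₃.const_mul (11 / 24))).sub (h₄.id_mul.const_mul (13 / 6))).sub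
    (h₅.id_mul.const_mul (1 / 6))).add (h₆.id_mul.const_mul (1 / 12))).add
    (((h₇.sub h₈).congr hw).const_mul (1 / 6))).of_eq rfl rfl rfl ?_⟩
  ring

theorem hasSum_sunTerm_eq :
    HasSum sunTerm (45 * riemannZeta 5 - 28 * (riemannZeta 2 * riemannZeta 3)) := by
  obtain ⟨_, _, _, h⟩ := hasJet_combSum
  exact hasSum_sunTerm h

theorem tProd_eq_risingFactorial (n : ℕ) :
    tProd n = (((-1 / 27 : ℝ) ^ n * risingFactorial 1 n ^ 2 /
      (risingFactorial (1 / 3) n * risingFactorial (2 / 3) n) : ℝ) : ℂ) := by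
  have h : (-1 / 27 : ℝ) ^ n * risingFactorial 1 n ^ 2 /
      (risingFactorial (1 / 3) n * risingFactorial (2 / 3) n) =
      ∏ i ∈ Finset.range n, -(((i : ℝ) + 1) ^ 2 / (3 * (3 * i + 2) * (3 * i + 1))) := by
    simp only [risingFactorial]
    rw [← Finset.prod_pow, ← Finset.prod_mul_distrib, ← Finset.card_range n,
      ← Finset.prod_const, Finset.card_range, ← Finset.prod_mul_distrib,
      ← Finset.prod_div_distrib]
    refine Finset.prod_congr rfl fun i _ => ?_
    have h₁ : (1 / 3 + i : ℝ) = (3 * i + 1) / 3 := by ring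
    have h₂ : (2 / 3 + i : ℝ) = (3 * i + 2) / 3 := by ring
    have h₃ : (3 * i + 1 : ℝ) ≠ 0 := by positivity
    have h₄ : (3 * i + 2 : ℝ) ≠ 0 := by positivity
    rw [h₁, h₂]
    field_simp
    ring
  rw [h, tProd]
  push_cast
  rfl

theorem four_mul_sunTerm (n : ℕ) :
    4 * sunTerm n = ((((-1 / 27 : ℝ) ^ (n + 1) * (risingFactorial 1 (n + 1)) ^ 2 /
        (risingFactorial (1 / 3) (n + 1) * risingFactorial (2 / 3) (n + 1)) *
        (17 - 136 * ((n : ℝ) + 1) + 408 * ((n : ℝ) + 1) ^ 2 - 640 * ((n : ℝ) + 1) ^ 3 +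
          560 * ((n : ℝ) + 1) ^ 4) /
        (((n : ℝ) + 1) ^ 5 * (2 * ((n : ℝ) + 1) - 1) ^ 4) : ℝ)) : ℂ) := by
  rw [mul_div_assoc, Complex.ofReal_mul, ← tProd_eq_risingFactorial, sunTerm]
  push_cast
  have a := add_one_ne n
  have b := two_mul_add_one_ne n
  have hb : 2 * ((n : ℂ) + 1) - 1 = 2 * n + 1 := by ring
  rw [hb]
  generalize tProd (n + 1) = T
  generalize (n : ℂ) = m at *
  generalize u_def : m + 1 = u at *
  generalize v_def : 2 * m + 1 = v at *
  field_simp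
  subst u_def v_def
  ring

end SunSeries

/-- `∑_{n≥1} (−1/27)^n (1)ₙ²/((1/3)ₙ(2/3)ₙ) (17−136n+408n²−640n³+560n⁴)/(n^5(2n−1)^4)
    = 180ζ(5) − (56/3)π²ζ(3)`. -/
theorem sun_zeta5_zeta3_series :
    ∑' n : ℕ, ((((-1 / 27 : ℝ) ^ (n + 1) * (risingFactorial 1 (n + 1)) ^ 2 /
        (risingFactorial (1 / 3) (n + 1) * risingFactorial (2 / 3) (n + 1)) *
        (17 - 136 * ((n : ℝ) + 1) + 408 * ((n : ℝ) + 1) ^ 2 - 640 * ((n : ℝ) + 1) ^ 3 +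
          560 * ((n : ℝ) + 1) ^ 4) /
        (((n : ℝ) + 1) ^ 5 * (2 * ((n : ℝ) + 1) - 1) ^ 4) : ℝ)) : ℂ)
      = 180 * riemannZeta 5 - 56 / 3 * (Real.pi : ℂ) ^ 2 * riemannZeta 3 := by
  rw [← tsum_congr SunSeries.four_mul_sunTerm,
    (SunSeries.hasSum_sunTerm_eq.mul_left 4).tsum_eq, riemannZeta_two]
  ring
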